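/- Let n > 1 be an integer, F and G division rings, φ : F → Mₙ(G) a ring embedding, and a, b positive integers with a + b = n + 1 and a ∈ {1, 2, n−1, n}. Then for every a×b matrix A over G there exist division rings F′ and G′, ring embeddings ι_F : F → F′, ι_G : G → G′, and φ′ : F′ → Mₙ(G′) such that φ′(ι_F(f)) equals φ(f) with ι_G applied entrywise for every f ∈ F, and such that some f′ ∈ F′ has the property that the upper right a×b block of φ′(f′) (rows 1,…,a, columns a,…,n) equals A with ι_G applied entrywise. (That is, Conjecture A holds for a ∈ {1, 2, n−1, n}.) -/

import Mathlib

/-- A witness for Conjecture A: division ring extensions `F ⊆ F′`, `G ⊆ G′` and an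
embedding `φ′ : F′ → Mₙ(G′)` extending `φ` whose image contains a matrix whose
upper-right `a × (n+1-a)` block is the prescribed block of `A`. -/
structure ConjAWitness (n : ℕ) (F G : Type) [DivisionRing F] [DivisionRing G]
    (φ : F →+* Matrix (Fin n) (Fin n) G) (a : ℕ) (A : Matrix (Fin n) (Fin n) G) :
    Type 1 where
  F' : Type
  G' : Type
  [instF' : DivisionRing F']
  [instG' : DivisionRing G']
  ιF : F →+* F'
  ιG : G →+* G'
  injF : Function.Injective ιF
  injG : Function.Injective ιG
  φ' : F' →+* Matrix (Fin n) (Fin n) G'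
  injφ' : Function.Injective φ'
  compat : ∀ x : F, φ' (ιF x) = (φ x).map ⇑ιG
  exists_block : ∃ f' : F', ∀ i j : Fin n,
    (i : ℕ) < a → a ≤ (j : ℕ) + 1 → φ' f' i j = ιG (A i j)

/-!
Given a rank function on `Λ`-modules, formally invert the rank-preserving embeddings that factor
through no module of smaller rank. This turns a stable module of rank one into its envelope, whose
endomorphism ring is a division ring because nonzero maps between stable modules become invertible.
Hence an embedding `φ : F → Mₙ(G)` extends whenever `F` and `G` are represented by stable modules
`Q` and `P` over suitable category rings such that `Pⁿ` embeds densely into `Q`; and two nonzero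
maps between `Q` and another stable module come to differ by an element of `F'`. The categories and
modules are chosen so that this element has the prescribed entries.

For one row it is enough to adjoin an object to the category formed by `F` and `G`. Iterating this
and passing to the union, one may assume that every vector is the row of index `r` of exactly one
`φ x`. Then `φ` is the action of `F` on itself in a basis over `G`, and a second row can be
prescribed as well. Reflection in the antidiagonal exchanges rows and columns.
-/

universe u

/-- A *rank function* on `Λ`-modules: an integer-valued function that is additive on short exact
sequences within a class of *good* (in particular Noetherian) modules closed under submodules,
quotients and finite direct sums. Its values on other modules are irrelevant. -/
structure RankFunction (Λ : Type u) [Ring Λ] where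
  Good (M : Type u) [AddCommGroup M] [Module Λ M] : Prop
  rank (M : Type u) [AddCommGroup M] [Module Λ M] : ℤ
  good_of_injective {M N : Type u} [AddCommGroup M] [Module Λ M] [AddCommGroup N] [Module Λ N]
    (f : M →ₗ[Λ] N) : Function.Injective f → Good N → Good M
  good_of_surjective {M N : Type u} [AddCommGroup M] [Module Λ M] [AddCommGroup N] [Module Λ N]
    (f : M →ₗ[Λ] N) : Function.Surjective f → Good M → Good N
  good_prod {M N : Type u} [AddCommGroup M] [Module Λ M] [AddCommGroup N] [Module Λ N] :
    Good M → Good N → Good (M × N)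
  isNoetherian {M : Type u} [AddCommGroup M] [Module Λ M] : Good M → IsNoetherian Λ M
  rank_congr {M N : Type u} [AddCommGroup M] [Module Λ M] [AddCommGroup N] [Module Λ N] :
    (M ≃ₗ[Λ] N) → rank M = rank N
  rank_eq_ker_add_range {M N : Type u} [AddCommGroup M] [Module Λ M] [AddCommGroup N]
    [Module Λ N] : Good M → ∀ f : M →ₗ[Λ] N,
      rank M = rank (LinearMap.ker f) + rank (LinearMap.range f)

namespace RankFunction

variable {Λ : Type u} [Ring Λ]

instance : Add (RankFunction Λ) where
  add R S :=
    { Good M := R.Good M ∧ S.Good M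
      rank M := R.rank M + S.rank M
      good_of_injective f hf h := ⟨R.good_of_injective f hf h.1, S.good_of_injective f hf h.2⟩
      good_of_surjective f hf h := ⟨R.good_of_surjective f hf h.1, S.good_of_surjective f hf h.2⟩
      good_prod h h' := ⟨R.good_prod h.1 h'.1, S.good_prod h.2 h'.2⟩
      isNoetherian h := R.isNoetherian h.1
      rank_congr e := congrArg₂ (· + ·) (R.rank_congr e) (S.rank_congr e)
      rank_eq_ker_add_range h f := by
        rw [R.rank_eq_ker_add_range h.1 f, S.rank_eq_ker_add_range h.2 f, add_add_add_comm] }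

instance : SMul ℤ (RankFunction Λ) where
  smul c R :=
    { Good := R.Good
      rank M := c * R.rank M
      good_of_injective := R.good_of_injective
      good_of_surjective := R.good_of_surjective
      good_prod := R.good_prod
      isNoetherian := R.isNoetherian
      rank_congr e := congrArg (c * ·) (R.rank_congr e)
      rank_eq_ker_add_range h f := by rw [R.rank_eq_ker_add_range h f, mul_add] }

variable {M N M' : Type u} [AddCommGroup M] [Module Λ M] [AddCommGroup N] [Module Λ N]
  [AddCommGroup M'] [Module Λ M']

variable (R : RankFunction Λ)

/-- A good module of rank `1` all of whose nonzero submodules have positive rank. -/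
structure IsStable (M : Type u) [AddCommGroup M] [Module Λ M] : Prop where
  good : R.Good M
  rank_eq_one : R.rank M = 1
  one_le_rank (s : Submodule Λ M) : s ≠ ⊥ → 1 ≤ R.rank s

/-- An embedding into a good module of the same rank such that no intermediate module has smaller
rank. These are the maps to be inverted. -/
structure IsDense (j : M →ₗ[Λ] M') : Prop where
  good : R.Good M'
  injective : Function.Injective j
  rank_eq : R.rank M' = R.rank M
  le_rank (s : Submodule Λ M') : LinearMap.range j ≤ s → R.rank M ≤ R.rank s

/-- `U` is *local* if it sees every dense embedding as an isomorphism. -/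
def IsLocal (U : Type u) [AddCommGroup U] [Module Λ U] : Prop :=
  ∀ (M M' : Type u) [AddCommGroup M] [Module Λ M] [AddCommGroup M'] [Module Λ M']
    (j : M →ₗ[Λ] M'), R.IsDense j → ∀ f : M →ₗ[Λ] U, ∃! f' : M' →ₗ[Λ] U, f' ∘ₗ j = f

/-- The *envelope* of a stable module `I` is the directed union of all stable modules under `I`;
it is the universal local module under `I`. -/
structure IsEnvelope {I V : Type u} [AddCommGroup I] [Module Λ I] [AddCommGroup V] [Module Λ V]
    (i : I →ₗ[Λ] V) : Prop where
  stable : R.IsStable I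
  injective : Function.Injective i
  exists_stable_ge (S : Submodule Λ V) : S.FG → ∃ N : Submodule Λ V, S ≤ N ∧ R.IsStable N
  exists_hom_of_stable (N : Type u) [AddCommGroup N] [Module Λ N] : R.IsStable N →
    ∀ p : I →ₗ[Λ] N, p ≠ 0 → ∃ h : N →ₗ[Λ] V, h ∘ₗ p = i
  existsUnique_hom_of_local (U : Type u) [AddCommGroup U] [Module Λ U] : R.IsLocal U →
    ∀ g : I →ₗ[Λ] U, ∃! h : V →ₗ[Λ] U, h ∘ₗ i = g

variable {R}

theorem Good.submodule (h : R.Good M) (s : Submodule Λ M) : R.Good s :=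
  R.good_of_injective s.subtype s.subtype_injective h

theorem Good.quotient (h : R.Good M) (s : Submodule Λ M) : R.Good (M ⧸ s) :=
  R.good_of_surjective s.mkQ s.mkQ_surjective h

theorem rank_top : R.rank (⊤ : Submodule Λ M) = R.rank M := R.rank_congr Submodule.topEquiv

theorem rank_range (f : M →ₗ[Λ] N) (hf : Function.Injective f) :
    R.rank (LinearMap.range f) = R.rank M :=
  (R.rank_congr (LinearEquiv.ofInjective f hf)).symm

theorem rank_map (t : Submodule Λ M) (f : M →ₗ[Λ] N) (hf : Function.Injective f) :
    R.rank (t.map f) = R.rank t :=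
  (R.rank_congr (Submodule.equivMapOfInjective f hf t)).symm

theorem rank_bot (h : R.Good M) : R.rank (⊥ : Submodule Λ M) = 0 := by
  have h1 := R.rank_eq_ker_add_range (h.submodule ⊥) LinearMap.id
  rw [LinearMap.range_id, rank_top, LinearMap.ker_id,
    R.rank_congr (Submodule.botEquivPUnit.trans Submodule.botEquivPUnit.symm :
      (⊥ : Submodule Λ (⊥ : Submodule Λ M)) ≃ₗ[Λ] (⊥ : Submodule Λ M))] at h1
  linarith

theorem rank_eq_inf_ker_add_map (h : R.Good M) (t : Submodule Λ M) (f : M →ₗ[Λ] N) :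
    R.rank t = R.rank (t ⊓ LinearMap.ker f : Submodule Λ M) + R.rank (t.map f) := by
  rw [R.rank_eq_ker_add_range (h.submodule t) (f.domRestrict t), LinearMap.range_domRestrict,
    LinearMap.ker_domRestrict, ← Submodule.map_comap_subtype, rank_map _ _ t.subtype_injective]

theorem rank_comap_of_surjective (h : R.Good M) (f : M →ₗ[Λ] N) (hf : Function.Surjective f)
    (s : Submodule Λ N) : R.rank (s.comap f) = R.rank (LinearMap.ker f) + R.rank s := by
  rw [rank_eq_inf_ker_add_map h _ f, Submodule.map_comap_eq_of_surjective hf,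
    inf_eq_right.2 (LinearMap.ker_le_comap f)]

theorem rank_eq_add_quotient (h : R.Good M) (s : Submodule Λ M) :
    R.rank M = R.rank s + R.rank (M ⧸ s) := by
  rw [R.rank_eq_ker_add_range h s.mkQ, s.ker_mkQ, s.range_mkQ, rank_top]

theorem rank_top_prod (hM : R.Good M) (hN : R.Good N) (W : Submodule Λ N) :
    R.rank ((⊤ : Submodule Λ M).prod W) = R.rank M + R.rank W := by
  have hinf : (⊤ : Submodule Λ M).prod W ⊓ LinearMap.ker (LinearMap.snd Λ M N) =
      LinearMap.range (LinearMap.inl Λ M N) := by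
    rw [LinearMap.range_inl]
    exact inf_eq_right.2 fun x hx ↦ ⟨trivial, by
      rw [show x.2 = 0 from hx]; exact W.zero_mem⟩
  rw [rank_eq_inf_ker_add_map (R.good_prod hM hN) _ (LinearMap.snd Λ M N), hinf,
    rank_range _ LinearMap.inl_injective, Submodule.prod_map_snd]

theorem rank_prod (hM : R.Good M) (hN : R.Good N) : R.rank (M × N) = R.rank M + R.rank N := by
  rw [← rank_top, ← Submodule.prod_top, rank_top_prod hM hN, rank_top]

theorem good_pi_and_rank_pi (ι : Type) [Fintype ι] (h : R.Good M) :
    R.Good (ι → M) ∧ R.rank (ι → M) = Fintype.card ι * R.rank M := by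
  refine Fintype.induction_empty_option
    (P := fun ι _ ↦ R.Good (ι → M) ∧ R.rank (ι → M) = Fintype.card ι * R.rank M)
    (fun ι κ _ e ih ↦ ?_) ?_ (fun ι _ ih ↦ ?_) ι
  · let E := LinearEquiv.funCongrLeft Λ M e
    let := Fintype.ofEquiv κ e.symm
    refine ⟨R.good_of_injective E.toLinearMap E.injective ih.1, ?_⟩
    rw [R.rank_congr E, ih.2, Fintype.card_congr e]
  · let E : (PEmpty → M) ≃ₗ[Λ] (⊥ : Submodule Λ M) := 0
    refine ⟨R.good_of_injective E.toLinearMap E.injective (h.submodule ⊥), ?_⟩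
    rw [R.rank_congr E, rank_bot h, Fintype.card_pempty, Nat.cast_zero, zero_mul]
  · let E : (Option ι → M) ≃ₗ[Λ] M × (ι → M) := LinearEquiv.piOptionEquivProd Λ
    refine ⟨R.good_of_injective E.toLinearMap E.injective (R.good_prod h ih.1), ?_⟩
    rw [R.rank_congr E, rank_prod h ih.1, ih.2, Fintype.card_option]
    push_cast
    ring

theorem rank_sup_add_rank_inf (h : R.Good M) (s t : Submodule Λ M) :
    R.rank (s ⊔ t : Submodule Λ M) + R.rank (s ⊓ t : Submodule Λ M) = R.rank s + R.rank t := by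
  have hs := rank_eq_inf_ker_add_map h s t.mkQ
  have hst := rank_eq_inf_ker_add_map h (s ⊔ t) t.mkQ
  rw [t.ker_mkQ] at hs
  rw [t.ker_mkQ, inf_eq_right.2 le_sup_right, Submodule.map_sup, t.mkQ_map_self, sup_bot_eq] at hst
  linarith

theorem IsStable.nontrivial (h : R.IsStable M) : Nontrivial M := by
  rw [← not_subsingleton_iff_nontrivial]
  intro
  have h1 := rank_bot h.good
  rw [Subsingleton.elim (⊥ : Submodule Λ M) ⊤, rank_top, h.rank_eq_one] at h1
  exact one_ne_zero h1

theorem IsStable.congr (h : R.IsStable M) (e : M ≃ₗ[Λ] N) : R.IsStable N where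
  good := R.good_of_surjective e.toLinearMap e.surjective h.good
  rank_eq_one := by rw [← R.rank_congr e, h.rank_eq_one]
  one_le_rank s hs := by
    rw [← rank_map s e.symm.toLinearMap e.symm.injective]
    refine h.one_le_rank _ fun h0 ↦ hs ?_
    exact (Submodule.map_eq_bot_iff (e := e.symm)).1 h0

theorem IsStable.injective (hM : R.IsStable M) (hN : R.IsStable N) {f : M →ₗ[Λ] N}
    (hf : f ≠ 0) : Function.Injective f := by
  rw [← LinearMap.ker_eq_bot]
  by_contra hker
  have hk := hM.one_le_rank _ hker
  have hr := hN.one_le_rank _ (LinearMap.range_eq_bot.not.2 hf)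
  have := R.rank_eq_ker_add_range hM.good f
  have := hM.rank_eq_one
  omega

theorem IsStable.isDense (hM : R.IsStable M) (hN : R.IsStable N) {f : M →ₗ[Λ] N} (hf : f ≠ 0) :
    R.IsDense f where
  good := hN.good
  injective := hM.injective hN hf
  rank_eq := hN.rank_eq_one.trans hM.rank_eq_one.symm
  le_rank s hs := by
    rw [hM.rank_eq_one]
    refine hN.one_le_rank s fun h ↦ hf ?_
    rwa [h, le_bot_iff, LinearMap.range_eq_bot] at hs

theorem isDense_pushout (hN : R.Good N) {j : M →ₗ[Λ] M'} (hj : R.IsDense j) (f : M →ₗ[Λ] N) :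
    R.IsDense ((LinearMap.range (f.prod (-j))).mkQ ∘ₗ LinearMap.inl Λ N M') := by
  set K := LinearMap.range (f.prod (-j))
  have hgood := R.good_prod hN hj.good
  have hinj : Function.Injective (f.prod (-j)) := by
    refine (injective_iff_map_eq_zero _).2 fun x hx ↦ ?_
    exact (injective_iff_map_eq_zero j).1 hj.injective x (neg_eq_zero.1 (congrArg Prod.snd hx))
  have hrankK : R.rank K = R.rank M := rank_range _ hinj
  refine ⟨hgood.quotient K, ?_, ?_, fun s hs ↦ ?_⟩
  · refine (injective_iff_map_eq_zero _).2 fun x hx ↦ ?_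
    obtain ⟨m, hm⟩ := (Submodule.Quotient.mk_eq_zero K).1 hx
    have hm0 : m = 0 := (injective_iff_map_eq_zero j).1 hj.injective m
      (neg_eq_zero.1 (congrArg Prod.snd hm))
    simpa [hm0] using (congrArg Prod.fst hm).symm
  · have := rank_eq_add_quotient hgood K
    rw [rank_prod hN hj.good, hrankK, hj.rank_eq] at this
    linarith
  · set W := s.comap (K.mkQ ∘ₗ LinearMap.inr Λ N M') with hW
    have hle : LinearMap.range j ≤ W := by
      rintro _ ⟨m, rfl⟩
      refine Submodule.mem_comap.2 (?_ : K.mkQ (0, j m) ∈ s)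
      have : K.mkQ (0, j m) = K.mkQ (f m, 0) := (Submodule.Quotient.eq K).2 ⟨-m, by simp⟩
      exact this ▸ hs ⟨f m, rfl⟩
    have hcomap : s.comap K.mkQ = (⊤ : Submodule Λ N).prod W := by
      ext ⟨x, y⟩
      have hx : K.mkQ (x, 0) ∈ s := hs ⟨x, rfl⟩
      have hxy : K.mkQ (x, y) = K.mkQ (x, 0) + K.mkQ (0, y) := by rw [← map_add]; simp
      simp only [Submodule.mem_comap, hxy, s.add_mem_iff_right hx, Submodule.mem_prod,
        Submodule.mem_top, true_and, hW, LinearMap.comp_apply, LinearMap.inr_apply]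
    have hrank := rank_comap_of_surjective hgood K.mkQ K.mkQ_surjective s
    rw [hcomap, K.ker_mkQ, hrankK, rank_top_prod hN hj.good] at hrank
    linarith [hj.le_rank W hle]

theorem IsDense.rank_comap_le {j : M →ₗ[Λ] M'} (hj : R.IsDense j) (t : Submodule Λ M') :
    R.rank (t.comap j) ≤ R.rank t := by
  have hsup := hj.le_rank (t ⊔ LinearMap.range j) le_sup_right
  have hmod := rank_sup_add_rank_inf hj.good t (LinearMap.range j)
  rw [inf_comm, ← Submodule.map_comap_eq, rank_map _ _ hj.injective, rank_range _ hj.injective]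
    at hmod
  linarith

theorem IsStable.exists_quotient (hN : R.IsStable N) {a : N →ₗ[Λ] M} (ha : R.IsDense a) :
    ∃ t : Submodule Λ M, R.IsStable (M ⧸ t) ∧ Function.Injective (t.mkQ ∘ₗ a) := by
  have hcomap (t : Submodule Λ M) (ht : R.rank t ≤ 0) : t.comap a = ⊥ := by
    by_contra h
    linarith [hN.one_le_rank _ h, ha.rank_comap_le t]
  have hnonneg (t : Submodule Λ M) : 0 ≤ R.rank t := by
    by_contra! h
    have := ha.rank_comap_le t
    rw [hcomap t h.le, rank_bot hN.good] at this
    linarith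
  have := R.isNoetherian ha.good
  obtain ⟨t, ht : R.rank t = 0, hmax⟩ := (set_has_maximal_iff_noetherian (R := Λ) (M := M)).2
    inferInstance {t | R.rank t = 0} ⟨⊥, rank_bot ha.good⟩
  refine ⟨t, ⟨ha.good.quotient t, ?_, fun s hs ↦ ?_⟩, LinearMap.ker_eq_bot.1 ?_⟩
  · have := rank_eq_add_quotient ha.good t
    rwa [ha.rank_eq, hN.rank_eq_one, ht, zero_add, eq_comm] at this
  · have hrank := rank_comap_of_surjective ha.good t.mkQ t.mkQ_surjective s
    rw [t.ker_mkQ, ht, zero_add] at hrank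
    have hne : R.rank (s.comap t.mkQ) ≠ 0 := fun h0 ↦ hs <| by
      have heq : s.comap t.mkQ = t :=
        (eq_of_le_of_not_lt (by simpa using LinearMap.ker_le_comap t.mkQ (p := s)) (hmax _ h0)).symm
      rw [← Submodule.map_comap_eq_of_surjective t.mkQ_surjective s, heq, t.mkQ_map_self]
    have := hnonneg (s.comap t.mkQ)
    omega
  · rw [LinearMap.ker_comp, t.ker_mkQ, hcomap t ht.le]

theorem IsStable.exists_square (hN : R.IsStable N) {j : M →ₗ[Λ] M'} (hj : R.IsDense j)
    (f : M →ₗ[Λ] N) : ∃ (N' : Type u) (_ : AddCommGroup N') (_ : Module Λ N')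
      (a : N →ₗ[Λ] N') (b : M' →ₗ[Λ] N'), R.IsStable N' ∧ Function.Injective a ∧
        b ∘ₗ j = a ∘ₗ f := by
  let K := LinearMap.range (f.prod (-j))
  obtain ⟨t, ht, hinj⟩ := hN.exists_quotient (isDense_pushout hN.good hj f)
  refine ⟨_, _, _, _, t.mkQ ∘ₗ K.mkQ ∘ₗ LinearMap.inr Λ N M', ht, hinj, ?_⟩
  ext m
  exact congrArg t.mkQ ((Submodule.Quotient.eq K).2 ⟨-m, by simp⟩)

theorem IsLocal.hom_ext {U : Type u} [AddCommGroup U] [Module Λ U] (hU : R.IsLocal U)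
    {j : M →ₗ[Λ] M'} (hj : R.IsDense j) {f g : M' →ₗ[Λ] U} (h : f ∘ₗ j = g ∘ₗ j) : f = g :=
  (hU M M' j hj (g ∘ₗ j)).unique h rfl

theorem fg_range (h : R.Good M) (f : M →ₗ[Λ] N) : (LinearMap.range f).FG := by
  have := R.isNoetherian h
  rw [LinearMap.range_eq_map]
  exact (IsNoetherian.noetherian ⊤).map f

namespace IsEnvelope

variable {I V : Type u} [AddCommGroup I] [Module Λ I] [AddCommGroup V] [Module Λ V]
  {i : I →ₗ[Λ] V}

theorem hom_ext_of_dense (h : R.IsEnvelope i) {j : M →ₗ[Λ] M'} (hj : R.IsDense j)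
    {f g : M' →ₗ[Λ] V} (hfg : f ∘ₗ j = g ∘ₗ j) : f = g := by
  rw [← sub_eq_zero, ← LinearMap.range_eq_bot]
  obtain ⟨N, hN, hs⟩ := h.exists_stable_ge _ (fg_range hj.good (f - g))
  have hker : LinearMap.range j ≤ LinearMap.ker (f - g) := by
    rintro _ ⟨m, rfl⟩
    exact sub_eq_zero.2 (LinearMap.congr_fun hfg m)
  have hrank := R.rank_eq_ker_add_range hj.good (f - g)
  by_contra hne
  have hpos := hs.one_le_rank ((LinearMap.range (f - g)).comap N.subtype) fun h0 ↦ hne <| by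
    rw [← Submodule.map_bot N.subtype, ← h0, Submodule.map_comap_subtype, inf_eq_right.2 hN]
  rw [← rank_map _ _ N.subtype_injective, Submodule.map_comap_subtype, inf_eq_right.2 hN] at hpos
  linarith [hj.le_rank _ hker, hj.rank_eq]

theorem ne_zero (h : R.IsEnvelope i) : i ≠ 0 := by
  rintro rfl
  have := h.stable.nontrivial
  obtain ⟨x, hx⟩ := exists_ne (0 : I)
  exact hx (h.injective rfl)

theorem exists_factorization (h : R.IsEnvelope i) (hM : R.Good M) (f : M →ₗ[Λ] V) :
    ∃ (N : Submodule Λ V) (f' : M →ₗ[Λ] N) (i' : I →ₗ[Λ] N), R.IsStable N ∧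
      N.subtype ∘ₗ f' = f ∧ N.subtype ∘ₗ i' = i ∧ i' ≠ 0 := by
  obtain ⟨N, hN, hs⟩ := h.exists_stable_ge _ ((fg_range hM f).sup (fg_range h.stable.good i))
  refine ⟨N, f.codRestrict N fun c ↦ hN (le_sup_left (a := LinearMap.range f) ⟨c, rfl⟩),
    i.codRestrict N fun c ↦ hN (le_sup_right (a := LinearMap.range f) ⟨c, rfl⟩), hs, rfl, rfl,
    fun h0 ↦ h.ne_zero ?_⟩
  ext x
  exact congrArg Subtype.val (LinearMap.congr_fun h0 x)

theorem isLocal (h : R.IsEnvelope i) : R.IsLocal V := by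
  intro M M' _ _ _ _ j hj f
  obtain ⟨N, f', i', hs, hf', hi', hi'0⟩ :=
    h.exists_factorization (R.good_of_injective j hj.injective hj.good) f
  obtain ⟨N', _, _, a, b, hN', ha, hab⟩ := hs.exists_square hj f'
  obtain ⟨g, hg⟩ := h.exists_hom_of_stable N' hN' (a ∘ₗ i') fun h0 ↦ hi'0 <| by
    ext x
    exact congrArg Subtype.val (ha ((LinearMap.congr_fun h0 x).trans (map_zero a).symm))
  have hga : g ∘ₗ a = N.subtype :=
    h.hom_ext_of_dense (h.stable.isDense hs hi'0) (hg.trans hi'.symm)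
  have hgb : (g ∘ₗ b) ∘ₗ j = f := by
    rw [LinearMap.comp_assoc, hab, ← LinearMap.comp_assoc, hga, hf']
  exact ⟨g ∘ₗ b, hgb, fun f'' hf'' ↦ h.hom_ext_of_dense hj (hf''.trans hgb.symm)⟩

theorem hom_ext (h : R.IsEnvelope i) {U : Type u} [AddCommGroup U] [Module Λ U]
    (hU : R.IsLocal U) {f g : V →ₗ[Λ] U} (hfg : f ∘ₗ i = g ∘ₗ i) : f = g :=
  (h.existsUnique_hom_of_local U hU (g ∘ₗ i)).unique hfg rfl

theorem injective_of_isStable (h : R.IsEnvelope i) (hM : R.IsStable M) {a : M →ₗ[Λ] V}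
    (ha : a ≠ 0) : Function.Injective a := by
  obtain ⟨N, a', i', hs, rfl, -, -⟩ := h.exists_factorization hM.good a
  exact N.subtype_injective.comp (hM.injective hs fun h0 ↦ ha (by rw [h0, LinearMap.comp_zero]))

theorem exists_comp_eq (h : R.IsEnvelope i) (hM : R.IsStable M) (a b : M →ₗ[Λ] V)
    (ha : a ≠ 0) : ∃ d : Module.End Λ V, d ∘ₗ a = b := by
  obtain ⟨N, a', i', hs, rfl, hi', hi'0⟩ := h.exists_factorization hM.good a
  have ha' : a' ≠ 0 := fun h0 ↦ ha (by rw [h0, LinearMap.comp_zero])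
  obtain ⟨b', hb', -⟩ := h.isLocal _ _ a' (hM.isDense hs ha') b
  obtain ⟨d, hd, -⟩ := h.existsUnique_hom_of_local V h.isLocal (b' ∘ₗ i')
  have hdb : d ∘ₗ N.subtype = b' :=
    h.isLocal.hom_ext (h.stable.isDense hs hi'0) (by rw [LinearMap.comp_assoc, hi', hd])
  exact ⟨d, by rw [← LinearMap.comp_assoc, hdb, hb']⟩

theorem nontrivial_end (h : R.IsEnvelope i) : Nontrivial (Module.End Λ V) :=
  ⟨1, 0, fun h0 ↦ h.ne_zero (by ext x; exact LinearMap.congr_fun h0 (i x))⟩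

theorem isUnit_or_eq_zero (h : R.IsEnvelope i) (θ : Module.End Λ V) : IsUnit θ ∨ θ = 0 := by
  have := h.nontrivial_end
  have hleft (θ : Module.End Λ V) (hθ : θ ≠ 0) : ∃ d, d * θ = 1 := by
    obtain ⟨d, hd⟩ := h.exists_comp_eq h.stable (θ ∘ₗ i) i fun h0 ↦
      hθ (h.hom_ext h.isLocal (by rw [h0, LinearMap.zero_comp]))
    exact ⟨d, h.hom_ext h.isLocal hd⟩
  refine or_iff_not_imp_right.2 fun hθ ↦ ?_
  obtain ⟨d, hd⟩ := hleft θ hθ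
  obtain ⟨e, he⟩ := hleft d (by rintro rfl; simp at hd)
  have heθ : e = θ := by rw [← mul_one e, ← hd, ← mul_assoc, he, one_mul]
  exact ⟨⟨θ, d, heθ ▸ he, hd⟩, rfl⟩

end IsEnvelope

variable (R) in
/-- A stable module under `I`, presented as a quotient of a free module `Λᵏ` so that these form a
set. The envelope of `I` is their direct limit. -/
structure StableUnder (I : Type u) [AddCommGroup I] [Module Λ I] where
  k : ℕ
  ker : Submodule Λ (Fin k → Λ)
  isStable : R.IsStable ((Fin k → Λ) ⧸ ker)
  hom : I →ₗ[Λ] (Fin k → Λ) ⧸ ker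
  hom_ne_zero : hom ≠ 0

namespace StableUnder

variable {I : Type u} [AddCommGroup I] [Module Λ I]

/-- The underlying module of a stable module under `I`. -/
abbrev carrier (X : StableUnder R I) : Type u := (Fin X.k → Λ) ⧸ X.ker

theorem exists_equiv (hN : R.IsStable N) {p : I →ₗ[Λ] N} (hp : p ≠ 0) :
    ∃ (X : StableUnder R I) (e : X.carrier ≃ₗ[Λ] N), e.toLinearMap ∘ₗ X.hom = p := by
  have := R.isNoetherian hN.good
  obtain ⟨k, f, hf⟩ := Module.Finite.exists_fin' Λ N
  let e := f.quotKerEquivOfSurjective hf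
  refine ⟨⟨k, LinearMap.ker f, hN.congr e.symm, e.symm.toLinearMap ∘ₗ p, fun h0 ↦ hp ?_⟩, e, ?_⟩
  · ext x
    simpa using LinearMap.congr_fun h0 x
  · ext x
    simp

instance : Preorder (StableUnder R I) where
  le X Y := ∃ f : X.carrier →ₗ[Λ] Y.carrier, f ∘ₗ X.hom = Y.hom
  le_refl X := ⟨LinearMap.id, LinearMap.id_comp _⟩
  le_trans := by
    rintro X Y Z ⟨f, hf⟩ ⟨g, hg⟩
    exact ⟨g ∘ₗ f, by rw [LinearMap.comp_assoc, hf, hg]⟩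

/-- The transition map between two stable modules under `I`. -/
noncomputable def transition (X Y : StableUnder R I) (h : X ≤ Y) : X.carrier →ₗ[Λ] Y.carrier :=
  Classical.choose h

theorem transition_comp_hom {X Y : StableUnder R I} (h : X ≤ Y) :
    transition X Y h ∘ₗ X.hom = Y.hom := Classical.choose_spec h

theorem transition_injective {X Y : StableUnder R I} (h : X ≤ Y) :
    Function.Injective (transition X Y h) :=
  X.isStable.injective Y.isStable fun h0 ↦ Y.hom_ne_zero (by
    rw [← transition_comp_hom h, h0, LinearMap.zero_comp])

theorem isDense_hom (hI : R.IsStable I) (X : StableUnder R I) : R.IsDense X.hom :=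
  hI.isDense X.isStable X.hom_ne_zero

theorem hom_ext {X Y : StableUnder R I} {f g : X.carrier →ₗ[Λ] Y.carrier}
    (h : f ∘ₗ X.hom = g ∘ₗ X.hom) : f = g := by
  by_contra hne
  have hinj := X.isStable.injective Y.isStable (sub_ne_zero.2 hne)
  refine X.hom_ne_zero (LinearMap.ext fun x ↦ hinj ?_)
  rw [LinearMap.zero_apply, map_zero]
  exact sub_eq_zero.2 (LinearMap.congr_fun h x)

instance : DirectedSystem (fun X : StableUnder R I ↦ X.carrier) (transition · · ·) where
  map_self X := LinearMap.congr_fun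
    (hom_ext (g := LinearMap.id) (by rw [transition_comp_hom, LinearMap.id_comp]))
  map_map Z Y X hXY hYZ := LinearMap.congr_fun (f := transition Y Z hYZ ∘ₗ transition X Y hXY)
    (hom_ext (by simp only [LinearMap.comp_assoc, transition_comp_hom]))

theorem isDirectedOrder (hI : R.IsStable I) : IsDirectedOrder (StableUnder R I) where
  directed X Y := by
    obtain ⟨N, _, _, a, b, hN, ha, hab⟩ := Y.isStable.exists_square (X.isDense_hom hI) Y.hom
    obtain ⟨Z, e, he⟩ := exists_equiv hN (p := a ∘ₗ Y.hom) fun h0 ↦ Y.hom_ne_zero <| by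
      ext x
      exact ha ((LinearMap.congr_fun h0 x).trans (map_zero a).symm)
    have hZ : Z.hom = e.symm.toLinearMap ∘ₗ a ∘ₗ Y.hom := by
      rw [← he, ← LinearMap.comp_assoc, e.symm_comp, LinearMap.id_comp]
    exact ⟨Z, ⟨e.symm.toLinearMap ∘ₗ b, by rw [hZ, LinearMap.comp_assoc, hab]⟩,
      ⟨e.symm.toLinearMap ∘ₗ a, by rw [hZ, LinearMap.comp_assoc]⟩⟩

variable [Nonempty (StableUnder R I)] [IsDirectedOrder (StableUnder R I)]

variable (R I) in
/-- The direct limit of all stable modules under `I`. -/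
def Limit : Type u :=
  DirectLimit (fun X : StableUnder R I ↦ X.carrier) (transition · · ·)

noncomputable instance : AddCommGroup (Limit R I) :=
  inferInstanceAs (AddCommGroup (DirectLimit _ (transition · · ·)))

noncomputable instance : Module Λ (Limit R I) :=
  inferInstanceAs (Module Λ (DirectLimit _ (transition · · ·)))

/-- The canonical map of a stable module under `I` to the direct limit. -/
noncomputable def toLimit (X : StableUnder R I) : X.carrier →ₗ[Λ] Limit R I :=
  DirectLimit.Module.of Λ _ _ (transition · · ·) X

theorem toLimit_comp_transition {X Y : StableUnder R I} (h : X ≤ Y) :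
    Y.toLimit ∘ₗ transition X Y h = X.toLimit :=
  LinearMap.ext fun _ ↦ DirectLimit.Module.of_f

theorem toLimit_injective (X : StableUnder R I) : Function.Injective X.toLimit :=
  DirectLimit.mk_injective _ (fun _ _ ↦ transition_injective) X

theorem toLimit_comp_hom (X Y : StableUnder R I) :
    X.toLimit ∘ₗ X.hom = Y.toLimit ∘ₗ Y.hom := by
  obtain ⟨Z, hX, hY⟩ := exists_ge_ge X Y
  rw [← toLimit_comp_transition hX, ← toLimit_comp_transition hY, LinearMap.comp_assoc,
    LinearMap.comp_assoc, transition_comp_hom, transition_comp_hom]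

theorem exists_stable_ge_of_fg {S : Submodule Λ (Limit R I)} (hS : S.FG) :
    ∃ N : Submodule Λ (Limit R I), S ≤ N ∧ R.IsStable N := by
  classical
  obtain ⟨s, rfl⟩ := hS
  have hrange (v : Limit R I) : ∃ X : StableUnder R I, v ∈ LinearMap.range X.toLimit := by
    induction v using DirectLimit.induction with | _ X x
    exact ⟨X, x, rfl⟩
  choose X hX using hrange
  obtain ⟨Z, hZ⟩ := (s.image X).exists_le
  refine ⟨LinearMap.range Z.toLimit, Submodule.span_le.2 fun v hv ↦ ?_,
    Z.isStable.congr (LinearEquiv.ofInjective _ Z.toLimit_injective)⟩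
  obtain ⟨x, hx⟩ := hX v
  rw [← hx, ← toLimit_comp_transition (hZ _ (Finset.mem_image_of_mem X hv))]
  exact ⟨_, rfl⟩

theorem existsUnique_limit_hom (hI : R.IsStable I) (X₀ : StableUnder R I) {U : Type u}
    [AddCommGroup U] [Module Λ U] (hU : R.IsLocal U) (g : I →ₗ[Λ] U) :
    ∃! h : Limit R I →ₗ[Λ] U, h ∘ₗ X₀.toLimit ∘ₗ X₀.hom = g := by
  choose gX hgX using fun X : StableUnder R I ↦ (hU _ _ X.hom (X.isDense_hom hI) g).exists
  refine ⟨DirectLimit.Module.lift Λ _ _ (transition · · ·) gX fun X Y h x ↦ ?_,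
    hgX X₀, fun h hh ↦ DirectLimit.Module.hom_ext fun X ↦ hU.hom_ext (X.isDense_hom hI) ?_⟩
  · refine LinearMap.congr_fun (f := gX Y ∘ₗ X.transition Y h) ?_ x
    exact hU.hom_ext (X.isDense_hom hI)
      (by rw [LinearMap.comp_assoc, transition_comp_hom, hgX, hgX])
  · change (h ∘ₗ X.toLimit) ∘ₗ X.hom = gX X ∘ₗ X.hom
    rw [LinearMap.comp_assoc, toLimit_comp_hom X X₀, hh, hgX]

theorem isEnvelope_toLimit_comp_hom (hI : R.IsStable I) (X₀ : StableUnder R I) :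
    R.IsEnvelope (X₀.toLimit ∘ₗ X₀.hom) where
  stable := hI
  injective := X₀.toLimit_injective.comp (X₀.isDense_hom hI).injective
  exists_stable_ge _ hS := exists_stable_ge_of_fg hS
  exists_hom_of_stable N _ _ hN p hp := by
    obtain ⟨X, e, rfl⟩ := exists_equiv hN hp
    refine ⟨X.toLimit ∘ₗ e.symm.toLinearMap, ?_⟩
    rw [toLimit_comp_hom X₀ X, LinearMap.comp_assoc, ← LinearMap.comp_assoc _ e.toLinearMap,
      e.symm_comp, LinearMap.id_comp]
  existsUnique_hom_of_local U _ _ hU g := existsUnique_limit_hom hI X₀ hU g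

end StableUnder

theorem exists_isEnvelope {I : Type u} [AddCommGroup I] [Module Λ I] (hI : R.IsStable I) :
    ∃ (V : Type u) (_ : AddCommGroup V) (_ : Module Λ V) (i : I →ₗ[Λ] V), R.IsEnvelope i := by
  have := hI.nontrivial
  obtain ⟨x, hx⟩ := exists_ne (0 : I)
  obtain ⟨X₀, -⟩ := StableUnder.exists_equiv hI (p := LinearMap.id) fun h0 ↦
    hx (LinearMap.congr_fun h0 x)
  have : Nonempty (StableUnder R I) := ⟨X₀⟩
  have := StableUnder.isDirectedOrder hI
  exact ⟨_, _, _, _, StableUnder.isEnvelope_toLimit_comp_hom hI X₀⟩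

theorem isStable_submodule {N : Submodule Λ M} (hN : R.Good N) (h1 : R.rank N = 1)
    (h : ∀ W ≤ N, W ≠ ⊥ → 1 ≤ R.rank W) : R.IsStable N where
  good := hN
  rank_eq_one := h1
  one_le_rank W hW := by
    rw [← R.rank_map W N.subtype N.subtype_injective]
    refine h _ (N.map_subtype_le W) fun hbot ↦ hW ?_
    exact Submodule.map_injective_of_injective N.subtype_injective
      (hbot.trans (Submodule.map_bot _).symm)

end RankFunction

theorem finrank_map_add_finrank_inf_ker {K V V' : Type*} [DivisionRing K] [AddCommGroup V]
    [Module K V] [AddCommGroup V'] [Module K V'] [Module.Finite K V] (T : V →ₗ[K] V')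
    (X : Submodule K V) :
    Module.finrank K (X.map T) + Module.finrank K ↥(X ⊓ LinearMap.ker T) = Module.finrank K X := by
  have hker : (X ⊓ LinearMap.ker T).submoduleOf X = (LinearMap.ker T).comap X.subtype :=
    Submodule.ext fun m ↦ and_iff_right m.2
  rw [← (T.domRestrict X).finrank_range_add_finrank_ker, LinearMap.range_domRestrict,
    LinearMap.ker_domRestrict, ← hker, (Submodule.submoduleOfEquivOfLe inf_le_left).finrank_eq]

theorem finrank_inf_comap_add_finrank_map_sup {K V V' : Type*} [DivisionRing K] [AddCommGroup V]
    [Module K V] [AddCommGroup V'] [Module K V'] [Module.Finite K V] [Module.Finite K V']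
    (T : V →ₗ[K] V') (X : Submodule K V) (Q : Submodule K V') :
    Module.finrank K ↥(X ⊓ Q.comap T) + Module.finrank K ↥(X.map T ⊔ Q) =
      Module.finrank K X + Module.finrank K Q := by
  have hX := finrank_map_add_finrank_inf_ker (Q.mkQ ∘ₗ T) X
  have hsup := finrank_map_add_finrank_inf_ker Q.mkQ (X.map T ⊔ Q)
  rw [LinearMap.ker_comp, Submodule.ker_mkQ, Submodule.map_comp] at hX
  rw [Submodule.map_sup, Submodule.ker_mkQ, inf_eq_right.2 le_sup_right, Submodule.mkQ_map_self,
    sup_bot_eq] at hsup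
  omega

section Corner

variable {Λ : Type u} [Ring Λ] {K : Type*} [Ring K] (s : K →ₙ+* Λ)
  (M : Type*) [AddCommGroup M] [Module Λ M] {N : Type*} [AddCommGroup N] [Module Λ N]

theorem map_one_mul_map_one {S : Type*} [Ring S] (s : K →ₙ+* S) : s 1 * s 1 = s 1 := by
  rw [← map_mul, one_mul]

/-- The part `s(1)M` of a module `M` cut out by the idempotent `s(1)`, for a not necessarily unital
ring homomorphism `s : K → Λ`. It is a `K`-module. -/
def corner : AddSubgroup M where
  carrier := {m | s 1 • m = m}
  add_mem' hx hy := (smul_add _ _ _).trans (congrArg₂ _ hx hy)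
  zero_mem' := smul_zero _
  neg_mem' hx := (smul_neg _ _).trans (congrArg _ hx)

variable {s M}

theorem mem_corner {m : M} : m ∈ corner s M ↔ s 1 • m = m := Iff.rfl

theorem smul_mem_corner (k : K) (m : M) : s k • m ∈ corner s M := by
  rw [mem_corner, ← mul_smul, ← map_mul, one_mul]

instance : Module K (corner s M) where
  smul k m := ⟨s k • m.1, smul_mem_corner k m.1⟩
  one_smul m := Subtype.ext m.2
  mul_smul k l m := Subtype.ext <| by
    change s (k * l) • m.1 = s k • s l • m.1
    rw [map_mul, mul_smul]
  smul_zero k := Subtype.ext (smul_zero _)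
  smul_add k m m' := Subtype.ext (smul_add _ _ _)
  add_smul k l m := Subtype.ext <| by
    change s (k + l) • m.1 = s k • m.1 + s l • m.1
    rw [map_add, add_smul]
  zero_smul m := Subtype.ext <| by
    change s 0 • m.1 = 0
    rw [map_zero, zero_smul]

namespace corner

variable (s) in
/-- The action of a module homomorphism on corners. -/
def map (f : M →ₗ[Λ] N) : corner s M →ₗ[K] corner s N where
  toFun m := ⟨f m.1, by rw [mem_corner, ← map_smul, mem_corner.1 m.2]⟩
  map_add' m m' := Subtype.ext (map_add f _ _)
  map_smul' k m := Subtype.ext (map_smul f _ _)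

theorem map_injective {f : M →ₗ[Λ] N} (hf : Function.Injective f) :
    Function.Injective (map s f) :=
  fun _ _ h ↦ Subtype.ext (hf (congrArg Subtype.val h))

theorem map_surjective {f : M →ₗ[Λ] N} (hf : Function.Surjective f) :
    Function.Surjective (map s f) := by
  intro n
  obtain ⟨m, hm⟩ := hf n.1
  refine ⟨⟨s 1 • m, smul_mem_corner 1 m⟩, Subtype.ext ?_⟩
  exact (map_smul f _ _).trans (hm ▸ n.2)

/-- Isomorphic modules have isomorphic corners. -/
noncomputable def congr (e : M ≃ₗ[Λ] N) : corner s M ≃ₗ[K] corner s N :=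
  LinearEquiv.ofBijective (map s e.toLinearMap)
    ⟨map_injective e.injective, map_surjective e.surjective⟩

theorem finrank_eq_ker_add_range {K : Type*} [DivisionRing K] {s : K →ₙ+* Λ}
    [Module.Finite K (corner s M)] (f : M →ₗ[Λ] N) :
    Module.finrank K (corner s M) = Module.finrank K (corner s (LinearMap.ker f)) +
      Module.finrank K (corner s (LinearMap.range f)) := by
  let g := map s f.rangeRestrict
  have hker : LinearMap.ker g = LinearMap.range (map s (LinearMap.ker f).subtype) := by
    ext m
    refine ⟨fun h ↦ ?_, ?_⟩
    · have hm : f m.1 = 0 := congrArg (fun n ↦ n.1.1) (LinearMap.mem_ker.1 h)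
      exact ⟨⟨⟨m.1, hm⟩, Subtype.ext m.2⟩, rfl⟩
    · rintro ⟨m, rfl⟩
      exact Subtype.ext (Subtype.ext m.1.2)
  rw [← LinearMap.finrank_range_add_finrank_ker g, hker,
    LinearMap.finrank_range_of_inj (map_injective (Submodule.subtype_injective _)),
    LinearMap.range_eq_top.2 (map_surjective f.surjective_rangeRestrict), finrank_top, add_comm]

/-- Corners commute with products. -/
def prodEquiv : corner s (M × N) ≃ₗ[K] corner s M × corner s N where
  toFun m := (map s (.fst Λ M N) m, map s (.snd Λ M N) m)
  invFun m := ⟨(m.1.1, m.2.1), Prod.ext m.1.2 m.2.2⟩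
  map_add' _ _ := rfl
  map_smul' _ _ := rfl

/-- Multiplication by an intertwiner of `s` and `t`. -/
def smulHom {t : K →ₙ+* Λ} (u : Λ) (hu : ∀ k, u * s k = t k * u) :
    corner s M →ₗ[K] corner t M where
  toFun m := ⟨u • m.1, by rw [mem_corner, ← mul_smul, ← hu, mul_smul, m.2]⟩
  map_add' m m' := Subtype.ext (smul_add _ _ _)
  map_smul' k m := Subtype.ext <| by
    change u • s k • m.1 = t k • u • m.1
    rw [← mul_smul, hu, mul_smul]

/-- Isomorphic idempotents have isomorphic corners. -/
def equivOfIntertwine {t : K →ₙ+* Λ} (u v : Λ) (hu : ∀ k, u * s k = t k * u)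
    (hv : ∀ k, v * t k = s k * v) (hvu : v * u * s 1 = s 1) (huv : u * v * t 1 = t 1) :
    corner s M ≃ₗ[K] corner t M :=
  .ofLinearMap (smulHom u hu) (smulHom v hv)
    (LinearMap.ext fun m ↦ Subtype.ext <| by
      change u • v • m.1 = m.1
      rw [← m.2, ← mul_smul, ← mul_smul, huv])
    (LinearMap.ext fun m ↦ Subtype.ext <| by
      change v • u • m.1 = m.1
      rw [← m.2, ← mul_smul, ← mul_smul, hvu])

end corner

theorem exists_fg_le_of_finite_corner {K : Type*} [DivisionRing K] {s : K →ₙ+* Λ}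
    [Module.Finite K (corner s M)] (W : Submodule Λ M) :
    ∃ W' ≤ W, W'.FG ∧ ∀ m ∈ W, s 1 • m ∈ W' := by
  have : Module.Finite K (corner s W) :=
    .of_injective _ (corner.map_injective (s := s) W.subtype_injective)
  obtain ⟨T, hT⟩ := Module.finite_def.1 this
  classical
  refine ⟨Submodule.span Λ (T.image fun t ↦ t.1.1), Submodule.span_le.2 ?_, ⟨_, rfl⟩, ?_⟩
  · rintro _ ht
    obtain ⟨t, -, rfl⟩ := Finset.mem_image.1 ht
    exact t.1.2
  · intro m hm
    have hspan (x : corner s W) : x.1.1 ∈ Submodule.span Λ (T.image fun t ↦ t.1.1 : Set M) := by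
      have hx : x ∈ Submodule.span K T := hT ▸ Submodule.mem_top
      induction hx using Submodule.span_induction with
      | mem x hx => exact Submodule.subset_span (Finset.mem_image_of_mem _ hx)
      | zero => exact Submodule.zero_mem _
      | add x y _ _ hx hy => exact Submodule.add_mem _ hx hy
      | smul k x _ hx => exact Submodule.smul_mem _ _ hx
    exact hspan ⟨s 1 • ⟨m, hm⟩, smul_mem_corner 1 _⟩

theorem isNoetherian_of_span_eq_top {E : Set Λ} (hE : E.Finite) (hspan : TwoSidedIdeal.span E = ⊤)
    (h : ∀ ε ∈ E, ∀ W : Submodule Λ M, ∃ W' ≤ W, W'.FG ∧ ∀ m ∈ W, ε • m ∈ W') :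
    IsNoetherian Λ M := by
  refine isNoetherian_def.2 fun W ↦ ?_
  choose! W' hle hfg hmem using h
  let X := ⨆ ε ∈ E, W' ε W
  have hX : X = W := by
    refine le_antisymm (iSup₂_le fun ε hε ↦ hle ε hε W) fun m hm ↦ ?_
    have key (l : Λ) (hl : l ∈ TwoSidedIdeal.span E) (m : M) (hm : m ∈ W) : l • m ∈ X := by
      induction hl using TwoSidedIdeal.span_induction generalizing m with
      | mem ε hε => exact le_iSup₂ (f := fun ε _ ↦ W' ε W) ε hε (hmem ε hε W m hm)
      | zero => rw [zero_smul]; exact X.zero_mem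
      | add x y _ _ hx hy => rw [add_smul]; exact X.add_mem (hx m hm) (hy m hm)
      | neg x _ hx => rw [neg_smul]; exact X.neg_mem (hx m hm)
      | left_absorb a x _ hx => rw [mul_smul]; exact X.smul_mem a (hx m hm)
      | right_absorb b x _ hx => rw [mul_smul]; exact hx _ (W.smul_mem b hm)
    rw [← one_smul Λ m]
    exact key 1 (hspan ▸ trivial) m hm
  rw [← hX]
  obtain ⟨T, rfl⟩ := hE.exists_finset_coe
  exact Submodule.fg_biSup T _ fun ε hε ↦ hfg ε hε W

theorem subsingleton_of_span_eq_top {E : Set Λ} (hspan : TwoSidedIdeal.span E = ⊤)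
    (h : ∀ ε ∈ E, ∀ m : M, ε • m = 0) : Subsingleton M := by
  have key (l : Λ) (hl : l ∈ TwoSidedIdeal.span E) (m : M) : l • m = 0 := by
    induction hl using TwoSidedIdeal.span_induction generalizing m with
    | mem ε hε => exact h ε hε m
    | zero => exact zero_smul _ _
    | add x y _ _ hx hy => rw [add_smul, hx, hy, add_zero]
    | neg x _ hx => rw [neg_smul, hx, neg_zero]
    | left_absorb a x _ hx => rw [mul_smul, hx, smul_zero]
    | right_absorb b x _ hx => rw [mul_smul, hx]
  exact subsingleton_of_forall_eq 0 fun m ↦ one_smul Λ m ▸ key 1 (hspan ▸ trivial) m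

theorem smul_eq_zero_of_finrank_corner_eq_zero {K : Type*} [DivisionRing K] {s : K →ₙ+* Λ}
    [Module.Finite K (corner s M)] (h : Module.finrank K (corner s M) = 0) (m : M) :
    s 1 • m = 0 :=
  have := Module.finrank_zero_iff.1 h
  congrArg Subtype.val (Subsingleton.elim (⟨_, smul_mem_corner 1 m⟩ : corner s M) 0)

theorem eq_top_of_finrank_corner_span_eq_one {K : Type*} [DivisionRing K] {s : K →ₙ+* Λ}
    (h1 : Module.finrank K (corner s (Submodule.span Λ {s 1})) = 1)
    {W : Submodule Λ (Submodule.span Λ {s 1})} (hW : Module.finrank K (corner s W) ≠ 0) :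
    W = ⊤ := by
  have : Module.Finite K (corner s (Submodule.span Λ {s 1})) :=
    Module.finite_of_finrank_pos (h1 ▸ one_pos)
  have hinj := corner.map_injective (s := s) W.subtype_injective
  have hsurj : LinearMap.range (corner.map s W.subtype) = ⊤ := by
    refine Submodule.eq_top_of_finrank_eq (le_antisymm (Submodule.finrank_le _) ?_)
    rw [h1, LinearMap.finrank_range_of_inj hinj]
    exact Nat.one_le_iff_ne_zero.2 hW
  let e : Submodule.span Λ {s 1} := ⟨s 1, Submodule.mem_span_singleton_self _⟩
  have he : e ∈ corner s (Submodule.span Λ {s 1}) :=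
    Subtype.ext (map_one_mul_map_one s)
  obtain ⟨w, hw⟩ := LinearMap.range_eq_top.1 hsurj ⟨e, he⟩
  have hwe : w.1.1 = e := congrArg Subtype.val hw
  have heW : e ∈ W := hwe ▸ w.1.2
  refine eq_top_iff.2 fun x _ ↦ ?_
  obtain ⟨l, hl⟩ := Submodule.mem_span_singleton.1 x.2
  exact (Subtype.ext hl : l • e = x) ▸ W.smul_mem l heW

/-- The dimension of the corner cut out by `s`, as a rank function on Noetherian modules. -/
noncomputable def RankFunction.dim {K : Type*} [DivisionRing K] (s : K →ₙ+* Λ) :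
    RankFunction Λ where
  Good M _ _ := IsNoetherian Λ M ∧ Module.Finite K (corner s M)
  rank M _ _ := Module.finrank K (corner s M)
  good_of_injective f hf h := by
    obtain ⟨_, _⟩ := h
    exact ⟨isNoetherian_of_injective f hf, .of_injective _ (corner.map_injective (s := s) hf)⟩
  good_of_surjective f hf h := by
    obtain ⟨_, _⟩ := h
    exact ⟨isNoetherian_of_surjective f (LinearMap.range_eq_top.2 hf),
      .of_surjective _ (corner.map_surjective (s := s) hf)⟩
  good_prod h h' := by
    obtain ⟨⟨_, _⟩, _, _⟩ := And.intro h h'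
    exact ⟨inferInstance, .equiv corner.prodEquiv.symm⟩
  isNoetherian h := h.1
  rank_congr e := congrArg _ (corner.congr e).finrank_eq
  rank_eq_ker_add_range h f := by
    have := h.2
    exact_mod_cast corner.finrank_eq_ker_add_range f

end Corner

namespace corner

variable {Λ : Type u} [Ring Λ] {M N : Type u} [AddCommGroup M] [Module Λ M] [AddCommGroup N]
  [Module Λ N] {K : Type*} [DivisionRing K] {s : K →ₙ+* Λ}

variable (s) in
/-- The projection of a module onto a corner. -/
def proj : M →+ corner s M where
  toFun m := ⟨s 1 • m, smul_mem_corner 1 m⟩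
  map_zero' := Subtype.ext (smul_zero _)
  map_add' _ _ := Subtype.ext (smul_add _ _ _)

theorem proj_coe (m : corner s M) : proj s m.1 = m := Subtype.ext m.2

/-- The largest submodule whose corner is contained in `X`. -/
def core (X : Submodule K (corner s M)) : Submodule Λ M where
  carrier := {m | ∀ l : Λ, proj s (l • m) ∈ X}
  add_mem' hm hm' l := by
    rw [smul_add, map_add]
    exact X.add_mem (hm l) (hm' l)
  zero_mem' l := by
    rw [smul_zero, map_zero]
    exact X.zero_mem
  smul_mem' l' m hm l := by
    rw [smul_smul]
    exact hm _

theorem mem_of_mem_core {X : Submodule K (corner s M)} {m : corner s M} (hm : m.1 ∈ core X) :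
    m ∈ X := by
  have := hm 1
  rwa [one_smul, proj_coe] at this

theorem mem_range_map_subtype {W : Submodule Λ M} {m : corner s M} :
    m ∈ LinearMap.range (corner.map (s := s) W.subtype) ↔ m.1 ∈ W := by
  refine ⟨?_, fun hm ↦ ⟨⟨⟨m.1, hm⟩, Subtype.ext m.2⟩, rfl⟩⟩
  rintro ⟨m, rfl⟩
  exact m.1.2

theorem finrank_le_of_le_core {X : Submodule K (corner s M)} {W : Submodule Λ M} (hW : W ≤ core X)
    [Module.Finite K (corner s M)] : Module.finrank K (corner s W) ≤ Module.finrank K X := by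
  rw [← LinearMap.finrank_range_of_inj (corner.map_injective W.subtype_injective)]
  refine Submodule.finrank_mono fun m hm ↦ mem_of_mem_core (hW ?_)
  exact mem_range_map_subtype.1 hm

theorem range_le_core {X : Submodule K (corner s M)} {j : N →ₗ[Λ] M}
    (h : ∀ m, corner.map s j m ∈ X) : LinearMap.range j ≤ core X := by
  rintro _ ⟨m, rfl⟩ l
  have : proj s (l • j m) = corner.map s j (proj s (l • m)) :=
    Subtype.ext <| by
      change s 1 • l • j m = j (s 1 • l • m)
      rw [map_smul, map_smul]
  rw [this]
  exact h _

end corner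

section Restrict

variable {Λ Λ' : Type u} [Ring Λ] [Ring Λ']

/-- The restriction of scalars of a `Λ'`-module along `f : Λ → Λ'`. -/
def Restrict (_ : Λ →+* Λ') (M : Type u) : Type u := M

variable (f : Λ →+* Λ') (M : Type u) {N V : Type u} [AddCommGroup M] [Module Λ' M]
  [AddCommGroup N] [Module Λ' N] [AddCommGroup V] [Module Λ V]

instance : AddCommGroup (Restrict f M) := inferInstanceAs (AddCommGroup M)

instance : Module Λ (Restrict f M) := Module.compHom M f

/-- The identity map from a module to its restriction of scalars. -/
def Restrict.of : M ≃+ Restrict f M := .refl M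

variable {M}

theorem Restrict.smul_of (l : Λ) (m : M) : l • of f M m = of f M (f l • m) := rfl

/-- Restriction of scalars for homomorphisms. -/
def Restrict.map (j : M →ₗ[Λ'] N) : Restrict f M →ₗ[Λ] Restrict f N where
  toFun := j
  map_add' := map_add j
  map_smul' l := map_smul j (f l)

/-- The largest `Λ'`-submodule `W'` such that `εW'` is contained in `W`. -/
def core (ε : Λ) (W : Submodule Λ (Restrict f M)) : Submodule Λ' M where
  carrier := {m | ∀ l : Λ', .of f M (f ε • l • m) ∈ W}
  add_mem' hm hm' l := by
    rw [smul_add, smul_add]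
    exact W.add_mem (hm l) (hm' l)
  zero_mem' l := by
    rw [smul_zero, smul_zero]
    exact W.zero_mem
  smul_mem' l' m hm l := by
    rw [smul_smul l]
    exact hm _

variable (V) in
/-- The coextension of scalars `Hom_Λ(Λ', V)` of a `Λ`-module `V`. -/
abbrev Coextend : Type u := Restrict f Λ' →ₗ[Λ] V

namespace Coextend

instance : Module Λ' (Coextend f V) where
  smul l h := h ∘ₗ Restrict.map f (.toSpanSingleton Λ' Λ' l)
  one_smul h := LinearMap.ext fun x : Λ' ↦ congrArg h (mul_one x)
  mul_smul l l' h := LinearMap.ext fun x : Λ' ↦ congrArg h (mul_assoc x l l').symm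
  smul_zero _ := rfl
  smul_add _ _ _ := rfl
  add_smul l l' h := LinearMap.ext fun x : Λ' ↦
    (congrArg h (mul_add x l l')).trans (map_add h _ _)
  zero_smul h := LinearMap.ext fun x : Λ' ↦ (congrArg h (mul_zero x)).trans (map_zero h)

theorem smul_of (l x : Λ') (h : Coextend f V) : (l • h) (.of f Λ' x) = h (.of f Λ' (x * l)) := rfl

/-- Coextension of scalars is right adjoint to restriction of scalars. -/
def homEquiv : (Restrict f M →ₗ[Λ] V) ≃ (M →ₗ[Λ'] Coextend f V) where
  toFun h :=
    { toFun m := h ∘ₗ Restrict.map f (.toSpanSingleton Λ' M m)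
      map_add' m m' := LinearMap.ext fun x : Λ' ↦
        (congrArg h (smul_add x m m')).trans (map_add h _ _)
      map_smul' l m := LinearMap.ext fun x : Λ' ↦ congrArg h (mul_smul x l m).symm }
  invFun g :=
    { toFun m := g m (.of f Λ' 1)
      map_add' m m' := congrArg (fun h : Coextend f V ↦ h (.of f Λ' 1)) (map_add g m m')
      map_smul' l m := by
        change g (f l • (show M from m)) _ = _
        rw [map_smul, smul_of, one_mul, RingHom.id_apply, ← map_smul, Restrict.smul_of, smul_eq_mul,
          mul_one] }
  left_inv h := LinearMap.ext fun m : M ↦ congrArg h (one_smul Λ' m)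
  right_inv g := LinearMap.ext fun m ↦ LinearMap.ext fun x : Λ' ↦ by
    change g (x • m) (.of f Λ' 1) = _
    rw [map_smul, smul_of, one_mul]
    rfl

theorem existsUnique_comp_iff (j : M →ₗ[Λ'] N) (g : Restrict f M →ₗ[Λ] V) :
    (∃! h : Restrict f N →ₗ[Λ] V, h ∘ₗ Restrict.map f j = g) ↔
      ∃! h : N →ₗ[Λ'] Coextend f V, h ∘ₗ j = homEquiv f g := by
  refine (homEquiv f).existsUnique_congr fun h ↦ ?_
  have natural : homEquiv f h ∘ₗ j = homEquiv f (h ∘ₗ Restrict.map f j) :=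
    LinearMap.ext fun m ↦ LinearMap.ext fun x : Λ' ↦ congrArg h (map_smul j x m).symm
  rw [natural, (homEquiv f).apply_eq_iff_eq]

end Coextend

namespace RankFunction

variable {f} {R : RankFunction Λ} {R' : RankFunction Λ'}

variable (f R R') in
/-- Restriction of scalars along `f` sends dense embeddings to dense embeddings. -/
def PreservesDense : Prop :=
  ∀ ⦃M N : Type u⦄ [AddCommGroup M] [Module Λ' M] [AddCommGroup N] [Module Λ' N]
    (j : M →ₗ[Λ'] N), R'.IsDense j → R.IsDense (Restrict.map f j)

theorem IsLocal.coextend (hV : R.IsLocal V) (hf : PreservesDense f R R') :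
    R'.IsLocal (Coextend f V) := by
  intro M N _ _ _ _ j hj g
  obtain ⟨g, rfl⟩ := (Coextend.homEquiv f).surjective g
  exact (Coextend.existsUnique_comp_iff f j g).1 (hV _ _ _ (hf j hj) g)

theorem IsEnvelope.existsUnique_restrict_hom {I W : Type u} [AddCommGroup I] [Module Λ' I]
    [AddCommGroup W] [Module Λ' W] {i : I →ₗ[Λ'] W} (hi : R'.IsEnvelope i) (hV : R.IsLocal V)
    (hf : PreservesDense f R R') (g : Restrict f I →ₗ[Λ] V) :
    ∃! h : Restrict f W →ₗ[Λ] V, h ∘ₗ Restrict.map f i = g :=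
  (Coextend.existsUnique_comp_iff f i g).2 <|
    hi.existsUnique_hom_of_local _ (hV.coextend hf) (Coextend.homEquiv f g)

end RankFunction

variable {f} {ε : Λ} {W : Submodule Λ (Restrict f M)}

theorem range_le_core {j : N →ₗ[Λ'] M} (h : LinearMap.range (Restrict.map f j) ≤ W) :
    LinearMap.range j ≤ core f ε W := by
  rintro _ ⟨x, rfl⟩ l
  rw [← map_smul, ← map_smul]
  exact h ⟨_, rfl⟩

theorem mem_core_iff {e : Λ} (he : ε * e = e)
    (h : ∀ l : Λ', ∃ a : Λ, f a * f e = f ε * l * f e) {m : M} (hm : f e • m = m) :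
    m ∈ core f ε W ↔ .of f M m ∈ W := by
  refine ⟨fun hmW ↦ ?_, fun hmW l ↦ ?_⟩
  · have := hmW 1
    rwa [one_smul, ← hm, smul_smul, ← map_mul, he, hm] at this
  · obtain ⟨a, ha⟩ := h l
    rw [← hm, smul_smul, smul_smul, ← ha, mul_smul, hm, ← Restrict.smul_of]
    exact W.smul_mem a hmW

theorem finrank_corner_core {K : Type*} [Ring K] {t : K →ₙ+* Λ} (ht : ε * t 1 = t 1)
    (h : ∀ l : Λ', ∃ a : Λ, f a * f (t 1) = f ε * l * f (t 1)) :
    Module.finrank K (corner ((f : Λ →ₙ+* Λ').comp t) (core f ε W)) =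
      Module.finrank K (corner t W) :=
  LinearEquiv.finrank_eq
    { toFun m := ⟨⟨.of f M m.1.1, (mem_core_iff ht h (congrArg Subtype.val m.2)).1 m.1.2⟩,
        Subtype.ext (congrArg Subtype.val m.2 :)⟩
      invFun m := ⟨⟨(Restrict.of f M).symm m.1.1,
        (mem_core_iff (M := M) ht h (congrArg Subtype.val m.2)).2 m.1.2⟩,
        Subtype.ext (congrArg Subtype.val m.2 :)⟩
      map_add' _ _ := rfl
      map_smul' _ _ := rfl }

end Restrict

namespace corner

variable {Λ Λ' : Type u} [Ring Λ] [Ring Λ'] {f : Λ →+* Λ'} {M : Type u} [AddCommGroup M]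
  [Module Λ' M] {K : Type*} [Ring K] {s : K →ₙ+* Λ} {t : K →ₙ+* Λ'}

/-- The corner of a submodule, over a ring `Λ` that maps to `Λ'`, of a `Λ'`-module `M`, as a
subspace of the corner of `M`. -/
def ofRestrict (h : ∀ k, f (s k) = t k) (W : Submodule Λ (Restrict f M)) :
    Submodule K (corner t M) where
  carrier := {m | Restrict.of f M m.1 ∈ W}
  add_mem' := W.add_mem
  zero_mem' := W.zero_mem (R := Λ)
  smul_mem' k m hm := by
    have := W.smul_mem (s k) hm
    rwa [Restrict.smul_of, h] at this

theorem mem_ofRestrict {h : ∀ k, f (s k) = t k} {W : Submodule Λ (Restrict f M)} {m : corner t M} :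
    m ∈ ofRestrict h W ↔ .of f M m.1 ∈ W := .rfl

theorem finrank_ofRestrict (h : ∀ k, f (s k) = t k) (W : Submodule Λ (Restrict f M)) :
    Module.finrank K (ofRestrict h W) = Module.finrank K (corner s W) :=
  LinearEquiv.finrank_eq
    { toFun m := ⟨⟨.of f M m.1.1, m.2⟩, Subtype.ext <| by
        have := m.1.2
        rw [mem_corner, ← h] at this
        exact this⟩
      invFun m := ⟨⟨(Restrict.of f M).symm m.1.1, by
        rw [mem_corner, ← h]
        exact congrArg Subtype.val m.2⟩, m.1.2⟩
      map_add' _ _ := rfl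
      map_smul' k m := Subtype.ext <| Subtype.ext <|
        congrArg (fun l ↦ Restrict.of f M (l • m.1.1)) (h k).symm }

end corner

section RestrictScalars

open Module

variable {G L : Type u} [DivisionRing G] [DivisionRing L] [Module G L] [IsScalarTower G L L]

theorem exists_restrictScalars_linearEquiv {X Y : Type*} [AddCommGroup X] [Module G X]
    [AddCommGroup Y] [Module L Y] (e : X ≃+ Y) (he : ∀ (g : G) x, e (g • x) = (g • 1 : L) • e x) :
    ∃ (_ : Module G Y) (_ : IsScalarTower G L Y), Nonempty (X ≃ₗ[G] Y) := by
  let _ : Module G Y := .compHom Y (RingHom.smulOneHom : G →+* L)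
  have hsmul (g : G) (y : Y) : g • y = (g • 1 : L) • y := rfl
  refine ⟨_, ⟨fun g l y ↦ ?_⟩, ⟨{ e with map_smul' := he }⟩⟩
  rw [hsmul, ← mul_smul, smul_one_mul]

variable {Λ : Type u} [Ring Λ] {t : G →ₙ+* Λ} {s : L →ₙ+* Λ} {M : Type u} [AddCommGroup M]
  [Module Λ M]

/-- The corners of `s : L → Λ` and of its restriction to `G` agree. -/
def cornerRestrictScalarsEquiv (h : ∀ g : G, t g = s (g • 1)) : corner t M ≃+ corner s M where
  toFun m := ⟨m.1, by rw [mem_corner, ← one_smul G (1 : L), ← h, m.2]⟩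
  invFun m := ⟨m.1, by rw [mem_corner, h, one_smul, m.2]⟩
  map_add' _ _ := rfl

theorem exists_corner_restrictScalars_linearEquiv (h : ∀ g : G, t g = s (g • 1)) :
    ∃ (_ : Module G (corner s M)) (_ : IsScalarTower G L (corner s M)),
      Nonempty (corner t M ≃ₗ[G] corner s M) :=
  exists_restrictScalars_linearEquiv (cornerRestrictScalarsEquiv h) fun g m ↦
    Subtype.ext (congrArg (· • m.1) (h g))

theorem finite_corner_of_restrictScalars (h : ∀ g : G, t g = s (g • 1))
    [Module.Finite G (corner t M)] : Module.Finite L (corner s M) := by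
  obtain ⟨_, _, ⟨e⟩⟩ := exists_corner_restrictScalars_linearEquiv (M := M) h
  have := Module.Finite.equiv e
  exact .of_restrictScalars_finite G L _

theorem finite_corner_restrictScalars (h : ∀ g : G, t g = s (g • 1)) [Module.Finite G L]
    [Module.Finite L (corner s M)] : Module.Finite G (corner t M) := by
  obtain ⟨_, _, ⟨e⟩⟩ := exists_corner_restrictScalars_linearEquiv (M := M) h
  have : Module.Finite G (corner s M) := .trans L _
  exact .equiv e.symm

theorem finrank_corner_restrictScalars (h : ∀ g : G, t g = s (g • 1)) :
    finrank G (corner t M) = finrank G L * finrank L (corner s M) := by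
  obtain ⟨_, _, ⟨e⟩⟩ := exists_corner_restrictScalars_linearEquiv (M := M) h
  rw [e.finrank_eq, Module.finrank_mul_finrank]

end RestrictScalars

section Yoneda

variable {Λ : Type u} [Ring Λ] {e : Λ} {M N : Type*} [AddCommGroup M] [Module Λ M]
  {ι : Type*} [Fintype ι]

theorem mul_eq_of_mem_span_singleton (he : e * e = e) {x : Λ} (hx : x ∈ Submodule.span Λ {e}) :
    x * e = x := by
  obtain ⟨l, rfl⟩ := Submodule.mem_span_singleton.1 hx
  rw [smul_eq_mul, mul_assoc, he]

/-- The homomorphism `(Λe)ⁿ → M` given by a row of elements of `M`. -/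
def rowHom (e : Λ) (b : ι → M) : (ι → Submodule.span Λ {e}) →ₗ[Λ] M where
  toFun x := ∑ j, (x j : Λ) • b j
  map_add' x y := by
    simp only [Pi.add_apply, Submodule.coe_add, add_smul, Finset.sum_add_distrib]
  map_smul' l x := by
    simp only [Pi.smul_apply, Submodule.coe_smul, smul_eq_mul, mul_smul, Finset.smul_sum,
      RingHom.id_apply]

theorem rowHom_apply (b : ι → M) (x : ι → Submodule.span Λ {e}) :
    rowHom e b x = ∑ j, (x j : Λ) • b j := rfl

theorem rowHom_single [DecidableEq ι] (b : ι → M) (j : ι) :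
    rowHom e b (Pi.single j ⟨e, Submodule.mem_span_singleton_self e⟩) = e • b j := by
  rw [rowHom_apply, Finset.sum_eq_single j (fun k _ hk ↦ ?_) (by simp), Pi.single_eq_same]
  rw [Pi.single_eq_of_ne hk, Submodule.coe_zero, zero_smul]

theorem comp_rowHom_eq_iff [AddCommGroup N] [Module Λ N] {b : ι → M} {c : ι → N}
    (hb : ∀ j, e • b j = b j) (hc : ∀ j, e • c j = c j) (g : M →ₗ[Λ] N) :
    g ∘ₗ rowHom e b = rowHom e c ↔ ∀ j, g (b j) = c j := by
  classical
  refine ⟨fun h j ↦ ?_, fun h ↦ LinearMap.ext fun x ↦ ?_⟩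
  · rw [← hb, ← hc, ← rowHom_single, ← rowHom_single, ← h, LinearMap.comp_apply]
  · simp only [LinearMap.comp_apply, rowHom_apply, map_sum, map_smul, h]

variable {K : Type*} [Ring K]

/-- Right multiplication by scalars on the left ideal generated by their unit element. -/
def rightMul (t : K →ₙ+* Λ) : K →+* (Module.End Λ (Submodule.span Λ {t 1}))ᵐᵒᵖ where
  toFun a := .op <| (LinearMap.toSpanSingleton Λ Λ (t a)).restrict fun x _ ↦
    Submodule.mem_span_singleton.2 ⟨x * t a, by
      rw [smul_eq_mul, mul_assoc, ← map_mul, mul_one]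
      rfl⟩
  map_one' := MulOpposite.unop_injective <| LinearMap.ext fun x ↦ Subtype.ext <|
    mul_eq_of_mem_span_singleton (map_one_mul_map_one t) x.2
  map_mul' a b := MulOpposite.unop_injective <| LinearMap.ext fun x ↦ Subtype.ext <|
    (congrArg (x.1 * ·) (map_mul t a b)).trans (mul_assoc _ _ _).symm
  map_zero' := MulOpposite.unop_injective <| LinearMap.ext fun x ↦ Subtype.ext <|
    (congrArg (x.1 * ·) (map_zero t)).trans (mul_zero _)
  map_add' a b := MulOpposite.unop_injective <| LinearMap.ext fun x ↦ Subtype.ext <|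
    (congrArg (x.1 * ·) (map_add t a b)).trans (mul_add _ _ _)

end Yoneda

namespace RankFunction.IsEnvelope

variable {Λ : Type u} [Ring Λ] {R : RankFunction Λ} {I V : Type u} [AddCommGroup I] [Module Λ I]
  [AddCommGroup V] [Module Λ V] {i : I →ₗ[Λ] V}

theorem exists_extend (h : R.IsEnvelope i) (x : Module.End Λ I) :
    ∃ y : Module.End Λ V, y ∘ₗ i = i ∘ₗ x :=
  (h.existsUnique_hom_of_local V h.isLocal _).exists

/-- Endomorphisms of a module extend to its envelope. -/
noncomputable def extend (h : R.IsEnvelope i) : Module.End Λ I →+* Module.End Λ V where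
  toFun x := (h.exists_extend x).choose
  map_one' := h.hom_ext h.isLocal (h.exists_extend 1).choose_spec
  map_mul' x y := h.hom_ext h.isLocal <| LinearMap.ext fun m ↦ by
    have key (x : Module.End Λ I) := LinearMap.congr_fun (h.exists_extend x).choose_spec
    refine (key _ m).trans (((congrArg _ (key y m)).trans (key x (y m))).symm)
  map_zero' := h.hom_ext h.isLocal <| (h.exists_extend 0).choose_spec.trans (by simp)
  map_add' x y := h.hom_ext h.isLocal <| by
    rw [(h.exists_extend _).choose_spec, LinearMap.add_comp, (h.exists_extend x).choose_spec,
      (h.exists_extend y).choose_spec, LinearMap.comp_add]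

theorem extend_apply (h : R.IsEnvelope i) (x : Module.End Λ I) (m : I) :
    h.extend x (i m) = i (x m) :=
  LinearMap.congr_fun (h.exists_extend x).choose_spec m

open Classical in
/-- The endomorphism ring of an envelope is a division ring. -/
noncomputable abbrev divisionRing (h : R.IsEnvelope i) : DivisionRing (Module.End Λ V) :=
  have := h.nontrivial_end
  .ofIsUnitOrEqZero h.isUnit_or_eq_zero

end RankFunction.IsEnvelope

section CornerEnd

variable {Λ : Type u} [Ring Λ] {K : Type*} [Ring K] {s : K →ₙ+* Λ} {V : Type*} [AddCommGroup V]
  [Module Λ V]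

instance : Module (Module.End Λ V) (corner s V) where
  smul d m := corner.map s d m
  one_smul _ := rfl
  mul_smul _ _ _ := rfl
  smul_zero _ := map_zero _
  smul_add _ := map_add _
  add_smul _ _ _ := rfl
  zero_smul _ := rfl

instance : SMulCommClass K (Module.End Λ V) (corner s V) where
  smul_comm k d m := (map_smul (corner.map s d) k m).symm

theorem coe_end_smul_corner (d : Module.End Λ V) (m : corner s V) : (d • m).1 = d m.1 := rfl

end CornerEnd

section Sequence

variable {R : ℕ → Type u} [∀ k, DivisionRing (R k)] (f : ∀ k, R k →+* R (k + 1))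

/-- The composites of the maps of a sequence of ring homomorphisms. -/
def transition (i j : ℕ) (h : i ≤ j) : R i →+* R j :=
  Nat.leRecOn h (fun {k} g ↦ (f k).comp g) (.id _)

theorem transition_self (i : ℕ) : transition f i i le_rfl = .id _ := Nat.leRecOn_self _

variable {f}

theorem transition_succ {i j : ℕ} (h : i ≤ j) :
    transition f i (j + 1) (h.trans j.le_succ) = (f j).comp (transition f i j h) :=
  Nat.leRecOn_succ h _

theorem apply_transition {A : Type*} {g : ∀ k, R k → A} (h : ∀ k x, g (k + 1) (f k x) = g k x)
    {i j : ℕ} (hij : i ≤ j) (x : R i) : g j (transition f i j hij x) = g i x := by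
  induction j, hij using Nat.le_induction with
  | base => rw [transition_self, RingHom.id_apply]
  | succ j hij ih => rw [transition_succ hij, RingHom.comp_apply, h, ih]

instance : DirectedSystem R fun i j h ↦ transition f i j h where
  map_self i x := by rw [transition_self, RingHom.id_apply]
  map_map {k j i} hij hjk x := by
    induction k, hjk using Nat.le_induction with
    | base => rw [transition_self, RingHom.id_apply]
    | succ k hjk ih =>
      rw [transition_succ hjk, transition_succ (hij.trans hjk), RingHom.comp_apply, ih,
        RingHom.comp_apply]

theorem directLimit_of_apply (k : ℕ) (x : R k) :
    DirectLimit.Ring.of R (transition f) (k + 1) (f k x) =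
      DirectLimit.Ring.of R (transition f) k x := by
  rw [← DirectLimit.Ring.of_f k.le_succ x, transition_succ le_rfl, transition_self,
    RingHom.comp_id]

theorem exists_directLimit_of_eq {ι : Type*} [Finite ι]
    (w : ι → DirectLimit R (transition f)) :
    ∃ (k : ℕ) (v : ι → R k), ∀ j, DirectLimit.Ring.of R (transition f) k (v j) = w j := by
  have := Fintype.ofFinite ι
  choose k v hv using fun j ↦ DirectLimit.exists_eq_mk (transition f) (w j)
  have hk (j : ι) : k j ≤ Finset.univ.sup k := Finset.le_sup (Finset.mem_univ j)
  exact ⟨_, fun j ↦ transition f _ _ (hk j) (v j),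
    fun j ↦ (DirectLimit.Ring.of_f (hk j) (v j)).trans (hv j).symm⟩

end Sequence

/-- An *extension* of an embedding `φ : F → Mₙ(G)`: embeddings of `F` and `G` into division rings
`F'` and `G'` and a compatible embedding `F' → Mₙ(G')`. -/
structure Extension {ι : Type} [Fintype ι] [DecidableEq ι] {F G : Type u} [DivisionRing F]
    [DivisionRing G] (φ : F →+* Matrix ι ι G) where
  F' : Type u
  G' : Type u
  [instF' : DivisionRing F']
  [instG' : DivisionRing G']
  ιF : F →+* F'
  ιG : G →+* G'
  φ' : F' →+* Matrix ι ι G'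
  compat (a : F) : φ' (ιF a) = (φ a).map ιG

attribute [instance] Extension.instF' Extension.instG'

namespace Extension

variable {ι : Type} [Fintype ι] [DecidableEq ι] {F G : Type u} [DivisionRing F] [DivisionRing G]
  {φ : F →+* Matrix ι ι G}

variable (φ) in
/-- The trivial extension. -/
def refl : Extension φ where
  F' := F
  G' := G
  ιF := .id F
  ιG := .id G
  φ' := φ
  compat _ := rfl

/-- An extension of an extension, as an extension. -/
def trans (E : Extension φ) (E' : Extension E.φ') : Extension φ where
  F' := E'.F'
  G' := E'.G'
  ιF := E'.ιF.comp E.ιF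
  ιG := E'.ιG.comp E.ιG
  φ' := E'.φ'
  compat a := (E'.compat _).trans <| by rw [E.compat, Matrix.map_map, RingHom.coe_comp]

theorem φ'_row_injective (E : Extension φ) (r : ι) : Function.Injective fun x ↦ E.φ' x r := by
  intro x y (hxy : E.φ' x r = E.φ' y r)
  by_contra hne
  have hinv : E.φ' (x - y) * E.φ' (x - y)⁻¹ = 1 := by
    rw [← map_mul, mul_inv_cancel₀ (sub_ne_zero.2 hne), map_one]
  have hrow (j : ι) : E.φ' (x - y) r j = 0 := by
    rw [map_sub, Matrix.sub_apply, hxy, sub_self]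
  have hrr := congrFun (congrFun hinv r) r
  simp only [Matrix.mul_apply, hrow, zero_mul, Finset.sum_const_zero, Matrix.one_apply_eq] at hrr
  exact zero_ne_one hrr

end Extension

/-- A presentation of `φ : F → Mₙ(G)` by modules: the objects that represent `F` and `G` are the
left ideals generated by `t 1` and `s 1`, and the former is, after restriction of scalars and up to
a dense embedding, the direct sum of `n` copies of the latter. -/
structure Presentation {ι : Type} [Fintype ι] [DecidableEq ι] {F G Λ Λ' : Type u} [DivisionRing F]
    [DivisionRing G] [Ring Λ] [Ring Λ'] (φ : F →+* Matrix ι ι G) (f : Λ →+* Λ')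
    (R : RankFunction Λ) (R' : RankFunction Λ') where
  s : G →ₙ+* Λ
  t : F →ₙ+* Λ'
  β : ι → Submodule.span Λ' {t 1}
  s_one_mul (j : ι) : f (s 1) • β j = β j
  mul_t (j : ι) (a : F) : (β j : Λ') * t a = ∑ k, f (s (φ a j k)) * β k
  stable : R.IsStable (Submodule.span Λ {s 1})
  stable' : R'.IsStable (Submodule.span Λ' {t 1})
  preservesDense : RankFunction.PreservesDense f R R'
  isDense : R.IsDense (rowHom (s 1) fun j ↦ Restrict.of f _ (β j))

namespace Presentation

variable {ι : Type} [Fintype ι] [DecidableEq ι] {F G Λ Λ' : Type u} [DivisionRing F]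
  [DivisionRing G] [Ring Λ] [Ring Λ'] {φ : F →+* Matrix ι ι G} {f : Λ →+* Λ'}
  {R : RankFunction Λ} {R' : RankFunction Λ'} (P : Presentation φ f R R')
  {V W : Type u} [AddCommGroup V] [Module Λ V] [AddCommGroup W] [Module Λ' W]
  {i : Submodule.span Λ {P.s 1} →ₗ[Λ] V} {i' : Submodule.span Λ' {P.t 1} →ₗ[Λ'] W}

theorem s_one_ne_zero : P.s 1 ≠ 0 := fun h ↦
  (Submodule.nontrivial_iff_ne_bot.1 P.stable.nontrivial) (Submodule.span_singleton_eq_bot.2 h)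

theorem β_ne_zero (r : ι) : P.β r ≠ 0 := by
  intro h
  have key := rowHom_single (e := P.s 1) (fun j ↦ Restrict.of f _ (P.β j)) r
  rw [h, map_zero, smul_zero] at key
  have hs := P.isDense.injective (key.trans (map_zero _).symm)
  rw [Pi.single_eq_zero_iff, Submodule.mk_eq_zero] at hs
  exact P.s_one_ne_zero hs

theorem smul_apply_β (h : Restrict f W →ₗ[Λ] V) (j : ι) (g : G) :
    P.s g • h (.of f W (i' (P.β j))) = h (.of f W (i' (f (P.s g) • P.β j))) := by
  rw [← map_smul, Restrict.smul_of, ← map_smul i']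

variable (i') in
/-- The coordinates of a homomorphism into `V`. -/
def coord : (Restrict f W →ₗ[Λ] V) →ₗ[Module.End Λ V] ι → corner P.s V where
  toFun h j := ⟨h (.of f W (i' (P.β j))), by rw [mem_corner, smul_apply_β, P.s_one_mul]⟩
  map_add' _ _ := rfl
  map_smul' _ _ := rfl

theorem coord_bijective (hi : R.IsEnvelope i) (hi' : R'.IsEnvelope i') :
    Function.Bijective (P.coord (V := V) i') := by
  refine Function.bijective_iff_existsUnique _ |>.2 fun p ↦ ?_
  obtain ⟨g, hg, hg_unique⟩ :=
    hi.isLocal _ _ _ P.isDense (rowHom (P.s 1) fun j ↦ (p j : V))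
  obtain ⟨h, hh, hh_unique⟩ := hi'.existsUnique_restrict_hom hi.isLocal P.preservesDense g
  have key := comp_rowHom_eq_iff (b := fun j ↦ Restrict.of f _ (P.β j)) (c := fun j ↦ (p j : V))
    P.s_one_mul fun j ↦ (p j).2
  refine ⟨h, funext fun j ↦ Subtype.ext ?_, fun h' hh' ↦ hh_unique _ (hg_unique _ ((key _).2 ?_))⟩
  · rw [← (key g).1 hg j, ← hh]
    rfl
  · exact fun j ↦ congrArg Subtype.val (congrFun hh' j)

/-- The representation of `End W` on the coordinates of homomorphisms `W → V`. -/
noncomputable def representation (hi : R.IsEnvelope i) (hi' : R'.IsEnvelope i') :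
    (Module.End Λ' W)ᵐᵒᵖ →+* Matrix ι ι (Module.End (Module.End Λ V) (corner P.s V)) :=
  let precomp : (Module.End Λ' W)ᵐᵒᵖ →+* Module.End (Module.End Λ V) (Restrict f W →ₗ[Λ] V) :=
    { toFun x :=
        { toFun h := h ∘ₗ Restrict.map f x.unop
          map_add' _ _ := rfl
          map_smul' _ _ := rfl }
      map_one' := rfl
      map_mul' _ _ := rfl
      map_zero' := LinearMap.ext fun h ↦ LinearMap.ext fun _ ↦ map_zero h
      map_add' _ _ := LinearMap.ext fun h ↦ LinearMap.ext fun _ ↦ map_add h _ _ }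
  (endVecRingEquivMatrixEnd ι _ _).toRingHom.comp <|
    (LinearEquiv.ofBijective _ (P.coord_bijective hi hi')).conjRingEquiv.toRingHom.comp precomp

theorem representation_eq (hi : R.IsEnvelope i) (hi' : R'.IsEnvelope i') (x : Module.End Λ' W)
    (r : ι) (B : ι → Module.End (Module.End Λ V) (corner P.s V))
    (h : ∀ h : Restrict f W →ₗ[Λ] V,
      P.coord i' (h ∘ₗ Restrict.map f x) r = ∑ j, B j (P.coord i' h j)) :
    P.representation hi hi' (.op x) r = B := by
  funext j
  refine LinearMap.ext fun p ↦ ?_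
  let e := LinearEquiv.ofBijective _ (P.coord_bijective hi hi')
  refine (h (e.symm (Pi.single j p))).trans ?_
  have he : P.coord i' (e.symm (Pi.single j p)) = Pi.single j p := e.apply_symm_apply _
  rw [he, Finset.sum_eq_single j (fun k _ hk ↦ ?_) (by simp), Pi.single_eq_same]
  rw [Pi.single_eq_of_ne hk, map_zero]

theorem exists_end_smul_eq (hi : R.IsEnvelope i) {p : corner P.s V} (hp : p ≠ 0)
    (q : corner P.s V) : ∃ d : Module.End Λ V, d • p = q := by
  let e : Submodule.span Λ {P.s 1} := ⟨_, Submodule.mem_span_singleton_self _⟩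
  let yoneda (p : corner P.s V) := (LinearMap.toSpanSingleton Λ V p).domRestrict (.span Λ {P.s 1})
  have yoneda_e (p) : yoneda p e = p := p.2
  have yoneda_ne_zero : yoneda p ≠ 0 := fun h ↦ hp <| Subtype.ext <| by rw [← yoneda_e p, h]; rfl
  obtain ⟨d, hd⟩ := hi.exists_comp_eq P.stable (yoneda p) (yoneda q) yoneda_ne_zero
  refine ⟨d, Subtype.ext ?_⟩
  rw [coe_end_smul_corner, ← yoneda_e p, ← yoneda_e q, ← hd]
  rfl

theorem nontrivial_corner (hi : R.IsEnvelope i) : Nontrivial (corner P.s V) := by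
  refine nontrivial_of_ne (⟨i ⟨_, Submodule.mem_span_singleton_self _⟩, ?_⟩ : corner P.s V) 0 ?_
  · rw [mem_corner, ← map_smul]
    exact congrArg i (Subtype.ext (map_one_mul_map_one P.s))
  · intro h
    have hs : P.s 1 = 0 :=
      congrArg Subtype.val (hi.injective ((congrArg Subtype.val h).trans (map_zero i).symm))
    exact P.s_one_ne_zero hs

theorem isSimpleModule (hi : R.IsEnvelope i) :
    IsSimpleModule (Module.End Λ V) (corner P.s V) :=
  have := P.nontrivial_corner hi
  isSimpleModule_iff_toSpanSingleton_surjective.2 ⟨this, fun _ hp ↦ P.exists_end_smul_eq hi hp⟩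

open Classical in
/-- The extension of `φ` given by envelopes `V` and `W` of the two objects of a presentation. -/
noncomputable def extension (hi : R.IsEnvelope i) (hi' : R'.IsEnvelope i') : Extension φ :=
  have := P.isSimpleModule hi
  letI := hi'.divisionRing
  { F' := (Module.End Λ' W)ᵐᵒᵖ
    G' := Module.End (Module.End Λ V) (corner P.s V)
    ιF := hi'.extend.op.comp (rightMul P.t)
    ιG := Module.toModuleEnd _ _
    φ' := P.representation hi hi'
    compat a := by
      funext r
      refine P.representation_eq hi hi' _ r _ fun h ↦ ?_
      have hβ : (rightMul P.t a).unop (P.β r) = ∑ k, f (P.s (φ a r k)) • P.β k :=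
        Subtype.ext <| (P.mul_t r a).trans <| by simp
      refine Subtype.ext ?_
      change h (.of f W (hi'.extend _ (i' (P.β r)))) = _
      rw [hi'.extend_apply, hβ]
      rw [map_sum, map_sum, map_sum, AddSubmonoidClass.coe_finsetSum]
      refine Finset.sum_congr rfl fun k _ ↦ ?_
      rw [map_smul, ← Restrict.smul_of, map_smul]
      rfl }

theorem extension_φ'_eq (hi : R.IsEnvelope i) (hi' : R'.IsEnvelope i') (x : Module.End Λ' W)
    (r : ι) (B : ι → Module.End (Module.End Λ V) (corner P.s V))
    (h : ∀ h : Restrict f W →ₗ[Λ] V,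
      P.coord i' (h ∘ₗ Restrict.map f x) r = ∑ j, B j (P.coord i' h j)) :
    (P.extension hi hi').φ' (.op x) r = B :=
  P.representation_eq hi hi' x r B h

theorem exists_extension_φ'_row_eq (hi : R.IsEnvelope i) (hi' : R'.IsEnvelope i')
    (hs : R'.IsStable (Submodule.span Λ' {f (P.s 1)})) (r : ι) (w : ι → G) :
    ∃ x, ∀ j, (P.extension hi hi').φ' x r j = (P.extension hi hi').ιG (w j) := by
  let e : Submodule.span Λ' {f (P.s 1)} := ⟨_, Submodule.mem_span_singleton_self _⟩
  let yoneda (m : W) := (LinearMap.toSpanSingleton Λ' W m).domRestrict (.span Λ' {f (P.s 1)})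
  have yoneda_e (m) : yoneda m e = f (P.s 1) • m := rfl
  have s_one_smul (j : ι) : f (P.s 1) • i' (P.β j) = i' (P.β j) := by
    rw [← map_smul, P.s_one_mul]
  have hne : yoneda (i' (P.β r)) ≠ 0 := fun h ↦ P.β_ne_zero r <| hi'.injective <| by
    rw [map_zero, ← s_one_smul, ← yoneda_e, h, LinearMap.zero_apply]
  obtain ⟨x, hx⟩ := hi'.exists_comp_eq hs _ (yoneda (∑ j, f (P.s (w j)) • i' (P.β j))) hne
  have hxβ : x (i' (P.β r)) = ∑ j, f (P.s (w j)) • i' (P.β j) := by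
    have := LinearMap.congr_fun hx e
    rw [LinearMap.comp_apply, yoneda_e, yoneda_e, s_one_smul, Finset.smul_sum] at this
    rw [this]
    simp only [smul_smul, ← map_mul, one_mul]
  refine ⟨.op x, congrFun (P.extension_φ'_eq hi hi' x r _ fun h ↦ Subtype.ext ?_)⟩
  change h (.of f W (x (i' (P.β r)))) = _
  rw [hxβ, map_sum, map_sum, AddSubmonoidClass.coe_finsetSum]
  refine Finset.sum_congr rfl fun k _ ↦ ?_
  rw [← Restrict.smul_of, map_smul]
  rfl

theorem exists_end_apply_eq (hi : R.IsEnvelope i) {p : corner P.s V} (hp : p ≠ 0)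
    (q : corner P.s V) : ∃ c : Module.End (Module.End Λ V) (corner P.s V), c p = q := by
  let := hi.divisionRing
  let e := LinearEquiv.ofBijective (LinearMap.toSpanSingleton (Module.End Λ V) (corner P.s V) p)
    ⟨smul_left_injective _ hp, P.exists_end_smul_eq hi hp⟩
  refine ⟨LinearMap.toSpanSingleton _ _ q ∘ₗ e.symm.toLinearMap, ?_⟩
  have he : e.symm p = 1 :=
    e.symm_apply_eq.2 (LinearMap.toSpanSingleton_apply_one (Module.End Λ V) (corner P.s V) p).symm
  rw [LinearMap.comp_apply, LinearEquiv.coe_coe, he]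
  exact one_smul _ q

theorem exists_end_map_eq (hi : R.IsEnvelope i) {J : Type u} [AddCommGroup J] [Module Λ J]
    (hJ : R.IsStable J) {m₀ : corner P.s J} (hm₀ : m₀ ≠ 0) (m : corner P.s J) :
    ∃ c : Module.End (Module.End Λ V) (corner P.s V), ∀ g : J →ₗ[Λ] V,
      c (corner.map P.s g m₀) = corner.map P.s g m := by
  by_cases! hall : ∀ g : J →ₗ[Λ] V, g = 0
  · refine ⟨0, fun g ↦ ?_⟩
    rw [hall g]
    rfl
  obtain ⟨g₀, hg₀⟩ := hall
  have hp : corner.map P.s g₀ m₀ ≠ 0 := fun h ↦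
    hm₀ (corner.map_injective (hi.injective_of_isStable hJ hg₀) (h.trans (map_zero _).symm))
  obtain ⟨c, hc⟩ := P.exists_end_apply_eq hi hp (corner.map P.s g₀ m)
  refine ⟨c, fun g ↦ ?_⟩
  obtain ⟨d, rfl⟩ := hi.exists_comp_eq hJ g₀ g hg₀
  exact (map_smul c d _).trans (congrArg (d • ·) hc)

theorem sum_single_apply {R M : Type*} [Semiring R] [AddCommMonoid M] [Module R M] (i₀ : ι)
    (c : Module.End R M) (p : ι → M) :
    ∑ j, (Pi.single i₀ c : ι → Module.End R M) j (p j) = c (p i₀) := by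
  rw [Finset.sum_eq_single i₀ (fun j _ hj ↦ by rw [Pi.single_eq_of_ne hj]; rfl) (by simp),
    Pi.single_eq_same]

theorem exists_extension_φ'_pair_eq (hi : R.IsEnvelope i) (hi' : R'.IsEnvelope i') {N J : Type u}
    [AddCommGroup N] [Module Λ' N] [AddCommGroup J] [Module Λ J] (hN : R'.IsStable N)
    (hJ : R.IsStable J) (a : J →ₗ[Λ] Restrict f N) {u v : Submodule.span Λ' {P.t 1} →ₗ[Λ'] N}
    (hu : u ≠ 0) {m₀ m₁ m₂ : corner P.s J} (hm₀ : m₀ ≠ 0) {i₀ i₁ : ι} {w : ι → G}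
    (h₀ : a m₀ = .of f N (u (P.β i₀))) (h₁ : a m₁ = .of f N (v (P.β i₀)))
    (h₂ : a m₂ = .of f N (u (∑ j, f (P.s (w j)) • P.β j) - v (P.β i₁))) :
    ∃ x, (∀ j ≠ i₀, (P.extension hi hi').φ' x i₀ j = 0) ∧
      ∀ j ≠ i₀, (P.extension hi hi').φ' x i₁ j = (P.extension hi hi').ιG (w j) := by
  obtain ⟨ψ, hψ⟩ := hi'.exists_hom_of_stable N hN u hu
  obtain ⟨x, hx⟩ := hi'.exists_comp_eq P.stable' i' (ψ ∘ₗ v) hi'.ne_zero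
  obtain ⟨c₁, hc₁⟩ := P.exists_end_map_eq hi hJ hm₀ m₁
  obtain ⟨c₂, hc₂⟩ := P.exists_end_map_eq hi hJ hm₀ m₂
  have hψβ (j : ι) : ψ (u (P.β j)) = i' (P.β j) := LinearMap.congr_fun hψ _
  have hxβ (j : ι) : x (i' (P.β j)) = ψ (v (P.β j)) := LinearMap.congr_fun hx _
  let g (h : Restrict f W →ₗ[Λ] V) : J →ₗ[Λ] V := h ∘ₗ Restrict.map f ψ ∘ₗ a
  have hg₀ (h : Restrict f W →ₗ[Λ] V) : corner.map P.s (g h) m₀ = P.coord i' h i₀ :=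
    Subtype.ext <| (congrArg (h ∘ₗ Restrict.map f ψ) h₀).trans <| congrArg (h <| .of f W ·) (hψβ i₀)
  have hg₁ (h : Restrict f W →ₗ[Λ] V) :
      P.coord i' (h ∘ₗ Restrict.map f x) i₀ = corner.map P.s (g h) m₁ :=
    Subtype.ext <| (congrArg (h <| .of f W ·) (hxβ i₀)).trans
      (congrArg (h ∘ₗ Restrict.map f ψ) h₁).symm
  have hg₂ (h : Restrict f W →ₗ[Λ] V) : P.coord i' (h ∘ₗ Restrict.map f x) i₁ =
      ∑ j, w j • P.coord i' h j - corner.map P.s (g h) m₂ := by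
    rw [eq_sub_iff_add_eq]
    refine Subtype.ext <| Eq.trans (congrArg₂ (fun m m' ↦ h (.of f W m) + h (Restrict.map f ψ m'))
      (hxβ i₁) h₂) ?_
    change h (.of f W (ψ _)) + h (.of f W (ψ (_ - _))) = _
    rw [← map_add, ← map_add, ← map_add, add_sub_cancel, AddSubmonoidClass.coe_finsetSum]
    simp only [map_sum, map_smul, hψβ, ← Restrict.smul_of]
    rfl
  have hrow₀ := P.extension_φ'_eq hi hi' x i₀ (Pi.single i₀ c₁) fun h ↦ by
    rw [hg₁, ← hc₁, hg₀, sum_single_apply]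
  have hrow₁ := P.extension_φ'_eq hi hi' x i₁
    (fun j ↦ (P.extension hi hi').ιG (w j) - (Pi.single i₀ c₂ : ι → (P.extension hi hi').G') j)
    fun h ↦ by
      refine Eq.trans ?_ (Finset.sum_sub_distrib _ _).symm
      rw [hg₂, ← hc₂, hg₀]
      exact congrArg _ (sum_single_apply i₀ c₂ _).symm
  refine ⟨.op x, fun j hj ↦ (congrFun hrow₀ j).trans (Pi.single_eq_of_ne hj _), fun j hj ↦ ?_⟩
  exact (congrFun hrow₁ j).trans <| (congrArg _ (Pi.single_eq_of_ne hj _)).trans (sub_zero _)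

end Presentation

/-- A *tiling* of the ring `S` by additive subgroups: `hom s t` is the group of morphisms `s ⟶ t` of
a category with set of objects `ν` in which composition is multiplication in `S`. -/
structure Tiling (ν : Type*) (S : Type*) [Ring S] where
  hom : ν → ν → AddSubgroup S
  one_mem (v : ν) : 1 ∈ hom v v
  mul_mem {s t u : ν} {x y : S} : x ∈ hom s t → y ∈ hom t u → y * x ∈ hom s u

namespace Tiling

variable {ν : Type} {S : Type u} [Ring S] [Fintype ν] [DecidableEq ν] {T T' : Tiling ν S}

variable (T) in
/-- The category ring of a tiling. Its modules are the additive functors from the tiling to abelian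
groups. The entry in row `t` and column `s` is a morphism `s ⟶ t`. -/
def ring : Subring (Matrix ν ν S) where
  carrier := {x | ∀ s t, x t s ∈ T.hom s t}
  add_mem' hx hy s t := add_mem (hx s t) (hy s t)
  zero_mem' s t := zero_mem _
  neg_mem' hx s t := neg_mem (hx s t)
  one_mem' s t := by
    obtain rfl | h := eq_or_ne t s
    · exact Matrix.one_apply_eq (α := S) t ▸ T.one_mem t
    · exact Matrix.one_apply_ne (α := S) h ▸ zero_mem _
  mul_mem' hx hy s t := sum_mem fun u _ ↦ T.mul_mem (hy s u) (hx u t)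

/-- The functor from a tiling to a coarser one, as a homomorphism of category rings. -/
def inclusion (h : ∀ s t, T.hom s t ≤ T'.hom s t) : T.ring →+* T'.ring :=
  Subring.inclusion fun _ hx s t ↦ h s t (hx s t)

variable {s t u v : ν} {x y : S}

/-- A morphism as a matrix with a single entry. -/
def single (hx : x ∈ T.hom s t) : T.ring :=
  ⟨Matrix.single t s x, fun s' t' ↦ by
    rw [Matrix.single_apply]
    split_ifs with h
    · obtain ⟨rfl, rfl⟩ := h
      exact hx
    · exact zero_mem _⟩

theorem single_mul_single_eq {z : S} (hx : x ∈ T.hom s t) (hy : y ∈ T.hom t u)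
    (hz : z ∈ T.hom s u) (h : y * x = z) : single hy * single hx = single hz :=
  Subtype.ext (h ▸ Matrix.single_mul_single_same _ _ _ _ _)

theorem sum_single {ι : Type*} {a : Finset ι} {z : ι → S} (hz : ∀ i, z i ∈ T.hom s t) :
    ∑ i ∈ a, single (hz i) = single (sum_mem fun i (_ : i ∈ a) ↦ hz i) :=
  Subtype.ext <| (AddSubmonoidClass.coe_finsetSum _ _).trans
    (map_sum (Matrix.singleAddMonoidHom t s) z a).symm

variable (T) in
/-- The projection onto a set of objects. -/
def proj (A : Finset ν) : T.ring := ∑ v ∈ A, single (T.one_mem v)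

variable (T) in
theorem proj_univ : T.proj Finset.univ = 1 :=
  Subtype.ext <| (AddSubmonoidClass.coe_finsetSum _ _).trans <|
    (Matrix.sum_single_eq_diagonal _).trans Matrix.diagonal_one

theorem proj_mul_single {A : Finset ν} (ht : t ∈ A) (hx : x ∈ T.hom s t) :
    T.proj A * single hx = single hx := by
  rw [proj, Finset.sum_mul, Finset.sum_eq_single t (fun u _ hu ↦ ?_) fun h ↦ (h ht).elim]
  · exact single_mul_single_eq hx (T.one_mem t) hx (one_mul x)
  · exact Subtype.ext (Matrix.single_mul_single_of_ne _ _ _ _ hu _)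

theorem exists_inclusion_mul_eq (h : ∀ s t, T.hom s t ≤ T'.hom s t) {A : Finset ν}
    (hA : ∀ t ∈ A, T'.hom s t ≤ T.hom s t) (hx : x ∈ T.hom s s) (l : T'.ring) :
    ∃ a, inclusion h a * inclusion h (single hx) =
      inclusion h (T.proj A) * l * inclusion h (single hx) := by
  have hz (t) : (if t ∈ A then l.1 t s else 0) ∈ T.hom s t := by
    split_ifs with ht
    · exact hA t ht (l.2 s t)
    · exact zero_mem _
  refine ⟨∑ t ∈ A, single (hz t), ?_⟩
  rw [proj, map_sum, map_sum, Finset.sum_mul, Finset.sum_mul, Finset.sum_mul]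
  refine Finset.sum_congr rfl fun t ht ↦ Subtype.ext ?_
  refine (Matrix.single_mul_single_same _ _ _ _ _).trans ?_
  rw [if_pos ht, ← one_mul (l.1 t s)]
  exact (Matrix.single_mul_mul_single _ _ _ _ _ _ _).symm

variable (T) in
/-- The ring homomorphism from scalars acting at the object `v` to the category ring. -/
def scalar {K : Type*} [Ring K] (v : ν) (κ : K →ₙ+* S) (hκ : ∀ k, κ k ∈ T.hom v v) :
    K →ₙ+* T.ring where
  toFun k := single (hκ k)
  map_mul' k l := Subtype.ext <| (congrArg _ (map_mul κ k l)).trans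
    (Matrix.single_mul_single_same _ _ _ _ _).symm
  map_zero' := Subtype.ext <| (congrArg _ (map_zero κ)).trans (Matrix.single_zero _ _)
  map_add' k l := Subtype.ext <| (congrArg _ (map_add κ k l)).trans (Matrix.single_add _ _ _ _)

section Identity

variable {K : Type*} [Ring K] {κ : K →ₙ+* S} {hs : ∀ k, κ k ∈ T.hom s s}
  {ht : ∀ k, κ k ∈ T.hom t t}

theorem single_one_mul_scalar (h : 1 ∈ T.hom s t) (k : K) :
    single h * T.scalar s κ hs k = T.scalar t κ ht k * single h :=
  have hk : κ k ∈ T.hom s t := mul_one (κ k) ▸ T.mul_mem h (ht k)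
  (single_mul_single_eq (hs k) h hk (one_mul _)).trans
    (single_mul_single_eq h (ht k) hk (mul_one _)).symm

theorem single_one_mul_single_one_mul_scalar (hst : 1 ∈ T.hom s t) (hts : 1 ∈ T.hom t s) (k : K) :
    single hts * single hst * T.scalar s κ hs k = T.scalar s κ hs k :=
  (congrArg (· * _) (single_mul_single_eq hst hts (T.one_mem s) (one_mul 1))).trans
    (single_mul_single_eq (hs k) (T.one_mem s) (hs k) (one_mul _))

variable {M : Type*} [AddCommGroup M] [Module T.ring M]

/-- Objects identified by the element `1` of the tiled ring have isomorphic corners. -/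
def cornerEquiv (hst : 1 ∈ T.hom s t) (hts : 1 ∈ T.hom t s) :
    corner (T.scalar s κ hs) M ≃ₗ[K] corner (T.scalar t κ ht) M :=
  corner.equivOfIntertwine (single hst) (single hts) (single_one_mul_scalar hst)
    (single_one_mul_scalar hts) (single_one_mul_single_one_mul_scalar hst hts 1)
    (single_one_mul_single_one_mul_scalar hts hst 1)

theorem finrank_corner_le {K : Type*} [DivisionRing K] {κ : K →ₙ+* S}
    {hs : ∀ k, κ k ∈ T.hom s s} {ht : ∀ k, κ k ∈ T.hom t t} {h : ∀ s t, T.hom s t ≤ T'.hom s t}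
    (hst : 1 ∈ T.hom s t) (hts : 1 ∈ T'.hom t s) {M : Type u} [AddCommGroup M] [Module T'.ring M]
    (W : Submodule T.ring (Restrict (inclusion h) M))
    [Module.Finite K (corner (T.scalar t κ ht) W)] :
    Module.finrank K (corner (T.scalar s κ hs) W) ≤
      Module.finrank K (corner (T.scalar t κ ht) W) := by
  refine LinearMap.finrank_le_finrank_of_injective
    (f := corner.smulHom (single hst) (single_one_mul_scalar hst)) fun m m' hm ↦ ?_
  have hinv (m : corner (T.scalar s κ hs) W) :
      (single hts : T'.ring) • (Restrict.of _ M).symm (single hst • m.1).1 =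
        (Restrict.of _ M).symm m.1.1 := by
    have hm : T'.scalar s κ (fun k ↦ h s s (hs k)) 1 • (Restrict.of _ M).symm m.1.1 =
        (Restrict.of _ M).symm m.1.1 := congrArg Subtype.val m.2
    change single hts • single (h s t hst) • (Restrict.of _ M).symm m.1.1 = _
    rw [← hm, ← mul_smul, ← mul_smul, single_one_mul_single_one_mul_scalar]
  exact Subtype.ext <| Subtype.ext <| (hinv m).symm.trans <|
    (congrArg (fun m ↦ _ • (Restrict.of _ M).symm m.1.1) hm).trans (hinv m')

end Identity

theorem finrank_corner_core {K : Type*} [Ring K] {κ : K →ₙ+* S} {hκ : ∀ k, κ k ∈ T.hom s s}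
    (h : ∀ s t, T.hom s t ≤ T'.hom s t) {A : Finset ν} (hs : s ∈ A)
    (hA : ∀ t ∈ A, T'.hom s t ≤ T.hom s t) {M : Type u} [AddCommGroup M] [Module T'.ring M]
    (W : Submodule T.ring (Restrict (inclusion h) M)) :
    Module.finrank K
        (corner (T'.scalar s κ fun k ↦ h s s (hκ k)) (core (inclusion h) (T.proj A) W)) =
      Module.finrank K (corner (T.scalar s κ hκ) W) :=
  _root_.finrank_corner_core (t := T.scalar s κ hκ) (proj_mul_single hs (hκ 1))
    (exists_inclusion_mul_eq h hA (hκ 1))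

section Representable

variable {K L : Type*} [Ring K] [Ring L] {κ : K →ₙ+* S} {hκ : ∀ k, κ k ∈ T.hom v v}
  {μ : L →ₙ+* S} {hμ : ∀ l, μ l ∈ T.hom s s}

theorem single_mem_span (hx : x ∈ T.hom s v) (h : x * μ 1 = x) :
    single hx ∈ Submodule.span T.ring {T.scalar s μ hμ 1} :=
  Submodule.mem_span_singleton.2 ⟨single hx, single_mul_single_eq (hμ 1) hx hx h⟩

theorem exists_single_eq_of_mem_corner
    (z : corner (T.scalar v κ hκ) (Submodule.span T.ring {T.scalar s μ hμ 1})) :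
    ∃ (x : S) (hx : x ∈ T.hom s v), κ 1 * x = x ∧ x * μ 1 = x ∧ single hx = z.1.1 := by
  have hz : T.scalar v κ hκ 1 * z.1.1 * T.scalar s μ hμ 1 = z.1.1 := by
    rw [mul_assoc, mul_eq_of_mem_span_singleton (map_one_mul_map_one _) z.1.2]
    exact congrArg Subtype.val z.2
  refine ⟨κ 1 * z.1.1.1 v s * μ 1, T.mul_mem (hμ 1) (T.mul_mem (z.1.1.2 s v) (hκ 1)), ?_, ?_, ?_⟩
  · rw [← mul_assoc, ← mul_assoc, map_one_mul_map_one]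
  · rw [mul_assoc, map_one_mul_map_one]
  · refine Subtype.ext (Eq.trans ?_ (congrArg Subtype.val hz))
    exact (Matrix.single_mul_mul_single _ _ _ _ _ _ _).symm

theorem subsingleton_corner_span (h : T.hom s v = ⊥) :
    Subsingleton (corner (T.scalar v κ hκ) (Submodule.span T.ring {T.scalar s μ hμ 1})) := by
  refine subsingleton_of_forall_eq 0 fun z ↦ Subtype.ext (Subtype.ext ?_)
  obtain ⟨x, hx, -, -, hxz⟩ := exists_single_eq_of_mem_corner z
  obtain rfl : x = 0 := by rwa [h] at hx
  exact hxz.symm.trans (Subtype.ext (Matrix.single_zero _ _))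

/-- The corners of the module represented by an object of a tiling consist of morphisms. -/
noncomputable def cornerSpanEquiv {E : Type*} [AddCommGroup E] [Module K E]
    (a : E →+ S) (ha : Function.Injective a) (hsmul : ∀ k x, a (k • x) = κ k * a x)
    (hrange : ∀ x, (∃ e, a e = x) ↔ x ∈ T.hom s v ∧ κ 1 * x = x ∧ x * μ 1 = x) :
    E ≃ₗ[K] corner (T.scalar v κ hκ) (Submodule.span T.ring {T.scalar s μ hμ 1}) :=
  have ha_mem (e : E) : a e ∈ T.hom s v := ((hrange _).1 ⟨e, rfl⟩).1
  have ha_mul (e : E) : κ 1 * a e = a e ∧ a e * μ 1 = a e := ((hrange _).1 ⟨e, rfl⟩).2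
  let b : E →ₗ[K] corner (T.scalar v κ hκ) (Submodule.span T.ring {T.scalar s μ hμ 1}) :=
    { toFun e := ⟨⟨single (ha_mem e), single_mem_span (ha_mem e) (ha_mul e).2⟩, Subtype.ext <|
        single_mul_single_eq (ha_mem e) (hκ 1) (ha_mem e) (ha_mul e).1⟩
      map_add' e e' := Subtype.ext <| Subtype.ext <| Subtype.ext <|
        (congrArg _ (map_add a e e')).trans (Matrix.single_add _ _ _ _)
      map_smul' k e := Subtype.ext <| Subtype.ext <|
        (single_mul_single_eq (ha_mem e) (hκ k) (ha_mem _) (hsmul k e).symm).symm }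
  .ofBijective b <| by
    refine ⟨fun e e' h ↦ ha ?_, fun z ↦ ?_⟩
    · have key := congrArg (fun z ↦ (z.1.1 : T.ring).1 v s) h
      exact (Matrix.single_apply_same ..).symm.trans (key.trans (Matrix.single_apply_same ..))
    · obtain ⟨x, hx, hκx, hxμ, hxz⟩ := exists_single_eq_of_mem_corner z
      obtain ⟨e, rfl⟩ := (hrange x).2 ⟨hx, hκx, hxμ⟩
      exact ⟨e, Subtype.ext (Subtype.ext hxz)⟩

end Representable

section Action

variable {z : S} {M : Type*} [AddCommGroup M] [Module T.ring M]

theorem single_smul_single_smul (hx : x ∈ T.hom s t) (hy : y ∈ T.hom t u) (hz : z ∈ T.hom s u)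
    (h : y * x = z) (m : M) : single hy • single hx • m = single hz • m := by
  rw [← mul_smul, single_mul_single_eq hx hy hz h]

theorem single_one_smul_smul {m : M} (hm : single (T.one_mem s) • m = m) (t : ν) (l : T.ring) :
    single (T.one_mem t) • l • m = single (l.2 s t) • m := by
  have hl : single (T.one_mem t) * l * single (T.one_mem s) = single (l.2 s t) :=
    Subtype.ext <| (Matrix.single_mul_mul_single _ _ _ _ _ _ _).trans <| by
      rw [one_mul, mul_one]
      rfl
  rw [← hl, mul_smul, mul_smul, hm]

theorem proj_smul_smul {m : M} (hm : single (T.one_mem s) • m = m) (A : Finset ν) (l : T.ring) :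
    T.proj A • l • m = ∑ t ∈ A, single (l.2 s t) • m := by
  rw [proj, Finset.sum_smul]
  exact Finset.sum_congr rfl fun t _ ↦ single_one_smul_smul hm t l

end Action

section Value

open scoped Matrix.Module

variable {E : Type u} [AddCommGroup E] [Module S E] {W : Submodule T.ring (ν → E)}

theorem single_smul (hx : x ∈ T.hom s t) (m : ν → E) :
    single hx • m = Pi.single t (x • m s) :=
  Matrix.Module.single_smul t s x m

theorem single_smul_single (hx : x ∈ T.hom s t) (e : E) :
    single hx • (Pi.single s e : ν → E) = Pi.single t (x • e) := by
  rw [single_smul, Pi.single_eq_same]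

theorem single_smul_mem (hx : x ∈ T.hom s t) {e : E} (he : Pi.single s e ∈ W) :
    Pi.single t (x • e) ∈ W := by
  have := W.smul_mem (single hx) he
  rwa [single_smul_single] at this

variable {K : Type*} [Ring K] [Module K E] {κ : K →ₙ+* S} (hκ : ∀ k, κ k ∈ T.hom v v)
  (hE : ∀ k (e : E), κ k • e = k • e)

variable (W) in
/-- The values at the object `v` of a subfunctor of a constant functor. -/
def value : Submodule K E where
  carrier := {e | Pi.single v e ∈ W}
  add_mem' he he' := by
    rw [Set.mem_ofPred_eq, Pi.single_add]
    exact W.add_mem he he'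
  zero_mem' := by
    rw [Set.mem_ofPred_eq, Pi.single_zero]
    exact W.zero_mem
  smul_mem' k e he := by
    rw [← hE]
    exact single_smul_mem (hκ k) he

theorem mem_value {e : E} : e ∈ value W hκ hE ↔ Pi.single v e ∈ W := Iff.rfl

include hE in
theorem single_eq_of_mem_corner (m : corner (T.scalar v κ hκ) W) : Pi.single v (m.1.1 v) = m.1.1 :=
  calc
    Pi.single v (m.1.1 v) = Pi.single v (κ 1 • m.1.1 v) := by rw [hE, one_smul]
    _ = T.scalar v κ hκ 1 • m.1.1 := (single_smul (hκ 1) m.1.1).symm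
    _ = m.1.1 := congrArg Subtype.val m.2

/-- The corners of a subfunctor of a constant functor consist of its values. -/
def cornerValueEquiv : corner (T.scalar v κ hκ) W ≃ₗ[K] value W hκ hE where
  toFun m := ⟨m.1.1 v, by rw [mem_value, single_eq_of_mem_corner hκ hE]; exact m.1.2⟩
  map_add' _ _ := rfl
  map_smul' k m := Subtype.ext <| by
    refine (congrFun (single_smul (hκ k) m.1.1) v).trans ?_
    rw [Pi.single_eq_same, hE]
    rfl
  invFun e := ⟨⟨Pi.single v e.1, e.2⟩, Subtype.ext <| (single_smul (hκ 1) _).trans <| by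
    change Pi.single v (κ 1 • (Pi.single v e.1 : ν → E) v) = (Pi.single v e.1 : ν → E)
    rw [Pi.single_eq_same, hE, one_smul]⟩
  left_inv m := Subtype.ext <| Subtype.ext <| single_eq_of_mem_corner hκ hE m
  right_inv e := Subtype.ext <| Pi.single_eq_same (M := fun _ ↦ E) v e.1

end Value

end Tiling

namespace RowTiling

section Matrix

variable {ι : Type} [DecidableEq ι] {G : Type u} [DivisionRing G] (r : ι)

/-- The matrix whose row of index `r` is `w` and whose other rows are zero. -/
def rowMatrix : (ι → G) →+ Matrix ι ι G where
  toFun w := .of (Pi.single r w)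
  map_zero' := by rw [Pi.single_zero, Matrix.of_zero]
  map_add' v w := by rw [Pi.single_add, Matrix.of_add_of]

theorem rowMatrix_injective : Function.Injective (rowMatrix (G := G) r) :=
  Matrix.of.injective.comp (Pi.single_injective r)

theorem rowMatrix_self (w : ι → G) : rowMatrix r w r = w :=
  Pi.single_eq_same (M := fun _ ↦ ι → G) r w

variable [Fintype ι]

/-- The (non-unital) embedding of `G` into `Mₙ(G)` at the diagonal entry of index `r`. -/
def diagEntry : G →ₙ+* Matrix ι ι G where
  __ := Matrix.singleAddMonoidHom r r
  map_mul' _ _ := (Matrix.single_mul_single_same _ _ _ _ _).symm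

theorem diagEntry_apply (g : G) : (diagEntry r g : Matrix ι ι G) = Matrix.single r r g := rfl

theorem diagEntry_mul (g : G) (x : Matrix ι ι G) : diagEntry r g * x = rowMatrix r (g • x r) := by
  ext i j
  by_cases hi : i = r
  · subst hi
    simp [diagEntry_apply, rowMatrix]
  · simp [diagEntry_apply, rowMatrix, hi]

theorem diagEntry_one_mul_eq_iff {x : Matrix ι ι G} :
    diagEntry r 1 * x = x ↔ ∃ w, rowMatrix r w = x := by
  rw [diagEntry_mul, one_smul]
  exact ⟨fun h ↦ ⟨_, h⟩, fun ⟨w, h⟩ ↦ by rw [← h, rowMatrix_self]⟩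

theorem diagEntry_one_mul_mul_eq_iff {x : Matrix ι ι G} :
    diagEntry r 1 * x = x ∧ x * diagEntry r 1 = x ↔ ∃ g, diagEntry r g = x := by
  refine ⟨fun ⟨hl, hr⟩ ↦ ⟨x r r, ?_⟩, ?_⟩
  · rw [← hr, ← hl, diagEntry_apply, diagEntry_apply, Matrix.single_mul_mul_single]
    simp
  · rintro ⟨g, rfl⟩
    rw [← map_mul, ← map_mul, one_mul, mul_one, and_self]

theorem sum_single_mul_diagEntry_mul_single :
    ∑ i, Matrix.single i r (1 : G) * diagEntry r 1 * Matrix.single r i 1 = 1 := by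
  simp [diagEntry_apply, Matrix.sum_single_eq_diagonal]

end Matrix

/-- The objects of the tilings used to prescribe a row of a matrix: `q` stands for `F`, while `y`
and `p` stand for `G`. -/
inductive Obj
  | q | y | p
  deriving DecidableEq

open Obj

instance : Fintype Obj := ⟨{q, y, p}, fun x ↦ by cases x <;> decide⟩

variable {ι : Type} [Fintype ι] [DecidableEq ι] {F G : Type u} [DivisionRing F] [DivisionRing G]
  (φ : F →+* Matrix ι ι G) (iso : Bool) (r : ι)

/-- The tiling of `Mₙ(G)` with `hom q q = φ(F)` in which `q` maps to `y` and `y` maps to `p`. If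
`iso` is true then `y` and `p` are isomorphic. -/
def tiling : Tiling Obj (Matrix ι ι G) where
  hom
    | q, q => φ.range.toAddSubgroup
    | y, q | p, q => ⊥
    | p, y => if iso then ⊤ else ⊥
    | _, _ => ⊤
  one_mem
    | q => one_mem φ.range
    | y | p => trivial
  mul_mem {s t u x z} hx hz := by
    cases s <;> cases t <;> cases u <;> cases iso <;>
      first | exact φ.range.mul_mem hz hx | simp_all [AddSubgroup.mem_bot]

variable {φ} in
theorem tiling_le (s t : Obj) : (tiling φ false).hom s t ≤ (tiling φ true).hom s t := by
  cases s <;> cases t <;> simp [tiling]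

/-- The inclusion of the category ring in which `p` does not map to `y`. -/
abbrev incl : (tiling φ false).ring →+* (tiling φ true).ring := Tiling.inclusion tiling_le

/-- The scalars at `q`. -/
abbrev scalarQ : F →ₙ+* (tiling φ iso).ring :=
  Tiling.scalar _ q φ fun a ↦ ⟨a, rfl⟩

/-- The scalars at `y`. -/
abbrev scalarY : G →ₙ+* (tiling φ iso).ring :=
  Tiling.scalar _ y (diagEntry r) fun _ ↦ trivial

/-- The scalars at `p`. -/
abbrev scalarP : G →ₙ+* (tiling φ iso).ring :=
  Tiling.scalar _ p (diagEntry r) fun _ ↦ trivial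

/-- The module represented by `q`. -/
abbrev spanQ : Submodule (tiling φ iso).ring (tiling φ iso).ring :=
  Submodule.span _ {scalarQ φ iso 1}

/-- The module represented by `p`. -/
abbrev spanP : Submodule (tiling φ iso).ring (tiling φ iso).ring :=
  Submodule.span _ {scalarP φ iso r 1}

/-- The rank function for the object that represents `G`. -/
noncomputable def rank : RankFunction (tiling φ false).ring :=
  .dim (scalarP φ false r) +
    ((Fintype.card ι - 1 : ℤ) • .dim (scalarY φ false r) +
      (-(Fintype.card ι * (Fintype.card ι - 1)) : ℤ) • .dim (scalarQ φ false))

/-- The rank function for the object that represents `F`. -/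
noncomputable def rank' : RankFunction (tiling φ true).ring :=
  .dim (scalarY φ true r) + (-(Fintype.card ι - 1) : ℤ) • .dim (scalarQ φ true)

theorem single_one_mem {I : TwoSidedIdeal (tiling φ iso).ring} {v : Obj}
    (hmem : ∀ x, x ∈ (tiling φ iso).hom v v)
    (h : Tiling.single (hmem (diagEntry r 1)) ∈ I) :
    Tiling.single ((tiling φ iso).one_mem v) ∈ I := by
  have hsum : Tiling.single ((tiling φ iso).one_mem v) =
      ∑ i, Tiling.single (hmem (Matrix.single i r 1)) * Tiling.single (hmem (diagEntry r 1)) *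
        Tiling.single (hmem (Matrix.single r i 1)) := by
    simp_rw [Tiling.single_mul_single_eq _ _ (hmem _) rfl, Tiling.sum_single,
      sum_single_mul_diagEntry_mul_single]
  rw [hsum]
  exact sum_mem fun i _ ↦ I.mul_mem_right _ _ (I.mul_mem_left _ _ h)

theorem span_idempotents :
    TwoSidedIdeal.span {scalarQ φ iso 1, scalarY φ iso r 1, scalarP φ iso r 1} = ⊤ := by
  rw [← TwoSidedIdeal.one_mem_iff, ← Tiling.proj_univ]
  refine sum_mem fun v _ ↦ ?_
  cases v
  · have h : scalarQ φ iso 1 = Tiling.single ((tiling φ iso).one_mem q) :=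
      Subtype.ext (congrArg (Matrix.single q q) (map_one φ))
    exact h ▸ TwoSidedIdeal.subset_span (Or.inl rfl)
  · exact single_one_mem φ iso r (fun _ ↦ trivial) (TwoSidedIdeal.subset_span (Or.inr (Or.inl rfl)))
  · exact single_one_mem φ iso r (fun _ ↦ trivial) (TwoSidedIdeal.subset_span (Or.inr (Or.inr rfl)))

theorem isNoetherian {M : Type u} [AddCommGroup M] [Module (tiling φ iso).ring M]
    [Module.Finite F (corner (scalarQ φ iso) M)] [Module.Finite G (corner (scalarY φ iso r) M)]
    [Module.Finite G (corner (scalarP φ iso r) M)] : IsNoetherian (tiling φ iso).ring M := by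
  refine isNoetherian_of_span_eq_top (Set.toFinite _) (span_idempotents φ iso r) ?_
  rintro ε (rfl | rfl | rfl) <;> exact exists_fg_le_of_finite_corner

theorem subsingleton_of_finrank_eq_zero {M : Type u} [AddCommGroup M]
    [Module (tiling φ iso).ring M] [Module.Finite F (corner (scalarQ φ iso) M)]
    [Module.Finite G (corner (scalarY φ iso r) M)] [Module.Finite G (corner (scalarP φ iso r) M)]
    (hq : Module.finrank F (corner (scalarQ φ iso) M) = 0)
    (hy : Module.finrank G (corner (scalarY φ iso r) M) = 0)
    (hp : Module.finrank G (corner (scalarP φ iso r) M) = 0) : Subsingleton M := by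
  refine subsingleton_of_span_eq_top (span_idempotents φ iso r) ?_
  rintro ε (rfl | rfl | rfl) <;> exact smul_eq_zero_of_finrank_corner_eq_zero ‹_›

section Representables

theorem subsingleton_scalarQ_span_scalarP :
    Subsingleton (corner (scalarQ φ iso) (spanP φ iso r)) :=
  Tiling.subsingleton_corner_span rfl

theorem subsingleton_scalarY_span_scalarP :
    Subsingleton (corner (scalarY φ false r) (spanP φ false r)) :=
  Tiling.subsingleton_corner_span rfl

/-- The space of morphisms `p ⟶ p`. -/
noncomputable def cornerPSpanPEquiv : G ≃ₗ[G] corner (scalarP φ iso r) (spanP φ iso r) :=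
  Tiling.cornerSpanEquiv (diagEntry r : G →ₙ+* Matrix ι ι G)
    (fun g h hgh ↦ by simpa [diagEntry_apply] using congrFun₂ hgh r r) (map_mul (diagEntry r))
    fun x ↦ (diagEntry_one_mul_mul_eq_iff r).symm.trans (true_and _).symm.to_iff

/-- The space of morphisms `q ⟶ q`. -/
noncomputable def cornerQSpanQEquiv : F ≃ₗ[F] corner (scalarQ φ iso) (spanQ φ iso) :=
  have : Nonempty ι := ⟨r⟩
  Tiling.cornerSpanEquiv φ.toAddMonoidHom φ.injective (map_mul φ) fun x ↦
    ⟨fun h ↦ ⟨h, (congrArg (· * x) (map_one φ)).trans (one_mul x),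
      (congrArg (x * ·) (map_one φ)).trans (mul_one x)⟩, fun h ↦ h.1⟩

/-- The space of morphisms `q ⟶ y`. -/
noncomputable def cornerYSpanQEquiv :
    (ι → G) ≃ₗ[G] corner (scalarY φ iso r) (spanQ φ iso) :=
  Tiling.cornerSpanEquiv (rowMatrix r) (rowMatrix_injective r)
    (fun g w ↦ by rw [diagEntry_mul, rowMatrix_self]) fun x ↦ by
      rw [← diagEntry_one_mul_eq_iff]
      exact ⟨fun h ↦ ⟨trivial, h, (congrArg (x * ·) (map_one φ)).trans (mul_one x)⟩, fun h ↦ h.2.1⟩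

end Representables

theorem finrank_p_span_p :
    Module.finrank G (corner (scalarP φ iso r) (spanP φ iso r)) = 1 :=
  (cornerPSpanPEquiv φ iso r).finrank_eq.symm.trans (Module.finrank_self G)

theorem finrank_q_span_p :
    Module.finrank F (corner (scalarQ φ iso) (spanP φ iso r)) = 0 :=
  have := subsingleton_scalarQ_span_scalarP φ iso r
  Module.finrank_zero_of_subsingleton

theorem finrank_q_span_q [Nonempty ι] :
    Module.finrank F (corner (scalarQ φ iso) (spanQ φ iso)) = 1 :=
  (cornerQSpanQEquiv φ iso (Classical.arbitrary ι)).finrank_eq.symm.trans (Module.finrank_self F)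

theorem finrank_y_span_q :
    Module.finrank G (corner (scalarY φ iso r) (spanQ φ iso)) = Fintype.card ι :=
  (cornerYSpanQEquiv φ iso r).finrank_eq.symm.trans (Module.finrank_fintype_fun_eq_card G)

section Modules

open Module

theorem rank_eq (M : Type u) [AddCommGroup M] [Module (tiling φ false).ring M] :
    (rank φ r).rank M = finrank G (corner (scalarP φ false r) M) +
      ((Fintype.card ι - 1) * finrank G (corner (scalarY φ false r) M) +
        -(Fintype.card ι * (Fintype.card ι - 1)) * finrank F (corner (scalarQ φ false) M)) := rfl

theorem good_rank_iff {M : Type u} [AddCommGroup M] [Module (tiling φ false).ring M] :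
    (rank φ r).Good M ↔ Module.Finite F (corner (scalarQ φ false) M) ∧
      Module.Finite G (corner (scalarY φ false r) M) ∧
        Module.Finite G (corner (scalarP φ false r) M) := by
  refine ⟨fun ⟨⟨_, hp⟩, ⟨_, hy⟩, _, hq⟩ ↦ ⟨hq, hy, hp⟩, fun ⟨_, _, _⟩ ↦ ?_⟩
  have := isNoetherian φ false r (M := M)
  exact ⟨⟨‹_›, ‹_›⟩, ⟨‹_›, ‹_›⟩, ‹_›, ‹_›⟩

variable (M : Type u) [AddCommGroup M] [Module (tiling φ true).ring M]

/-- The objects `y` and `p` are isomorphic. -/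
def cornerYEquivCornerP : corner (scalarY φ true r) M ≃ₗ[G] corner (scalarP φ true r) M :=
  Tiling.cornerEquiv (T := tiling φ true) trivial trivial

theorem rank'_eq : (rank' φ r).rank M = finrank G (corner (scalarY φ true r) M) +
    -(Fintype.card ι - 1) * finrank F (corner (scalarQ φ true) M) := rfl

variable {M}

theorem good_rank'_iff : (rank' φ r).Good M ↔ Module.Finite F (corner (scalarQ φ true) M) ∧
    Module.Finite G (corner (scalarY φ true r) M) := by
  refine ⟨fun ⟨⟨_, hy⟩, _, hq⟩ ↦ ⟨hq, hy⟩, fun ⟨_, _⟩ ↦ ?_⟩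
  have : Module.Finite G (corner (scalarP φ true r) M) := .equiv (cornerYEquivCornerP φ r M)
  have := isNoetherian φ true r (M := M)
  exact ⟨⟨‹_›, ‹_›⟩, ‹_›, ‹_›⟩

theorem good_restrict (h : (rank' φ r).Good M) : (rank φ r).Good (Restrict (incl φ) M) := by
  obtain ⟨hq, hy⟩ := (good_rank'_iff φ r).1 h
  exact (good_rank_iff φ r).2 ⟨hq, hy, .equiv (cornerYEquivCornerP φ r M)⟩

theorem rank_restrict :
    (rank φ r).rank (Restrict (incl φ) M) = Fintype.card ι * (rank' φ r).rank M := by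
  have hp : finrank G (corner (scalarP φ false r) (Restrict (incl φ) M)) =
      finrank G (corner (scalarY φ true r) M) := (cornerYEquivCornerP φ r M).finrank_eq.symm
  have hy : finrank G (corner (scalarY φ false r) (Restrict (incl φ) M)) =
      finrank G (corner (scalarY φ true r) M) := rfl
  have hq : finrank F (corner (scalarQ φ false) (Restrict (incl φ) M)) =
      finrank F (corner (scalarQ φ true) M) := rfl
  rw [rank_eq, rank'_eq, hp, hy, hq]
  ring

theorem finrank_q_core (W : Submodule (tiling φ false).ring (Restrict (incl φ) M)) :
    finrank F (corner (scalarQ φ true) (core (incl φ) ((tiling φ false).proj .univ) W)) =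
      finrank F (corner (scalarQ φ false) W) :=
  Tiling.finrank_corner_core tiling_le (Finset.mem_univ q)
    (fun t _ ↦ by cases t <;> simp [tiling]) W

theorem finrank_y_core (W : Submodule (tiling φ false).ring (Restrict (incl φ) M)) :
    finrank G (corner (scalarY φ true r) (core (incl φ) ((tiling φ false).proj .univ) W)) =
      finrank G (corner (scalarY φ false r) W) :=
  Tiling.finrank_corner_core tiling_le (Finset.mem_univ y)
    (fun t _ ↦ by cases t <;> simp [tiling]) W

theorem card_mul_rank'_core_le (W : Submodule (tiling φ false).ring (Restrict (incl φ) M))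
    (h : (rank φ r).Good W) :
    Fintype.card ι * (rank' φ r).rank (core (incl φ) ((tiling φ false).proj .univ) W) ≤
      (rank φ r).rank W := by
  have hle : finrank G (corner (scalarY φ false r) W) ≤ finrank G (corner (scalarP φ false r) W) :=
    have := ((good_rank_iff φ r).1 h).2.2
    Tiling.finrank_corner_le (T := tiling φ false) (T' := tiling φ true) (s := y) (t := p)
      trivial trivial W
  rw [rank_eq, rank'_eq, finrank_q_core, finrank_y_core]
  linarith

theorem preservesDense : RankFunction.PreservesDense (incl φ) (rank φ r) (rank' φ r) := by
  intro M N _ _ _ _ j hj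
  have hN := good_restrict φ r hj.good
  refine ⟨hN, hj.injective, ?_, fun W hW ↦ ?_⟩
  · rw [rank_restrict, rank_restrict, hj.rank_eq]
  · rw [rank_restrict]
    have := hj.le_rank (core (incl φ) ((tiling φ false).proj .univ) W) (range_le_core hW)
    have := card_mul_rank'_core_le φ r W (hN.submodule W)
    nlinarith

end Modules

section Stable

open Module

variable {φ r} in
theorem one_le_rank' {M : Type u} [AddCommGroup M] [Module (tiling φ true).ring M] [Nontrivial M]
    (h : (rank' φ r).Good M) (hq : finrank F (corner (scalarQ φ true) M) = 0) :
    1 ≤ (rank' φ r).rank M := by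
  obtain ⟨_, _⟩ := (good_rank'_iff φ r).1 h
  have : Module.Finite G (corner (scalarP φ true r) M) := .equiv (cornerYEquivCornerP φ r M)
  have hy : finrank G (corner (scalarY φ true r) M) ≠ 0 := fun hy ↦
    not_subsingleton M <| subsingleton_of_finrank_eq_zero φ true r hq hy <|
      (cornerYEquivCornerP φ r M).finrank_eq.symm.trans hy
  rw [rank'_eq, hq]
  omega

theorem isStable_span_q : (rank' φ r).IsStable (spanQ φ true) := by
  have : Nonempty ι := ⟨r⟩
  have hgood : (rank' φ r).Good (spanQ φ true) :=
    (good_rank'_iff φ r).2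
      ⟨.equiv (cornerQSpanQEquiv φ true r), .equiv (cornerYSpanQEquiv φ true r)⟩
  have hrank : (rank' φ r).rank (spanQ φ true) = 1 := by
    rw [rank'_eq, finrank_y_span_q, finrank_q_span_q]
    ring
  refine ⟨hgood, hrank, fun W hW ↦ ?_⟩
  have := (Submodule.nontrivial_iff_ne_bot).2 hW
  by_cases hq : finrank F (corner (scalarQ φ true) W) = 0
  · exact one_le_rank' (hgood.submodule W) hq
  · rw [eq_top_of_finrank_corner_span_eq_one (finrank_q_span_q φ true) hq,
      RankFunction.rank_top, hrank]

theorem isStable_span_p' : (rank' φ r).IsStable (spanP φ true r) := by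
  let e := cornerYEquivCornerP φ r (spanP φ true r)
  have := subsingleton_scalarQ_span_scalarP φ true r
  have hgood : (rank' φ r).Good (spanP φ true r) :=
    (good_rank'_iff φ r).2 ⟨inferInstance, .equiv ((cornerPSpanPEquiv φ true r).trans e.symm)⟩
  refine ⟨hgood, ?_, fun W hW ↦ ?_⟩
  · rw [rank'_eq, e.finrank_eq, finrank_p_span_p, finrank_q_span_p]
    ring
  · have := (Submodule.nontrivial_iff_ne_bot).2 hW
    have := (corner.map_injective (s := scalarQ φ true) W.subtype_injective).subsingleton
    exact one_le_rank' (hgood.submodule W) finrank_zero_of_subsingleton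

theorem rank_eq_finrank_p {M : Type u} [AddCommGroup M] [Module (tiling φ false).ring M]
    [Subsingleton (corner (scalarQ φ false) M)] [Subsingleton (corner (scalarY φ false r) M)] :
    (rank φ r).rank M = finrank G (corner (scalarP φ false r) M) := by
  rw [rank_eq, finrank_zero_of_subsingleton (M := corner (scalarQ φ false) M),
    finrank_zero_of_subsingleton (M := corner (scalarY φ false r) M)]
  ring

theorem isStable_span_p : (rank φ r).IsStable (spanP φ false r) := by
  have := subsingleton_scalarQ_span_scalarP φ false r
  have := subsingleton_scalarY_span_scalarP φ r
  have hgood : (rank φ r).Good (spanP φ false r) := (good_rank_iff φ r).2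
    ⟨inferInstance, inferInstance, .equiv (cornerPSpanPEquiv φ false r)⟩
  refine ⟨hgood, by rw [rank_eq_finrank_p, finrank_p_span_p, Nat.cast_one], fun W hW ↦ ?_⟩
  have hq := (corner.map_injective (s := scalarQ φ false) W.subtype_injective).subsingleton
  have hy := (corner.map_injective (s := scalarY φ false r) W.subtype_injective).subsingleton
  obtain ⟨_, _, _⟩ := (good_rank_iff φ r).1 (hgood.submodule W)
  have := (Submodule.nontrivial_iff_ne_bot).2 hW
  have hp : finrank G (corner (scalarP φ false r) W) ≠ 0 := fun hp ↦
    not_subsingleton W <| subsingleton_of_finrank_eq_zero φ false r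
      (finrank_zero_of_subsingleton) (finrank_zero_of_subsingleton) hp
  rw [rank_eq_finrank_p]
  omega

end Stable

section Presentation

open Module

/-- A matrix as a morphism `q ⟶ p`. -/
def toP (x : Matrix ι ι G) : (tiling φ true).ring :=
  Tiling.single (T := tiling φ true) (s := q) (t := p) (x := x) trivial

theorem toP_sum (x : ι → Matrix ι ι G) : toP φ (∑ k, x k) = ∑ k, toP φ (x k) :=
  (Tiling.sum_single (T := tiling φ true) (s := q) (t := p) (z := x) fun _ ↦ trivial).symm

theorem scalarP_mul_toP (x : Matrix ι ι G) (g : G) :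
    scalarP φ true r g * toP φ x = toP φ (diagEntry r g * x) :=
  Subtype.ext <| Matrix.single_mul_single_same _ _ _ _ _

theorem toP_mul_scalarQ (x : Matrix ι ι G) (a : F) :
    toP φ x * scalarQ φ true a = toP φ (x * φ a) :=
  Subtype.ext <| Matrix.single_mul_single_same _ _ _ _ _

/-- The basis of the space of morphisms `q ⟶ p`. -/
def basisElt (j : ι) : spanQ φ true :=
  ⟨toP φ (Matrix.single r j 1),
    Tiling.single_mem_span _ <| (congrArg _ (map_one φ)).trans (mul_one _)⟩

theorem scalarP_one_smul_basisElt (j : ι) :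
    scalarP φ true r 1 • basisElt φ r j = basisElt φ r j := by
  refine Subtype.ext ((scalarP_mul_toP φ r _ 1).trans ?_)
  simp only [diagEntry_apply, Matrix.single_mul_single_same, one_mul, basisElt]

theorem single_mul_eq_sum (j : ι) (x : Matrix ι ι G) :
    Matrix.single r j 1 * x = ∑ k, diagEntry r (x j k) * Matrix.single r k 1 := by
  conv_lhs => rw [Matrix.matrix_eq_sum_single x, Finset.mul_sum]
  rw [Finset.sum_eq_single j (fun k _ hk ↦ ?_) (by simp), Finset.mul_sum]
  · simp only [diagEntry_apply, Matrix.single_mul_single_same, mul_one, one_mul]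
  · simp only [Finset.mul_sum, Matrix.single_mul_single_of_ne _ _ _ _ hk.symm,
      Finset.sum_const_zero]

theorem basisElt_mul_scalarQ (j : ι) (a : F) : (basisElt φ r j : (tiling φ true).ring) *
    scalarQ φ true a = ∑ k, scalarP φ true r (φ a j k) * basisElt φ r k := by
  simp only [basisElt, scalarP_mul_toP, toP_mul_scalarQ, single_mul_eq_sum, toP_sum]

/-- The embedding of the `n`-th power of the object that represents `G` into the object that
represents `F`. -/
def embedding : (ι → spanP φ false r) →ₗ[(tiling φ false).ring] Restrict (incl φ) (spanQ φ true) :=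
  rowHom (scalarP φ false r 1) fun j ↦ .of _ _ (basisElt φ r j)

theorem embedding_injective : Function.Injective (embedding φ r) := by
  refine (injective_iff_map_eq_zero _).2 fun x hx ↦ funext fun k ↦ Subtype.ext <| Subtype.ext ?_
  have hterm (j : ι) : (x j).1.1 * (basisElt φ r j).1.1 *
      Matrix.single q p (Matrix.single k r (1 : G)) = if j = k then (x k).1.1 else 0 := by
    refine (mul_assoc _ _ _).trans <|
      (congrArg _ (Matrix.single_mul_single_same _ _ _ _ _)).trans ?_
    split_ifs with h
    · subst h
      rw [Matrix.single_mul_single_same, one_mul]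
      exact congrArg Subtype.val <|
        mul_eq_of_mem_span_singleton (map_one_mul_map_one (scalarP φ false r)) (x j).2
    · rw [Matrix.single_mul_single_of_ne _ _ _ _ h, Matrix.single_zero, mul_zero]
  let val : spanQ φ true →+ Matrix Obj Obj (Matrix ι ι G) :=
    (tiling φ true).ring.subtype.toAddMonoidHom.comp (spanQ φ true).subtype.toAddMonoidHom
  have hsum : ∑ j, (x j).1.1 * (basisElt φ r j).1.1 = 0 :=
    (map_sum val _ _).symm.trans (congrArg val hx)
  have := congrArg (· * Matrix.single q p (Matrix.single k r (1 : G))) hsum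
  simpa [Finset.sum_mul, hterm] using this

theorem card_le_rank {W : Submodule (tiling φ false).ring (Restrict (incl φ) (spanQ φ true))}
    (hW : LinearMap.range (embedding φ r) ≤ W) : Fintype.card ι ≤ (rank φ r).rank W := by
  have hgood := (good_restrict φ r (isStable_span_q φ r).good).submodule W
  obtain hcore | hcore := eq_or_ne (core (incl φ) ((tiling φ false).proj .univ) W) ⊥
  · have hq := finrank_q_core φ W
    have hy := finrank_y_core φ r W
    have := (good_rank_iff φ r).1 hgood |>.2.2
    have hp : finrank G (corner (scalarP φ false r) (ι → spanP φ false r)) ≤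
        finrank G (corner (scalarP φ false r) W) :=
      LinearMap.finrank_le_finrank_of_injective <| corner.map_injective
        (f := (embedding φ r).codRestrict W fun x ↦ hW ⟨x, rfl⟩)
        fun x x' h ↦ embedding_injective φ r (congrArg Subtype.val h)
    have hpow := (RankFunction.good_pi_and_rank_pi ι (isStable_span_p φ r).good.1).2
    have hpn : finrank G (corner (scalarP φ false r) (ι → spanP φ false r)) = Fintype.card ι := by
      refine Nat.cast_injective (R := ℤ) (hpow.trans ?_)
      simp only [RankFunction.dim, finrank_p_span_p, Nat.cast_one, mul_one]
    rw [hcore, finrank_zero_of_subsingleton] at hq hy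
    rw [rank_eq, ← hq, ← hy]
    omega
  · have h1 := (isStable_span_q φ r).one_le_rank _ hcore
    have h2 := card_mul_rank'_core_le φ r W hgood
    nlinarith

/-- The presentation of `φ` by the rows of index `r`. -/
def presentation : Presentation φ (incl φ) (rank φ r) (rank' φ r) where
  s := scalarP φ false r
  t := scalarQ φ true
  β := basisElt φ r
  s_one_mul := scalarP_one_smul_basisElt φ r
  mul_t := basisElt_mul_scalarQ φ r
  stable := isStable_span_p φ r
  stable' := isStable_span_q φ r
  preservesDense := preservesDense φ r
  isDense :=
    { good := good_restrict φ r (isStable_span_q φ r).good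
      injective := embedding_injective φ r
      rank_eq := by
        rw [rank_restrict, (isStable_span_q φ r).rank_eq_one,
          (RankFunction.good_pi_and_rank_pi ι (isStable_span_p φ r).good).2,
          (isStable_span_p φ r).rank_eq_one]
      le_rank W hW := by
        rw [(RankFunction.good_pi_and_rank_pi ι (isStable_span_p φ r).good).2,
          (isStable_span_p φ r).rank_eq_one, mul_one]
        exact card_le_rank φ r hW }

theorem exists_extension_φ'_row_eq :
    ∃ E : Extension φ, ∀ w : ι → G, ∃ x, ∀ j, E.φ' x r j = E.ιG (w j) := by
  obtain ⟨V, _, _, i, hi⟩ := RankFunction.exists_isEnvelope (isStable_span_p φ r)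
  obtain ⟨W, _, _, i', hi'⟩ := RankFunction.exists_isEnvelope (isStable_span_q φ r)
  exact ⟨_, (presentation φ r).exists_extension_φ'_row_eq hi hi' (isStable_span_p' φ r) r⟩

end Presentation

section Tower

/-- The tower of extensions obtained by adjoining again and again elements of `F` with prescribed
rows of index `r`. -/
noncomputable def tower : ℕ → Extension φ
  | 0 => .refl φ
  | k + 1 => (tower k).trans (exists_extension_φ'_row_eq (tower k).φ' r).choose

/-- The embedding of the extension of `F` at a stage of the tower into the next one. -/
noncomputable abbrev towerF (k : ℕ) : (tower φ r k).F' →+* (tower φ r (k + 1)).F' :=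
  (exists_extension_φ'_row_eq (tower φ r k).φ' r).choose.ιF

/-- The embedding of the extension of `G` at a stage of the tower into the next one. -/
noncomputable abbrev towerG (k : ℕ) : (tower φ r k).G' →+* (tower φ r (k + 1)).G' :=
  (exists_extension_φ'_row_eq (tower φ r k).φ' r).choose.ιG

theorem φ'_towerF (k : ℕ) (x : (tower φ r k).F') :
    (tower φ r (k + 1)).φ' (towerF φ r k x) = ((tower φ r k).φ' x).map (towerG φ r k) :=
  Extension.compat _ x

theorem exists_tower_φ'_row_eq (k : ℕ) (w : ι → (tower φ r k).G') :
    ∃ x, ∀ j, (tower φ r (k + 1)).φ' x r j = towerG φ r k (w j) :=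
  (exists_extension_φ'_row_eq (tower φ r k).φ' r).choose_spec w

/-- The union of the tower of extensions. -/
noncomputable def limitExtension : Extension φ :=
  let ofF := DirectLimit.Ring.of (fun k ↦ (tower φ r k).F') (transition (towerF φ r))
  let ofG := DirectLimit.Ring.of (fun k ↦ (tower φ r k).G') (transition (towerG φ r))
  { F' := DirectLimit _ (transition (towerF φ r))
    G' := DirectLimit _ (transition (towerG φ r))
    ιF := ofF 0
    ιG := ofG 0
    φ' := DirectLimit.Ring.lift _ _ _ (fun k ↦ (ofG k).mapMatrix.comp (tower φ r k).φ') <| by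
      refine fun i j hij ↦ apply_transition (g := fun k x ↦
        (ofG k).mapMatrix ((tower φ r k).φ' x)) (fun k x ↦ ?_) hij
      rw [φ'_towerF]
      exact Matrix.ext fun _ _ ↦ directLimit_of_apply _ _
    compat _ := rfl }

theorem φ'_limitExtension_row_bijective :
    Function.Bijective fun x ↦ (limitExtension φ r).φ' x r := by
  refine ⟨Extension.φ'_row_injective _ r,
    fun (w : ι → DirectLimit (fun k ↦ (tower φ r k).G') (transition (towerG φ r))) ↦ ?_⟩
  obtain ⟨k, v, hv⟩ := exists_directLimit_of_eq w
  obtain ⟨x, hx⟩ := exists_tower_φ'_row_eq φ r k v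
  refine ⟨DirectLimit.Ring.of _ (transition (towerF φ r)) (k + 1) x, funext fun j ↦ ?_⟩
  exact (congrArg (DirectLimit.Ring.of _ (transition (towerG φ r)) (k + 1)) (hx j)).trans <|
    (directLimit_of_apply (f := towerG φ r) k (v j)).trans (hv j)

end Tower

end RowTiling

section Dimension

open Module

variable {G L : Type*} [DivisionRing G] [DivisionRing L] [Module G L]

variable (G) in
/-- The `G`-subspace of `L × L` spanned by `(1, 0)`, `(0, 1)` and `(z, -y)`. -/
def pairLattice (y z : L) : Submodule G (L × L) :=
  .span G (Set.range ![(1, 0), (0, 1), (z, -y)])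

variable {y z : L}

theorem mem_pairLattice (i : Fin 3) : ![(1, 0), (0, 1), (z, -y)] i ∈ pairLattice G y z :=
  Submodule.subset_span ⟨i, rfl⟩

theorem finrank_pairLattice (hy : ∀ g : G, y ≠ g • 1) : finrank G (pairLattice G y z) = 3 := by
  refine (finrank_span_eq_card (Fintype.linearIndependent_iff.2 fun g hg ↦ ?_)).trans
    (Fintype.card_fin 3)
  rw [Fin.sum_univ_three] at hg
  have h0 : g 0 • 1 + g 2 • z = 0 := by simpa using congrArg Prod.fst hg
  have h1 : g 1 • 1 = g 2 • y := by simpa [add_neg_eq_zero] using congrArg Prod.snd hg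
  have hg2 : g 2 = 0 := by
    by_contra hg2
    exact hy ((g 2)⁻¹ * g 1) (by rw [mul_smul, h1, inv_smul_smul₀ hg2])
  rw [hg2, zero_smul, add_zero, smul_eq_zero_iff_left one_ne_zero] at h0
  rw [hg2, zero_smul, smul_eq_zero_iff_left one_ne_zero] at h1
  exact fun i ↦ by fin_cases i <;> assumption

variable [IsScalarTower G L L]

theorem two_le_finrank_map_pairLattice [Module.Finite G L] (hy : ∀ g : G, y ≠ g • 1)
    (hz : ∀ c d : G, z ≠ y * (c • 1) + d • 1) {ℓ : L × L →ₗ[L] L} (hℓ : ℓ ≠ 0) :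
    2 ≤ finrank G ((pairLattice G y z).map (ℓ.restrictScalars G)) := by
  have hℓyz : ℓ (z, -y) = z * ℓ (1, 0) - y * ℓ (0, 1) := by
    rw [sub_eq_add_neg, ← neg_mul, ← smul_eq_mul, ← smul_eq_mul, ← map_smul, ← map_smul, ← map_add]
    simp
  by_contra! hlt
  obtain ⟨v, hv⟩ := finrank_le_one_iff.1 (Nat.le_of_lt_succ hlt)
  have hmul (i : Fin 3) : ∃ c : G, (c • 1) * v.1 = ℓ (![(1, 0), (0, 1), (z, -y)] i) := by
    obtain ⟨c, hc⟩ := hv ⟨_, Submodule.mem_map_of_mem (mem_pairLattice i)⟩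
    exact ⟨c, (smul_one_mul c v.1).trans (congrArg Subtype.val hc)⟩
  obtain ⟨c₀, h₀ : (c₀ • 1) * v.1 = ℓ (1, 0)⟩ := hmul 0
  obtain ⟨c₁, h₁ : (c₁ • 1) * v.1 = ℓ (0, 1)⟩ := hmul 1
  obtain ⟨c₂, h₂ : (c₂ • 1) * v.1 = ℓ (z, -y)⟩ := hmul 2
  have hne : ¬ (ℓ (1, 0) = 0 ∧ ℓ (0, 1) = 0) := fun h ↦
    hℓ (LinearMap.prod_ext (LinearMap.ext_ring h.1) (LinearMap.ext_ring h.2))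
  have hv0 : v.1 ≠ 0 := fun h ↦ hne (by rw [← h₀, ← h₁, h, mul_zero, mul_zero]; exact ⟨rfl, rfl⟩)
  have hrel : z * (c₀ • 1) = y * (c₁ • 1) + c₂ • 1 := by
    refine mul_right_cancel₀ hv0 ?_
    rw [add_mul, h₂, hℓyz, ← h₀, ← h₁, mul_assoc, mul_assoc, add_sub_cancel]
  have hinv {c : G} (hc : c ≠ 0) (x : L) : x * (c • 1) * (c⁻¹ • 1) = x := by
    rw [mul_assoc, smul_one_mul, smul_inv_smul₀ hc, mul_one]
  obtain rfl | hc₀ := eq_or_ne c₀ 0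
  · have hc₁ : c₁ ≠ 0 := by
      rintro rfl
      exact hne (by rw [← h₀, ← h₁, zero_smul, zero_mul]; exact ⟨rfl, rfl⟩)
    rw [zero_smul, mul_zero, eq_comm, add_eq_zero_iff_eq_neg] at hrel
    refine hy (-(c₂ * c₁⁻¹)) ?_
    rw [← hinv hc₁ y, hrel, neg_mul, smul_one_mul, smul_smul, neg_smul]
  · refine hz (c₁ * c₀⁻¹) (c₂ * c₀⁻¹) ?_
    rw [← hinv hc₀ z, hrel, add_mul, mul_assoc, smul_one_mul, smul_one_mul, smul_smul, smul_smul]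

theorem finrank_add_one_le_two_mul_finrank [Module.Finite G L] (hy : ∀ g : G, y ≠ g • 1)
    (hz : ∀ c d : G, z ≠ y * (c • 1) + d • 1) {Y : Submodule G (L × L)} {X : Submodule L (L × L)}
    (hY : Y ≠ ⊥) (hYD : Y ≤ pairLattice G y z) (hYX : ∀ e ∈ Y, e ∈ X) :
    finrank G Y + 1 ≤ 2 * finrank L X := by
  have hD := finrank_pairLattice (z := z) hy
  have hle := Submodule.finrank_mono hYD
  obtain ⟨e, he, he0⟩ := Y.exists_mem_ne_zero_of_ne_bot hY
  have hX0 : finrank L X ≠ 0 := fun h ↦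
    he0 (by simpa [Submodule.finrank_eq_zero.1 h] using hYX e he)
  obtain hX2 | hX2 := le_or_gt 2 (finrank L X)
  · omega
  have hXtop : X ≠ ⊤ := by
    rintro rfl
    simp at hX2
  obtain ⟨ℓ, hℓ, hXℓ⟩ := X.exists_le_ker_of_lt_top hXtop.lt_top
  have hmap := two_le_finrank_map_pairLattice hy hz hℓ
  have hsum := finrank_map_add_finrank_inf_ker (ℓ.restrictScalars G) (pairLattice G y z)
  have hinf : finrank G Y ≤ finrank G ↥(pairLattice G y z ⊓ LinearMap.ker (ℓ.restrictScalars G)) :=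
    Submodule.finrank_mono (le_inf hYD fun e he ↦ hXℓ (hYX e he))
  omega

end Dimension

namespace PairTiling

/-- The objects of the tilings used to prescribe a block of two rows. Those of the first tiling are
`y`, `x` and `q`, where `q` stands for `F`; the second one has also `y'`, `x'` and `p`, where `p`
stands for `G`. -/
inductive Obj
  | y | x | q | y' | x' | p
  deriving DecidableEq

open Obj Module

instance : Fintype Obj := ⟨{y, x, q, y', x', p}, fun v ↦ by cases v <;> decide⟩

/-- The size of the group of morphisms between two objects: zero, the image of `G`, or all of `L`.
If `iso` is true then `y'`, `x'` and `p` are isomorphic to `y`, `x` and `q`. -/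
def homSize (iso : Bool) : Obj → Obj → Fin 3
  | y, y | y, y' | y', y' => 1
  | y', y => if iso then 1 else 0
  | y', p | p, p => if iso then 2 else 1
  | y', x | y', q | x', x | x', q | x', p | p, q => if iso then 2 else 0
  | x, y | x, y' | x', y | x', y' => 0
  | q, y | q, y' | q, x | q, x' | p, y | p, y' | p, x | p, x' => 0
  | _, _ => 2

theorem homSize_self_ne_zero : ∀ iso v, homSize iso v v ≠ 0 := by
  decide

theorem homSize_comp : ∀ iso s t u, homSize iso s t = 0 ∨ homSize iso t u = 0 ∨
    homSize iso s u = 2 ∨ homSize iso s t = 1 ∧ homSize iso t u = 1 ∧ homSize iso s u = 1 := by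
  decide

theorem homSize_le : ∀ s t, homSize false s t = 0 ∨ homSize true s t = homSize false s t ∨
    homSize true s t = 2 := by
  decide

section Tiling

variable (G L : Type u) [DivisionRing G] [DivisionRing L] [Module G L] [IsScalarTower G L L]
  (iso : Bool)

/-- The subgroups zero, image of `G`, and all of `L`. -/
def homGroup : Fin 3 → AddSubgroup L
  | 0 => ⊥
  | 1 => (RingHom.smulOneHom : G →+* L).range.toAddSubgroup
  | 2 => ⊤

variable {G L} in
theorem smul_one_mem_homGroup (g : G) {k : Fin 3} (hk : k ≠ 0) : (g • 1 : L) ∈ homGroup G L k := by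
  match k with
  | 1 => exact ⟨g, rfl⟩
  | 2 => trivial

/-- The tiling of `L` with groups of morphisms prescribed by `homSize`. -/
def tiling : Tiling Obj L where
  hom s t := homGroup G L (homSize iso s t)
  one_mem v := by
    rw [← one_smul G (1 : L)]
    exact smul_one_mem_homGroup _ (homSize_self_ne_zero iso v)
  mul_mem {s t u a b} ha hb := by
    obtain h | h | h | ⟨hst, htu, hsu⟩ := homSize_comp iso s t u
    · rw [h] at ha
      obtain rfl := AddSubgroup.mem_bot.1 ha
      rw [mul_zero]
      exact zero_mem _
    · rw [h] at hb
      obtain rfl := AddSubgroup.mem_bot.1 hb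
      rw [zero_mul]
      exact zero_mem _
    · rw [h]
      trivial
    · rw [hst] at ha
      rw [htu] at hb
      rw [hsu]
      exact (RingHom.smulOneHom : G →+* L).range.mul_mem hb ha

variable {G L} in
theorem tiling_le (s t : Obj) : (tiling G L false).hom s t ≤ (tiling G L true).hom s t := by
  change homGroup G L _ ≤ homGroup G L _
  obtain h | h | h := homSize_le s t
  · rw [h]
    exact bot_le
  · rw [h]
  · rw [h]
    exact le_top

/-- The inclusion of the category rings. -/
abbrev incl : (tiling G L false).ring →+* (tiling G L true).ring := Tiling.inclusion tiling_le

/-- The scalars from `G`. -/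
abbrev scalarG (v : Obj) : G →ₙ+* (tiling G L iso).ring :=
  Tiling.scalar _ v (RingHom.smulOneHom : G →+* L) fun g ↦
    smul_one_mem_homGroup g (homSize_self_ne_zero iso v)

/-- The scalars from `L`, at an object all of whose endomorphisms are allowed. -/
abbrev scalarL (v : Obj) (hv : homSize iso v v = 2 := by rfl) : L →ₙ+* (tiling G L iso).ring :=
  Tiling.scalar _ v (NonUnitalRingHom.id L) fun _ ↦ by
    change _ ∈ homGroup G L _
    rw [hv]
    trivial

variable {iso} in
theorem scalarG_eq_scalarL {v : Obj} (hv : homSize iso v v = 2) (g : G) :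
    scalarG G L iso v g = scalarL G L iso v hv (g • 1) := rfl

theorem scalarG_one (v : Obj) :
    scalarG G L iso v 1 = Tiling.single ((tiling G L iso).one_mem v) :=
  Subtype.ext (congrArg (Matrix.single v v) (map_one RingHom.smulOneHom))

theorem span_idempotents : TwoSidedIdeal.span (Set.range fun v ↦ scalarG G L iso v 1) = ⊤ := by
  rw [← TwoSidedIdeal.one_mem_iff, ← Tiling.proj_univ]
  exact sum_mem fun v _ ↦ TwoSidedIdeal.subset_span ⟨v, scalarG_one G L iso v⟩

section Modules

variable {G L iso} {M : Type u} [AddCommGroup M] [Module (tiling G L iso).ring M]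

theorem isNoetherian (h : ∀ v, Module.Finite G (corner (scalarG G L iso v) M)) :
    IsNoetherian (tiling G L iso).ring M := by
  refine isNoetherian_of_span_eq_top (Set.finite_range _) (span_idempotents G L iso) ?_
  rintro _ ⟨v, rfl⟩
  exact exists_fg_le_of_finite_corner

theorem subsingleton_of_finrank_eq_zero
    (h : ∀ v, Module.Finite G (corner (scalarG G L iso v) M))
    (h0 : ∀ v, finrank G (corner (scalarG G L iso v) M) = 0) : Subsingleton M := by
  refine subsingleton_of_span_eq_top (span_idempotents G L iso) ?_
  rintro _ ⟨v, rfl⟩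
  exact smul_eq_zero_of_finrank_corner_eq_zero (h0 v)

end Modules

end Tiling

section Rank

variable {G L : Type u} [DivisionRing G] [DivisionRing L] [Module G L] [IsScalarTower G L L]
  {iso : Bool}

theorem one_mem_hom {s t : Obj} (h : homSize iso s t ≠ 0 := by decide) :
    1 ∈ (tiling G L iso).hom s t := by
  rw [← one_smul G (1 : L)]
  exact smul_one_mem_homGroup 1 h

theorem mem_hom {s t : Obj} (l : L) (h : homSize iso s t = 2 := by rfl) :
    l ∈ (tiling G L iso).hom s t := by
  change l ∈ homGroup G L _
  rw [h]
  trivial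

variable (G L iso) in
/-- The morphism `s ⟶ t` given by the element `1` of `L`. -/
abbrev transfer (s t : Obj) (h : homSize iso s t ≠ 0 := by decide) : (tiling G L iso).ring :=
  Tiling.single (one_mem_hom h)

theorem transfer_smul_transfer_smul {M : Type*} [AddCommGroup M] [Module (tiling G L iso).ring M]
    (s t u : Obj) (m : M) (hst : homSize iso s t ≠ 0 := by decide)
    (htu : homSize iso t u ≠ 0 := by decide) (hsu : homSize iso s u ≠ 0 := by decide) :
    transfer G L iso t u htu • transfer G L iso s t hst • m = transfer G L iso s u hsu • m :=
  Tiling.single_smul_single_smul _ _ _ (one_mul 1) m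

variable (G L)

/-- The rank function for the object that represents `G`. The corner of `q` contributes nothing to
the rank, but it has to be finite-dimensional. -/
noncomputable def rank : RankFunction (tiling G L false).ring :=
  .dim (scalarG G L false p) + ((-2 : ℤ) • .dim (scalarG G L false y') +
    ((2 : ℤ) • .dim (scalarL G L false x') +
      ((-(finrank G L - 2) : ℤ) • .dim (scalarG G L false y) +
        ((finrank G L - 2 : ℤ) • .dim (scalarL G L false x) +
          (0 : ℤ) • .dim (scalarL G L false q)))))

/-- The rank function for the object that represents `F`. -/
noncomputable def rank' : RankFunction (tiling G L true).ring :=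
  (-1 : ℤ) • .dim (scalarG G L true y) + (.dim (scalarL G L true x) + .dim (scalarL G L true q))

theorem rank_eq (M : Type u) [AddCommGroup M] [Module (tiling G L false).ring M] :
    (rank G L).rank M = finrank G (corner (scalarG G L false p) M) +
      (-2 * finrank G (corner (scalarG G L false y') M) +
        (2 * finrank L (corner (scalarL G L false x') M) +
          (-(finrank G L - 2) * finrank G (corner (scalarG G L false y) M) +
            ((finrank G L - 2) * finrank L (corner (scalarL G L false x) M) +
              0 * finrank L (corner (scalarL G L false q) M))))) := rfl

theorem rank'_eq (M : Type u) [AddCommGroup M] [Module (tiling G L true).ring M] :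
    (rank' G L).rank M = -1 * finrank G (corner (scalarG G L true y) M) +
      (finrank L (corner (scalarL G L true x) M) +
        finrank L (corner (scalarL G L true q) M)) := rfl

section Good

variable {G L}

theorem finite_scalarL {M : Type u} [AddCommGroup M] [Module (tiling G L iso).ring M]
    (h : ∀ v, Module.Finite G (corner (scalarG G L iso v) M)) {v : Obj} (hv : homSize iso v v = 2) :
    Module.Finite L (corner (scalarL G L iso v hv) M) :=
  have := h v
  finite_corner_of_restrictScalars (scalarG_eq_scalarL G L hv)

variable [Module.Finite G L]

theorem finite_of_good {M : Type u} [AddCommGroup M] [Module (tiling G L iso).ring M] {v : Obj}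
    (hv : homSize iso v v = 2) [Module.Finite L (corner (scalarL G L iso v hv) M)] :
    Module.Finite G (corner (scalarG G L iso v) M) :=
  finite_corner_restrictScalars (scalarG_eq_scalarL G L hv)

theorem good_rank_iff {M : Type u} [AddCommGroup M] [Module (tiling G L false).ring M] :
    (rank G L).Good M ↔ ∀ v, Module.Finite G (corner (scalarG G L false v) M) := by
  refine ⟨fun ⟨⟨_, hp⟩, ⟨_, hy'⟩, ⟨_, _⟩, ⟨_, hy⟩, ⟨_, _⟩, _, _⟩ v ↦ ?_, fun h ↦ ?_⟩
  · cases v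
    · exact hy
    · exact finite_of_good (v := x) rfl
    · exact finite_of_good (v := q) rfl
    · exact hy'
    · exact finite_of_good (v := x') rfl
    · exact hp
  · have := isNoetherian h
    exact ⟨⟨this, h p⟩, ⟨this, h y'⟩, ⟨this, finite_scalarL h rfl⟩, ⟨this, h y⟩,
      ⟨this, finite_scalarL h rfl⟩, this, finite_scalarL h rfl⟩

variable (M : Type u) [AddCommGroup M] [Module (tiling G L true).ring M]

/-- The objects `y'` and `y` are isomorphic. -/
def cornerY'Equiv : corner (scalarG G L true y') M ≃ₗ[G] corner (scalarG G L true y) M :=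
  Tiling.cornerEquiv one_mem_hom one_mem_hom

/-- The objects `x'` and `x` are isomorphic. -/
def cornerX'Equiv : corner (scalarL G L true x') M ≃ₗ[L] corner (scalarL G L true x) M :=
  Tiling.cornerEquiv one_mem_hom one_mem_hom

/-- The objects `p` and `q` are isomorphic. -/
def cornerPEquiv : corner (scalarL G L true p) M ≃ₗ[L] corner (scalarL G L true q) M :=
  Tiling.cornerEquiv one_mem_hom one_mem_hom

variable {M}

theorem good_rank'_iff :
    (rank' G L).Good M ↔ ∀ v, Module.Finite G (corner (scalarG G L true v) M) := by
  refine ⟨fun ⟨⟨_, hy⟩, ⟨_, _⟩, _, _⟩ v ↦ ?_, fun h ↦ ?_⟩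
  · have := Module.Finite.equiv (cornerX'Equiv (G := G) (L := L) M).symm
    have := Module.Finite.equiv (cornerPEquiv (G := G) (L := L) M).symm
    cases v
    · exact hy
    · exact finite_of_good (v := x) rfl
    · exact finite_of_good (v := q) rfl
    · exact .equiv (cornerY'Equiv M).symm
    · exact finite_of_good (v := x') rfl
    · exact finite_of_good (v := p) rfl
  · have := isNoetherian h
    exact ⟨⟨this, h y⟩, ⟨this, finite_scalarL h rfl⟩, this, finite_scalarL h rfl⟩

theorem good_restrict (h : (rank' G L).Good M) : (rank G L).Good (Restrict (incl G L) M) :=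
  good_rank_iff.2 fun v ↦ good_rank'_iff.1 h v

end Good

end Rank

section PreservesDense

variable {G L : Type u} [DivisionRing G] [DivisionRing L] [Module G L] [IsScalarTower G L L]

section Restrict

variable {M : Type u} [AddCommGroup M] [Module (tiling G L true).ring M]

theorem rank_restrict :
    (rank G L).rank (Restrict (incl G L) M) = finrank G L * (rank' G L).rank M := by
  have hp : finrank G (corner (scalarG G L false p) (Restrict (incl G L) M)) =
      finrank G (corner (scalarG G L true p) M) := rfl
  have hpq : finrank G (corner (scalarG G L true p) M) =
      finrank G L * finrank L (corner (scalarL G L true q) M) := by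
    rw [finrank_corner_restrictScalars (s := scalarL G L true p) fun _ ↦ rfl,
      (cornerPEquiv (G := G) (L := L) M).finrank_eq]
  have hy' : finrank G (corner (scalarG G L false y') (Restrict (incl G L) M)) =
      finrank G (corner (scalarG G L true y) M) := (cornerY'Equiv M).finrank_eq
  have hx' : finrank L (corner (scalarL G L false x') (Restrict (incl G L) M)) =
      finrank L (corner (scalarL G L true x) M) := (cornerX'Equiv (G := G) (L := L) M).finrank_eq
  have hy : finrank G (corner (scalarG G L false y) (Restrict (incl G L) M)) =
      finrank G (corner (scalarG G L true y) M) := rfl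
  have hx : finrank L (corner (scalarL G L false x) (Restrict (incl G L) M)) =
      finrank L (corner (scalarL G L true x) M) := rfl
  rw [rank_eq, rank'_eq, hp, hpq, hy', hx', hy, hx]
  push_cast
  ring

variable (W : Submodule (tiling G L false).ring (Restrict (incl G L) M))

/-- The largest submodule over the coarser tiling whose corners at `x` and `q` are contained in
those of `W`. -/
abbrev oldCore : Submodule (tiling G L true).ring M :=
  core (incl G L) ((tiling G L false).proj {y, x, q}) W

/-- The largest submodule over the coarser tiling whose corners at `x'` and `q` are contained in
those of `W`. -/
abbrev newCore : Submodule (tiling G L true).ring M :=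
  core (incl G L) ((tiling G L false).proj {x', q}) W

theorem finrank_y_oldCore : finrank G (corner (scalarG G L true y) (oldCore W)) =
    finrank G (corner (scalarG G L false y) W) :=
  Tiling.finrank_corner_core tiling_le (by decide)
    (fun t ht ↦ by fin_cases ht <;> exact le_rfl) W

theorem finrank_x_oldCore : finrank L (corner (scalarL G L true x) (oldCore W)) =
    finrank L (corner (scalarL G L false x) W) :=
  Tiling.finrank_corner_core tiling_le (by decide)
    (fun t ht ↦ by fin_cases ht <;> exact le_rfl) W

theorem finrank_q_oldCore : finrank L (corner (scalarL G L true q) (oldCore W)) =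
    finrank L (corner (scalarL G L false q) W) :=
  Tiling.finrank_corner_core tiling_le (by decide)
    (fun t ht ↦ by fin_cases ht <;> exact le_rfl) W

theorem finrank_q_newCore : finrank L (corner (scalarL G L true q) (newCore W)) =
    finrank L (corner (scalarL G L false q) W) :=
  Tiling.finrank_corner_core tiling_le (by decide)
    (fun t ht ↦ by fin_cases ht <;> exact le_rfl) W

theorem incl_proj (A : Finset Obj) :
    incl G L ((tiling G L false).proj A) = (tiling G L true).proj A :=
  map_sum (incl G L) _ A

/-- The corner of `W` at an object, as a `G`-subspace of the corner of `M`. -/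
abbrev cornerG (v : Obj) : Submodule G (corner (scalarG G L true v) M) :=
  corner.ofRestrict (s := scalarG G L false v) (fun _ ↦ rfl) W

/-- The corner of `W` at an object, as an `L`-subspace of the corner of `M`. -/
abbrev cornerL (v : Obj) (hv : homSize false v v = 2 := by rfl)
    (hv' : homSize true v v = 2 := by rfl) : Submodule L (corner (scalarL G L true v hv') M) :=
  corner.ofRestrict (s := scalarL G L false v hv) (fun _ ↦ rfl) W

variable {W} in
theorem finrank_cornerG (v : Obj) : finrank G (cornerG W v) =
    finrank G (corner (scalarG G L false v) W) := corner.finrank_ofRestrict _ W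

variable {W} in
theorem finrank_cornerL (v : Obj) (hv : homSize false v v = 2) (hv' : homSize true v v = 2) :
    finrank L (cornerL W v hv hv') = finrank L (corner (scalarL G L false v hv) W) :=
  corner.finrank_ofRestrict _ W

variable (G L M) in
/-- The morphism `s ⟶ t` given by the element `1` of `L`, as a `G`-linear map of corners. -/
abbrev transferG (s t : Obj) (h : homSize true s t ≠ 0 := by decide) :
    corner (scalarG G L true s) M →ₗ[G] corner (scalarG G L true t) M :=
  corner.smulHom (transfer G L true s t h) (Tiling.single_one_mul_scalar _)

variable (G L M) in
/-- The morphism `s ⟶ t` given by the element `1` of `L`, as an `L`-linear map of corners. -/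
abbrev transferL (s t : Obj) (h : homSize true s t ≠ 0 := by decide)
    {hs : homSize true s s = 2} {ht : homSize true t t = 2} :
    corner (scalarL G L true s hs) M →ₗ[L] corner (scalarL G L true t ht) M :=
  corner.smulHom (transfer G L true s t h) (Tiling.single_one_mul_scalar _)

variable {W}

theorem transfer_self_smul {v : Obj} (m : corner (scalarG G L true v) M)
    (hv : homSize true v v ≠ 0 := by decide) : transfer G L true v v hv • m.1 = m.1 := by
  rw [transfer, ← scalarG_one]
  exact m.2

theorem mem_newCore_of_transferG_mem {m : corner (scalarG G L true y') M} (hm : m ∈ cornerG W y')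
    (hmq : (transferG G L M y' q) m ∈ cornerG W q) : m.1 ∈ newCore W := by
  intro l
  have hx' : l.1 x' y' ∈ (tiling G L false).hom y' x' := mem_hom _
  have hq : l.1 q y' ∈ (tiling G L false).hom q q := mem_hom _
  have hqy' : Tiling.single (l.2 y' q) • m.1 =
      incl G L (Tiling.single hq) • transfer G L true y' q • m.1 :=
    (Tiling.single_smul_single_smul _ (tiling_le _ _ hq) _ (mul_one _) _).symm
  rw [incl_proj, Tiling.proj_smul_smul (transfer_self_smul m), Finset.sum_pair (by decide),
    map_add, hqy']
  exact W.add_mem (W.smul_mem (Tiling.single hx') hm) (W.smul_mem (Tiling.single hq) hmq)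

theorem map_cornerG_y'_sup_le :
    (cornerG W y').map (transferG G L M y' q) ⊔ cornerG W q ≤
      (cornerG W p).map (transferG G L M p q) := by
  have h (s : Obj) (hs : homSize false s p ≠ 0) (hs' : homSize true s p ≠ 0)
      (hsq : homSize true s q ≠ 0) :
      (cornerG W s).map (transferG G L M s q hsq) ≤ (cornerG W p).map (transferG G L M p q) := by
    rintro _ ⟨m, hm, rfl⟩
    exact ⟨(transferG G L M s p hs') m, W.smul_mem (transfer G L false s p hs) hm,
      Subtype.ext (transfer_smul_transfer_smul s p q m.1 hs' (by decide) hsq)⟩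
  refine sup_le (h y' (by decide) (by decide) (by decide)) fun m hm ↦ ?_
  exact h q (by decide) (by decide) (by decide) ⟨m, hm, Subtype.ext (transfer_self_smul m)⟩

theorem finrank_y'_add_finrank_q_le (hM : ∀ v, Module.Finite G (corner (scalarG G L true v) M)) :
    finrank G (corner (scalarG G L false y') W) + finrank G (corner (scalarG G L false q) W) ≤
      finrank G (corner (scalarG G L true y') (newCore W)) +
        finrank G (corner (scalarG G L false p) W) := by
  have := hM y'
  have := hM q
  have := hM p
  have hnew : cornerG W y' ⊓ (cornerG W q).comap (transferG G L M y' q) ≤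
      LinearMap.range (corner.map (scalarG G L true y') (newCore W).subtype) := fun m hm ↦
    corner.mem_range_map_subtype.2 (mem_newCore_of_transferG_mem hm.1 hm.2)
  have hinf := Submodule.finrank_mono hnew
  rw [LinearMap.finrank_range_of_inj (corner.map_injective (newCore W).subtype_injective)] at hinf
  have hsup := (Submodule.finrank_mono map_cornerG_y'_sup_le).trans
    (Submodule.finrank_map_le (transferG G L M p q) (cornerG W p))
  have := finrank_inf_comap_add_finrank_map_sup (transferG G L M y' q) (cornerG W y') (cornerG W q)
  simp only [finrank_cornerG] at hsup this
  omega

variable (W)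

/-- The sum of the corner of `W` at `q` and of the image of its corner at `x'`. -/
abbrev cornerSum : Submodule L (corner (scalarL G L true q) M) :=
  (cornerL W x').map (transferL G L M x' q) ⊔ cornerL W q

/-- The largest submodule over the coarser tiling whose corner at `x'` is contained in that of `W`
and whose corner at `q` is contained in `cornerSum W`. -/
abbrev sumCore : Submodule (tiling G L true).ring M :=
  corner.core (cornerL W x') ⊓ corner.core (cornerSum W)

variable {W}

theorem mem_of_mem_newCore {s t : Obj} (ht : t ∈ ({x', q} : Finset Obj))
    (hst : homSize true s t ≠ 0) {m : M} (hm : m ∈ newCore W) :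
    .of (incl G L) M (transfer G L true s t hst • m) ∈ W := by
  have := hm (transfer G L true s t hst)
  rwa [incl_proj, ← mul_smul, Tiling.proj_mul_single ht] at this

theorem finrank_x'_newCore_add_le (hM : ∀ v, Module.Finite G (corner (scalarG G L true v) M)) :
    finrank L (corner (scalarL G L true x') (newCore W)) + finrank L (cornerSum W) ≤
      finrank L (corner (scalarL G L false x') W) + finrank L (corner (scalarL G L false q) W) := by
  have := finite_scalarL hM (v := x') rfl
  have := finite_scalarL hM (v := q) rfl
  have hnew : LinearMap.range (corner.map (scalarL G L true x') (newCore W).subtype) ≤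
      cornerL W x' ⊓ (cornerL W q).comap (transferL G L M x' q) := fun m hm ↦ by
    have hm := corner.mem_range_map_subtype.1 hm
    refine ⟨?_, mem_of_mem_newCore (by decide) (by decide) hm⟩
    have := mem_of_mem_newCore (s := x') (t := x') (by decide) (by decide) hm
    have hm1 : transfer G L true x' x' • m.1 = m.1 := m.2
    rwa [hm1] at this
  have hinf := Submodule.finrank_mono hnew
  rw [LinearMap.finrank_range_of_inj (corner.map_injective (newCore W).subtype_injective)] at hinf
  have := finrank_inf_comap_add_finrank_map_sup (transferL G L M x' q)
    (cornerL W x' rfl rfl) (cornerL W q rfl rfl)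
  rw [finrank_cornerL x' rfl rfl, finrank_cornerL q rfl rfl] at this
  exact (Nat.add_le_add_right hinf _).trans this.le

theorem range_le_sumCore {N : Type u} [AddCommGroup N] [Module (tiling G L true).ring N]
    {j : N →ₗ[(tiling G L true).ring] M} (h : LinearMap.range (Restrict.map (incl G L) j) ≤ W) :
    LinearMap.range j ≤ sumCore W :=
  le_inf (corner.range_le_core fun m ↦ h ⟨m.1, rfl⟩)
    (corner.range_le_core fun m ↦ Submodule.mem_sup_right (h ⟨m.1, rfl⟩))

theorem proj_smul_eq {s t : Obj} (ht : homSize true t t = 2) (hs : homSize true s s ≠ 0)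
    (m : corner (scalarG G L true s) M) (l : (tiling G L true).ring) :
    (corner.proj (scalarL G L true t ht) (l • m.1)).1 = Tiling.single (l.2 s t) • m.1 :=
  Tiling.single_one_smul_smul (transfer_self_smul m hs) t l

theorem cornerG_y'_le : cornerG W y' ≤
    LinearMap.range (corner.map (scalarG G L true y') (sumCore W).subtype) := by
  intro m hm
  have hx' (l : (tiling G L true).ring) :
      corner.proj (scalarL G L true x' rfl) (l • m.1) ∈ cornerL W x' rfl rfl := by
    have hl : l.1 x' y' ∈ (tiling G L false).hom y' x' := mem_hom _
    have := W.smul_mem (Tiling.single hl) hm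
    refine corner.mem_ofRestrict.2 ?_
    rw [proj_smul_eq rfl (by decide)]
    exact this
  refine corner.mem_range_map_subtype.2 ⟨hx', fun l ↦ Submodule.mem_sup_left ?_⟩
  have hl : l.1 q y' ∈ (tiling G L true).hom y' x' := mem_hom _
  refine ⟨_, hx' (Tiling.single hl), Subtype.ext ?_⟩
  refine Eq.trans ?_ (proj_smul_eq (t := q) rfl (by decide) m l).symm
  refine (congrArg (transfer G L true x' q • ·)
    (proj_smul_eq (t := x') rfl (by decide) m (Tiling.single hl))).trans ?_
  exact Tiling.single_smul_single_smul _ _ _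
    ((one_mul _).trans (Matrix.single_apply_same _ _ _)) m.1

theorem rank'_cores_le (hM : ∀ v, Module.Finite G (corner (scalarG G L true v) M)) :
    (finrank G L - 2) * (rank' G L).rank (oldCore W) + (rank' G L).rank (newCore W) +
      (rank' G L).rank (sumCore W) ≤ (rank G L).rank W := by
  have := hM y'
  have := finite_scalarL hM (v := x') rfl
  have := finite_scalarL hM (v := q) rfl
  have hy' := Submodule.finrank_mono (cornerG_y'_le (W := W))
  rw [finrank_cornerG, LinearMap.finrank_range_of_inj
    (corner.map_injective (sumCore W).subtype_injective)] at hy'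
  have hx' : finrank L (corner (scalarL G L true x') (sumCore W)) ≤
      finrank L (corner (scalarL G L false x') W) := by
    rw [← finrank_cornerL x' rfl rfl]
    exact corner.finrank_le_of_le_core inf_le_left
  have hq : finrank L (corner (scalarL G L true q) (sumCore W)) ≤ _ :=
    corner.finrank_le_of_le_core inf_le_right
  have hpy' := finrank_y'_add_finrank_q_le hM (W := W)
  have hqx' := finrank_x'_newCore_add_le hM (W := W)
  have hWq := finrank_corner_restrictScalars (M := W) (t := scalarG G L false q)
    (s := scalarL G L false q) fun _ ↦ rfl
  rw [rank_eq, rank'_eq, rank'_eq, rank'_eq, finrank_y_oldCore, finrank_x_oldCore,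
    finrank_q_oldCore, finrank_q_newCore, ← (cornerY'Equiv (newCore W)).finrank_eq,
    ← (cornerY'Equiv (sumCore W)).finrank_eq,
    ← (cornerX'Equiv (G := G) (L := L) (newCore W)).finrank_eq,
    ← (cornerX'Equiv (G := G) (L := L) (sumCore W)).finrank_eq]
  rw [hWq] at hpy'
  zify at *
  linarith

end Restrict

theorem preservesDense (hG : 2 ≤ finrank G L) :
    RankFunction.PreservesDense (incl G L) (rank G L) (rank' G L) := by
  have : Module.Finite G L := Module.finite_of_finrank_pos (by omega)
  intro M N _ _ _ _ j hj
  refine ⟨good_restrict hj.good, hj.injective, ?_, fun W hW ↦ ?_⟩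
  · rw [rank_restrict, rank_restrict, hj.rank_eq]
  · have hold := hj.le_rank (oldCore W) (range_le_core hW)
    have hnew := hj.le_rank (newCore W) (range_le_core hW)
    have hsum := hj.le_rank (sumCore W) (range_le_sumCore hW)
    have hW := rank'_cores_le (W := W) (good_rank'_iff.1 hj.good)
    rw [rank_restrict]
    nlinarith [Nat.cast_le (α := ℤ).2 hG]

end PreservesDense

section Spans

variable (G L : Type u) [DivisionRing G] [DivisionRing L] [Module G L] [IsScalarTower G L L]
  (iso : Bool)

/-- The object that represents `G`. -/
abbrev spanP : Submodule (tiling G L iso).ring (tiling G L iso).ring :=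
  .span _ {scalarG G L iso p 1}

/-- The object that represents `F`. -/
abbrev spanQ : Submodule (tiling G L iso).ring (tiling G L iso).ring :=
  .span _ {scalarL G L iso q rfl 1}

variable {G L} in
theorem exists_scalarG_eq (m : spanP G L false) : ∃ g, scalarG G L false p g = m := by
  obtain ⟨g, hg⟩ : (m : (tiling G L false).ring).1 p p ∈ homGroup G L 1 := m.1.2 p p
  refine ⟨g, Subtype.ext ?_⟩
  rw [← mul_eq_of_mem_span_singleton (map_one_mul_map_one (scalarG G L false p)) m.2]
  refine Matrix.ext fun t s ↦ ?_
  change Matrix.single p p (g • (1 : L)) t s = (m.1.1 * Matrix.single p p ((1 : G) • (1 : L))) t s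
  rw [one_smul, Matrix.single_apply]
  obtain rfl | hs := eq_or_ne s p
  · rw [Matrix.mul_single_apply_same, mul_one]
    split_ifs with h
    · obtain ⟨rfl, -⟩ := h
      exact hg
    · have ht : homSize false p t = 0 := by
        cases t
        case p => exact (h ⟨rfl, rfl⟩).elim
        all_goals rfl
      have hmem : m.1.1 t p ∈ homGroup G L (homSize false p t) := m.1.2 p t
      rw [ht] at hmem
      exact (AddSubgroup.mem_bot.1 hmem).symm
  · rw [Matrix.mul_single_apply_of_ne _ _ _ _ _ hs, if_neg fun h ↦ hs h.2.symm]

theorem subsingleton_corner_spanP {v : Obj} (hv : v ≠ p) :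
    Subsingleton (corner (scalarG G L false v) (spanP G L false)) :=
  Tiling.subsingleton_corner_span <| by
    cases v
    case p => exact (hv rfl).elim
    all_goals rfl

theorem subsingleton_corner_spanQ {v : Obj} (hp : v ≠ p) (hq : v ≠ q) :
    Subsingleton (corner (scalarG G L true v) (spanQ G L true)) :=
  Tiling.subsingleton_corner_span <| by
    cases v
    case p => exact (hp rfl).elim
    case q => exact (hq rfl).elim
    all_goals rfl

/-- The space of morphisms `p ⟶ p`. -/
noncomputable def cornerSpanPEquiv : G ≃ₗ[G] corner (scalarG G L false p) (spanP G L false) :=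
  Tiling.cornerSpanEquiv (RingHom.smulOneHom : G →+* L).toAddMonoidHom
    (RingHom.smulOneHom : G →+* L).injective (map_mul (RingHom.smulOneHom : G →+* L)) fun x ↦ by
      change (x ∈ homGroup G L 1) ↔ x ∈ homGroup G L 1 ∧ (1 : G) • (1 : L) * x = x ∧
        x * ((1 : G) • (1 : L)) = x
      rw [one_smul, one_mul, mul_one]
      exact ⟨fun h ↦ ⟨h, rfl, rfl⟩, fun h ↦ h.1⟩

/-- The space of morphisms `q ⟶ q`. -/
noncomputable def cornerSpanQEquiv : L ≃ₗ[L] corner (scalarL G L true q) (spanQ G L true) :=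
  Tiling.cornerSpanEquiv (.id L) Function.injective_id (fun _ _ ↦ rfl) fun x ↦
    ⟨fun _ ↦ ⟨trivial, one_mul x, mul_one x⟩, fun _ ↦ ⟨x, rfl⟩⟩

theorem finrank_p_spanP : finrank G (corner (scalarG G L false p) (spanP G L false)) = 1 :=
  (cornerSpanPEquiv G L).finrank_eq.symm.trans (finrank_self G)

theorem finrank_q_spanQ : finrank L (corner (scalarL G L true q) (spanQ G L true)) = 1 :=
  (cornerSpanQEquiv G L).finrank_eq.symm.trans (finrank_self L)

end Spans

section Stable

variable {G L : Type u} [DivisionRing G] [DivisionRing L] [Module G L] [IsScalarTower G L L]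
  {iso : Bool}

theorem finrank_scalarL_eq_zero {M : Type u} [AddCommGroup M] [Module (tiling G L iso).ring M]
    {v : Obj} (hv : homSize iso v v = 2) [Subsingleton (corner (scalarG G L iso v) M)] :
    finrank L (corner (scalarL G L iso v hv) M) = 0 :=
  have := (cornerRestrictScalarsEquiv (M := M)
    (scalarG_eq_scalarL G L hv)).symm.toEquiv.subsingleton
  finrank_zero_of_subsingleton

theorem rank_eq_finrank_p {M : Type u} [AddCommGroup M] [Module (tiling G L false).ring M]
    (h : ∀ v, v ≠ p → v ≠ q → Subsingleton (corner (scalarG G L false v) M)) :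
    (rank G L).rank M = finrank G (corner (scalarG G L false p) M) := by
  have hy := h y nofun nofun
  have hy' := h y' nofun nofun
  have hx := h x nofun nofun
  have hx' := h x' nofun nofun
  rw [rank_eq, finrank_zero_of_subsingleton (M := corner (scalarG G L false y) M),
    finrank_zero_of_subsingleton (M := corner (scalarG G L false y') M),
    finrank_scalarL_eq_zero (v := x) rfl, finrank_scalarL_eq_zero (v := x') rfl]
  ring

theorem rank'_eq_finrank_q {M : Type u} [AddCommGroup M] [Module (tiling G L true).ring M]
    (h : ∀ v, v ≠ p → v ≠ q → Subsingleton (corner (scalarG G L true v) M)) :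
    (rank' G L).rank M = finrank L (corner (scalarL G L true q) M) := by
  have hy := h y nofun nofun
  have hx := h x nofun nofun
  rw [rank'_eq, finrank_zero_of_subsingleton (M := corner (scalarG G L true y) M),
    finrank_scalarL_eq_zero (v := x) rfl]
  ring

theorem subsingleton_corner_submodule {M : Type u} [AddCommGroup M]
    [Module (tiling G L iso).ring M] (W : Submodule (tiling G L iso).ring M) {v : Obj}
    [Subsingleton (corner (scalarG G L iso v) M)] : Subsingleton (corner (scalarG G L iso v) W) :=
  (corner.map_injective (s := scalarG G L iso v) W.subtype_injective).subsingleton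

variable [Module.Finite G L]

theorem isStable_spanP : (rank G L).IsStable (spanP G L false) := by
  have hsub {v : Obj} (hv : v ≠ p) := subsingleton_corner_spanP G L hv
  have hgood : (rank G L).Good (spanP G L false) := good_rank_iff.2 fun v ↦ by
    obtain rfl | hv := eq_or_ne v p
    · exact .equiv (cornerSpanPEquiv G L)
    · have := hsub hv
      infer_instance
  refine ⟨hgood, ?_, fun W hW ↦ ?_⟩
  · rw [rank_eq_finrank_p fun v hv _ ↦ hsub hv, finrank_p_spanP, Nat.cast_one]
  · have := Submodule.nontrivial_iff_ne_bot.2 hW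
    have hsubW {v : Obj} (hv : v ≠ p) : Subsingleton (corner (scalarG G L false v) W) :=
      have := hsub hv
      subsingleton_corner_submodule W
    have hp : finrank G (corner (scalarG G L false p) W) ≠ 0 := fun hp ↦ not_subsingleton W <|
      subsingleton_of_finrank_eq_zero (good_rank_iff.1 (hgood.submodule W)) fun v ↦ by
        obtain rfl | hv := eq_or_ne v p
        · exact hp
        · have := hsubW hv
          exact finrank_zero_of_subsingleton
    rw [rank_eq_finrank_p fun v hv _ ↦ hsubW hv]
    omega

theorem isStable_spanQ : (rank' G L).IsStable (spanQ G L true) := by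
  have hsub := @subsingleton_corner_spanQ G L _ _ _ _
  have hq : Module.Finite L (corner (scalarL G L true q) (spanQ G L true)) :=
    .equiv (cornerSpanQEquiv G L)
  have hp := Module.Finite.equiv (cornerPEquiv (G := G) (L := L) (spanQ G L true)).symm
  have hgood : (rank' G L).Good (spanQ G L true) := good_rank'_iff.2 fun v ↦ by
    obtain rfl | hvp := eq_or_ne v p
    · exact finite_of_good (v := p) rfl
    obtain rfl | hvq := eq_or_ne v q
    · exact finite_of_good (v := q) rfl
    have := hsub hvp hvq
    infer_instance
  have hrank : (rank' G L).rank (spanQ G L true) = 1 := by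
    rw [rank'_eq_finrank_q @hsub, finrank_q_spanQ, Nat.cast_one]
  refine ⟨hgood, hrank, fun W hW ↦ ?_⟩
  have := Submodule.nontrivial_iff_ne_bot.2 hW
  have hqW : finrank L (corner (scalarL G L true q) W) ≠ 0 := fun hqW ↦ not_subsingleton W <|
    subsingleton_of_finrank_eq_zero (good_rank'_iff.1 (hgood.submodule W)) fun v ↦ by
      obtain rfl | hvp := eq_or_ne v p
      · rw [finrank_corner_restrictScalars (s := scalarL G L true p) fun _ ↦ rfl,
          (cornerPEquiv (G := G) (L := L) W).finrank_eq, hqW, mul_zero]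
      obtain rfl | hvq := eq_or_ne v q
      · rw [finrank_corner_restrictScalars (s := scalarL G L true q) fun _ ↦ rfl, hqW, mul_zero]
      have := hsub hvp hvq
      have := subsingleton_corner_submodule W (v := v)
      exact finrank_zero_of_subsingleton
  rw [eq_top_of_finrank_corner_span_eq_one (finrank_q_spanQ G L) hqW, RankFunction.rank_top, hrank]

end Stable

section Presentation

variable {ι : Type} [Fintype ι] {G L : Type u} [DivisionRing G] [DivisionRing L]
  [Module G L] [IsScalarTower G L L]

variable (b : Basis ι G L)

/-- The element `l` of `L` as a morphism `q ⟶ p`. -/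
abbrev toP (l : L) : (tiling G L true).ring :=
  Tiling.single (s := q) (t := p) (mem_hom l)

theorem sum_toP (l : ι → L) : ∑ j, toP (G := G) (l j) = toP (∑ j, l j) :=
  Tiling.sum_single fun j ↦ mem_hom (l j)

theorem toP_mem_spanQ (l : L) : toP (G := G) l ∈ spanQ G L true :=
  Tiling.single_mem_span _ (mul_one l)

/-- The basis of the space of morphisms `q ⟶ p`. -/
noncomputable def basisElt (j : ι) : spanQ G L true :=
  ⟨toP (b j), toP_mem_spanQ (b j)⟩

theorem scalarG_mul_toP (g : G) (l : L) : scalarG G L true p g * toP l = toP (g • l) :=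
  Tiling.single_mul_single_eq (mem_hom l) (smul_one_mem_homGroup g (by decide)) (mem_hom (g • l))
    (smul_one_mul g l)

theorem toP_mul_scalarL (l a : L) : toP (G := G) l * scalarL G L true q rfl a = toP (l * a) :=
  Tiling.single_mul_single_eq (mem_hom a) (mem_hom l) (mem_hom (l * a)) rfl

/-- The embedding of the `n`-th power of the object that represents `G` into the object that
represents `F`. -/
noncomputable def embedding : (ι → spanP G L false) →ₗ[(tiling G L false).ring]
    Restrict (incl G L) (spanQ G L true) :=
  rowHom (scalarG G L false p 1) fun j ↦ .of _ _ (basisElt b j)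

theorem embedding_injective : Function.Injective (embedding b) := by
  refine (injective_iff_map_eq_zero _).2 fun m hm ↦ ?_
  choose g hg using fun j ↦ exists_scalarG_eq (m j)
  have hsum : toP (G := G) (∑ j, g j • b j) = 0 := by
    rw [← sum_toP]
    refine Eq.trans ?_ (congrArg Subtype.val hm)
    refine (Finset.sum_congr rfl fun j _ ↦ ?_).trans (AddSubmonoidClass.coe_finsetSum _ _).symm
    rw [← hg]
    exact (scalarG_mul_toP (g j) (b j)).symm
  have hg0 : ∑ j, g j • b j = 0 :=
    (Matrix.single_apply_same p q _).symm.trans (congrArg (fun l ↦ l.1 p q) hsum)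
  refine funext fun j ↦ Subtype.ext ?_
  rw [← hg, Fintype.linearIndependent_iff.1 b.linearIndependent g hg0 j, map_zero]
  rfl

section Rank

variable [Module.Finite G L]

theorem good_pi_and_rank_pi_spanP : (rank G L).Good (ι → spanP G L false) ∧
    (rank G L).rank (ι → spanP G L false) = Fintype.card ι := by
  have hP := isStable_spanP (G := G) (L := L)
  have hpi := RankFunction.good_pi_and_rank_pi ι hP.good
  rwa [hP.rank_eq_one, mul_one] at hpi

variable {b} in
theorem card_le_rank
    {W : Submodule (tiling G L false).ring (Restrict (incl G L) (spanQ G L true))}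
    (hW : LinearMap.range (embedding b) ≤ W) : Fintype.card ι ≤ (rank G L).rank W := by
  have hgood := (good_restrict (isStable_spanQ (G := G) (L := L)).good).submodule W
  have hfin := good_rank_iff.1 hgood p
  have hle : finrank G (corner (scalarG G L false p) (ι → spanP G L false)) ≤
      finrank G (corner (scalarG G L false p) W) :=
    LinearMap.finrank_le_finrank_of_injective <| corner.map_injective
      (f := (embedding b).codRestrict W fun x ↦ hW ⟨x, rfl⟩)
      fun x x' h ↦ embedding_injective b (congrArg Subtype.val h)
  have hpow := (RankFunction.good_pi_and_rank_pi ι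
    (isStable_spanP (G := G) (L := L)).good.1).2
  have hpn : finrank G (corner (scalarG G L false p) (ι → spanP G L false)) = Fintype.card ι := by
    refine Nat.cast_injective (R := ℤ) (hpow.trans ?_)
    simp only [RankFunction.dim, finrank_p_spanP, Nat.cast_one, mul_one]
  rw [rank_eq_finrank_p fun v hp hq ↦
    have : Subsingleton (corner (scalarG G L false v) (Restrict (incl G L) (spanQ G L true))) :=
      subsingleton_corner_spanQ G L hp hq
    subsingleton_corner_submodule W]
  omega

theorem isDense_embedding : (rank G L).IsDense (embedding b) where
  good := good_restrict (isStable_spanQ (G := G) (L := L)).good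
  injective := embedding_injective b
  rank_eq := by
    rw [rank_restrict, (isStable_spanQ (G := G) (L := L)).rank_eq_one,
      good_pi_and_rank_pi_spanP.2, finrank_eq_card_basis b, mul_one]
  le_rank W hW := by
    rw [good_pi_and_rank_pi_spanP.2]
    exact card_le_rank hW

end Rank

variable {b} [DecidableEq ι] {φ : L →+* Matrix ι ι G}

theorem basisElt_mul_scalarL (hb : ∀ j l, b j * l = ∑ k, φ l j k • b k) (j : ι) (l : L) :
    (basisElt b j : (tiling G L true).ring) * scalarL G L true q rfl l =
      ∑ k, scalarG G L true p (φ l j k) * basisElt b k := by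
  simp only [basisElt, toP_mul_scalarL, scalarG_mul_toP, hb, sum_toP]

/-- The presentation of the representation of `L` on itself with basis `b`. -/
noncomputable def presentation (hb : ∀ j l, b j * l = ∑ k, φ l j k • b k)
    (hι : 2 ≤ Fintype.card ι) : Presentation φ (incl G L) (rank G L) (rank' G L) :=
  have := Module.Finite.of_basis b
  { s := scalarG G L false p
    t := scalarL G L true q
    β := basisElt b
    s_one_mul j := Subtype.ext <| (scalarG_mul_toP 1 (b j)).trans <| by rw [one_smul]; rfl
    mul_t := basisElt_mul_scalarL hb
    stable := isStable_spanP
    stable' := isStable_spanQ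
    preservesDense := preservesDense (finrank_eq_card_basis b ▸ hι)
    isDense := isDense_embedding b }

end Presentation

section Lattice

open scoped Matrix.Module

variable {G L : Type u} [DivisionRing G] [DivisionRing L] [Module G L] [IsScalarTower G L L]
  {iso : Bool} {E : Type u} [AddCommGroup E] [Module G E] [Module L E] [IsScalarTower G L E]

/-- The values at `v` as a vector space over `G`. -/
abbrev valueG (W : Submodule (tiling G L iso).ring (Obj → E)) (v : Obj) : Submodule G E :=
  Tiling.value (v := v) (κ := (RingHom.smulOneHom : G →+* L)) W
    (fun g ↦ smul_one_mem_homGroup g (homSize_self_ne_zero iso v)) fun g e ↦ smul_one_smul L g e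

/-- The values as a vector space over `L`. -/
abbrev valueL (W : Submodule (tiling G L iso).ring (Obj → E)) (v : Obj)
    (hv : homSize iso v v = 2) : Submodule L E :=
  Tiling.value (v := v) (κ := NonUnitalRingHom.id L) W (fun l ↦ mem_hom l hv) fun _ _ ↦ rfl

section Corner

variable {W : Submodule (tiling G L iso).ring (Obj → E)} {v : Obj}

theorem finrank_scalarG_eq :
    finrank G (corner (scalarG G L iso v) W) = finrank G (valueG W v) :=
  (Tiling.cornerValueEquiv _ _).finrank_eq

omit [Module G E] [IsScalarTower G L E] in
theorem finrank_scalarL_eq {hv : homSize iso v v = 2} :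
    finrank L (corner (scalarL G L iso v hv) W) = finrank L (valueL W v hv) :=
  (Tiling.cornerValueEquiv _ _).finrank_eq

theorem finite_scalarG [Module.Finite G E] : Module.Finite G (corner (scalarG G L iso v) W) :=
  have : Module.Finite G (valueG W v) := inferInstance
  .equiv (Tiling.cornerValueEquiv (W := W) (fun g ↦ smul_one_mem_homGroup g
    (homSize_self_ne_zero iso v)) fun g (e : E) ↦ smul_one_smul L g e).symm

end Corner

section Relations

/-- Zero, `D`, and all of `E`. -/
def level (D : Submodule G E) : Fin 3 → Submodule G E
  | 0 => ⊥
  | 1 => D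
  | 2 => ⊤

/-- The functor whose values are given by `level`. -/
def lattice (D : Submodule G E) (k : Obj → Fin 3) (hk : ∀ s t, homSize iso s t = 0 ∨ k s = 0 ∨
    k t = 2 ∨ homSize iso s t = 1 ∧ k s = 1 ∧ k t = 1) :
    Submodule (tiling G L iso).ring (Obj → E) where
  carrier := {m | ∀ v, m v ∈ level D (k v)}
  add_mem' hm hm' v := add_mem (hm v) (hm' v)
  zero_mem' v := zero_mem _
  smul_mem' l m hm t := sum_mem fun s _ ↦ by
    have hl : l.1 t s ∈ homGroup G L (homSize iso s t) := l.2 s t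
    have hms := hm s
    obtain h | h | h | ⟨h, hs, ht⟩ := hk s t
    · rw [h] at hl
      rw [AddSubgroup.mem_bot.1 hl, zero_smul]
      exact zero_mem _
    · rw [h] at hms
      rw [(Submodule.mem_bot G).1 hms, smul_zero]
      exact zero_mem _
    · rw [h]
      trivial
    · rw [h] at hl
      rw [hs] at hms
      rw [ht]
      obtain ⟨g, hg⟩ := hl
      rw [← hg]
      change (g • (1 : L)) • m s ∈ level D 1
      rw [smul_one_smul]
      exact D.smul_mem g hms

variable {D : Submodule G E} {k : Obj → Fin 3} {hk : ∀ s t, homSize iso s t = 0 ∨ k s = 0 ∨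
    k t = 2 ∨ homSize iso s t = 1 ∧ k s = 1 ∧ k t = 1} {v : Obj}

theorem single_mem_lattice_iff {e : E} :
    Pi.single v e ∈ lattice (L := L) D k hk ↔ e ∈ level D (k v) := by
  refine ⟨fun h ↦ Pi.single_eq_same (M := fun _ ↦ E) v e ▸ h v, fun h w ↦ ?_⟩
  obtain rfl | hw := eq_or_ne w v
  · rwa [Pi.single_eq_same]
  · rw [Pi.single_eq_of_ne hw]
    exact zero_mem _

theorem finrank_scalarG_lattice (h : k v = 1) :
    finrank G (corner (scalarG G L iso v) (lattice (L := L) D k hk)) = finrank G D := by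
  rw [finrank_scalarG_eq]
  refine congrArg (fun X : Submodule G E ↦ finrank G X) (Submodule.ext fun _ ↦ ?_)
  refine (single_mem_lattice_iff (L := L) (hk := hk)).trans ?_
  rw [h]
  rfl

theorem finrank_scalarG_lattice_bot (h : k v = 0) :
    finrank G (corner (scalarG G L iso v) (lattice (L := L) D k hk)) = 0 := by
  rw [finrank_scalarG_eq, ← finrank_bot G E]
  refine congrArg (fun X : Submodule G E ↦ finrank G X) (Submodule.ext fun _ ↦ ?_)
  refine (single_mem_lattice_iff (L := L) (hk := hk)).trans ?_
  rw [h]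
  rfl

theorem finrank_scalarL_lattice_top {hv : homSize iso v v = 2} (h : k v = 2) :
    finrank L (corner (scalarL G L iso v hv) (lattice (L := L) D k hk)) = finrank L E := by
  rw [finrank_scalarL_eq, ← finrank_top L E]
  refine congrArg (fun X : Submodule L E ↦ finrank L X) (Submodule.eq_top_iff'.2 fun e ↦ ?_)
  refine (single_mem_lattice_iff (L := L) (hk := hk)).2 ?_
  rw [h]
  trivial

theorem finrank_scalarL_lattice_bot {hv : homSize iso v v = 2} (h : k v = 0) :
    finrank L (corner (scalarL G L iso v hv) (lattice (L := L) D k hk)) = 0 := by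
  rw [finrank_scalarL_eq, ← finrank_bot L E]
  refine congrArg (fun X : Submodule L E ↦ finrank L X) (eq_bot_iff.2 fun e he ↦ ?_)
  have := (single_mem_lattice_iff (L := L) (hk := hk)).1 he
  rwa [h] at this

end Relations

end Lattice

section Pair

open scoped Matrix.Module

variable {G L : Type u} [DivisionRing G] [DivisionRing L] [Module G L] [IsScalarTower G L L]

/-- The lattice over the coarser tiling with the relations `pairLattice` at `y` and `y'`, and all of
`L × L` at the other objects. -/
abbrev pairQ (y z : L) : Submodule (tiling G L true).ring (Obj → L × L) :=
  lattice (pairLattice G y z) (fun | .y | .y' => 1 | _ => 2) (by decide)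

/-- The sublattice of `pairQ` over the finer tiling with the relations `pairLattice` at `y'` and
`p`, all of `L × L` at `x'`, and zero elsewhere. -/
abbrev pairP (y z : L) : Submodule (tiling G L false).ring (Obj → L × L) :=
  lattice (pairLattice G y z) (fun | .y' | .p => 1 | .x' => 2 | _ => 0) (by decide)

section Values

variable {iso : Bool} {E : Type u} [AddCommGroup E] [Module L E]
  {W W' : Submodule (tiling G L iso).ring (Obj → E)} {s t : Obj}

theorem single_mem_of_single_mem (h : homSize iso s t ≠ 0) {e : E} (he : Pi.single s e ∈ W) :
    Pi.single t e ∈ W := by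
  rw [← one_smul L e]
  exact Tiling.single_smul_mem (one_mem_hom h) he

section

variable [Module G E] [IsScalarTower G L E] [Module.Finite G E]

theorem finrank_scalarG_mono (h : W ≤ W') :
    finrank G (corner (scalarG G L iso s) W) ≤ finrank G (corner (scalarG G L iso s) W') := by
  rw [finrank_scalarG_eq, finrank_scalarG_eq]
  exact Submodule.finrank_mono fun _ he ↦ h he

theorem finrank_scalarG_le (h : homSize iso s t ≠ 0) :
    finrank G (corner (scalarG G L iso s) W) ≤ finrank G (corner (scalarG G L iso t) W) := by
  rw [finrank_scalarG_eq, finrank_scalarG_eq]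
  exact Submodule.finrank_mono fun _ ↦ single_mem_of_single_mem h

end

theorem finrank_scalarL_le [Module.Finite L E] {hs : homSize iso s s = 2} {ht : homSize iso t t = 2}
    (h : homSize iso s t ≠ 0) :
    finrank L (corner (scalarL G L iso s hs) W) ≤ finrank L (corner (scalarL G L iso t ht) W) := by
  rw [finrank_scalarL_eq, finrank_scalarL_eq]
  exact Submodule.finrank_mono fun _ ↦ single_mem_of_single_mem h

theorem finrank_scalarG_eq_zero_iff [Module.Finite G L] {hs : homSize iso s s = 2} :
    finrank G (corner (scalarG G L iso s) W) = 0 ↔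
      finrank L (corner (scalarL G L iso s hs) W) = 0 := by
  rw [finrank_corner_restrictScalars (s := scalarL G L iso s hs) fun _ ↦ rfl, mul_eq_zero,
    or_iff_right finrank_pos.ne']

end Values

variable {y z : L}

theorem finrank_add_one_le_of_le_lattice [Module.Finite G L] (hy : ∀ g : G, y ≠ g • 1)
    (hz : ∀ c d : G, z ≠ y * (c • 1) + d • 1) {iso : Bool}
    {W : Submodule (tiling G L iso).ring (Obj → L × L)} {k : Obj → Fin 3} {hk}
    (hW : W ≤ lattice (pairLattice G y z) k hk) {s t : Obj} (hs : k s = 1)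
    (hst : homSize iso s t ≠ 0) (ht : homSize iso t t = 2)
    (h0 : finrank G (corner (scalarG G L iso s) W) ≠ 0) :
    finrank G (corner (scalarG G L iso s) W) + 1 ≤
      2 * finrank L (corner (scalarL G L iso t ht) W) := by
  rw [finrank_scalarG_eq] at h0 ⊢
  rw [finrank_scalarL_eq]
  refine finrank_add_one_le_two_mul_finrank hy hz (fun h ↦ h0 ?_) (fun e he ↦ ?_) fun e he ↦
    single_mem_of_single_mem hst he
  · rw [h, finrank_bot]
  · have := single_mem_lattice_iff.1 (hW he)
    rwa [hs] at this

theorem rank_pairP (hy : ∀ g : G, y ≠ g • 1) : (rank G L).rank (pairP (G := G) y z) = 1 := by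
  rw [rank_eq, finrank_scalarG_lattice (v := p) rfl, finrank_scalarG_lattice (v := y') rfl,
    finrank_scalarG_lattice_bot (v := .y) rfl, finrank_scalarL_lattice_bot (v := x) (hv := rfl) rfl,
    finrank_scalarL_lattice_top (v := x') (hv := rfl) rfl, finrank_prod, finrank_self,
    finrank_pairLattice hy]
  norm_num

theorem rank'_pairQ (hy : ∀ g : G, y ≠ g • 1) : (rank' G L).rank (pairQ (G := G) y z) = 1 := by
  rw [rank'_eq, finrank_scalarG_lattice (v := .y) rfl,
    finrank_scalarL_lattice_top (v := x) (hv := rfl) rfl,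
    finrank_scalarL_lattice_top (v := q) (hv := rfl) rfl, finrank_prod, finrank_self,
    finrank_pairLattice hy]
  norm_num

section Stable

variable [Module.Finite G L]

theorem exists_finrank_scalarG_ne_zero {iso : Bool}
    {W : Submodule (tiling G L iso).ring (Obj → L × L)} (hW : W ≠ ⊥) :
    ∃ v, finrank G (corner (scalarG G L iso v) W) ≠ 0 := by
  have := Submodule.nontrivial_iff_ne_bot.2 hW
  by_contra! h
  exact not_subsingleton W (subsingleton_of_finrank_eq_zero (fun v ↦ finite_scalarG) h)

variable (hy : ∀ g : G, y ≠ g • 1) (hz : ∀ c d : G, z ≠ y * (c • 1) + d • 1)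

include hy hz

theorem isStable_pairQ : (rank' G L).IsStable (pairQ (G := G) y z) := by
  refine RankFunction.isStable_submodule (good_rank'_iff.2 fun v ↦ finite_scalarG) (rank'_pairQ hy)
    fun W hW hW0 ↦ ?_
  have hxq := finrank_scalarL_le (W := W) (s := x) (t := q) (hs := rfl) (ht := rfl) (by decide)
  have hyx := finrank_add_one_le_of_le_lattice hy hz hW (s := .y) (t := x) rfl (by decide) rfl
  have hq : finrank L (corner (scalarL G L true q rfl) W) ≠ 0 := fun hq ↦ by
    obtain ⟨v, hv⟩ := exists_finrank_scalarG_ne_zero hW0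
    have hvq := finrank_scalarG_le (W := W) (s := v) (t := q) (by clear hv; revert v; decide)
    rw [finrank_scalarG_eq_zero_iff.2 hq] at hvq
    exact hv (Nat.le_zero.1 hvq)
  rw [rank'_eq]
  omega

theorem isStable_pairP : (rank G L).IsStable (pairP (G := G) y z) := by
  refine RankFunction.isStable_submodule (good_rank_iff.2 fun v ↦ finite_scalarG) (rank_pairP hy)
    fun W hW hW0 ↦ ?_
  have hy'p := finrank_scalarG_le (W := W) (s := y') (t := p) (by decide)
  have hy'x' := finrank_add_one_le_of_le_lattice hy hz hW (s := y') (t := x') rfl (by decide) rfl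
  have hbot {v : Obj} (hv : v = .y ∨ v = x ∨ v = q) :
      finrank G (corner (scalarG G L false v) W) = 0 := by
    refine Nat.le_zero.1 ((finrank_scalarG_mono hW).trans_eq (finrank_scalarG_lattice_bot ?_))
    obtain rfl | rfl | rfl := hv <;> rfl
  have hne : finrank G (corner (scalarG G L false p) W) ≠ 0 ∨
      finrank L (corner (scalarL G L false x' rfl) W) ≠ 0 := by
    by_contra! h
    obtain ⟨v, hv⟩ := exists_finrank_scalarG_ne_zero hW0
    cases v
    case p => exact hv h.1
    case x' => exact hv (finrank_scalarG_eq_zero_iff.2 h.2)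
    case y' => exact hv (Nat.le_zero.1 (h.1 ▸ hy'p))
    all_goals exact hv (hbot (by simp))
  have hx := (finrank_scalarG_eq_zero_iff (hs := rfl)).1 (hbot (v := x) (.inr (.inl rfl)))
  rw [rank_eq, hbot (.inl rfl), hx]
  omega

end Stable

theorem level_mono {E : Type u} [AddCommGroup E] [Module G E] (D : Submodule G E) :
    Monotone (level D) := by
  intro i j hij
  fin_cases i <;> fin_cases j <;> simp_all [level]

variable (y z)

variable (G) in
/-- The inclusion of `pairP` into `pairQ`. -/
def pairInclusion : pairP (G := G) y z →ₗ[(tiling G L false).ring]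
    Restrict (incl G L) (pairQ (G := G) y z) where
  toFun m := .of _ _ ⟨m.1, fun v ↦ level_mono _ (by cases v <;> decide) (m.2 v)⟩
  map_add' _ _ := rfl
  map_smul' _ _ := rfl

variable (G) in
/-- The homomorphism from the object that represents `F` to `pairQ` given by the value `e` at
`q`. -/
noncomputable def toPairQ (e : L × L) :
    spanQ G L true →ₗ[(tiling G L true).ring] pairQ (G := G) y z :=
  (LinearMap.toSpanSingleton (tiling G L true).ring (pairQ (G := G) y z)
    ⟨Pi.single q e, single_mem_lattice_iff.2 trivial⟩).domRestrict _

variable {y z}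

theorem coe_toPairQ_toP (e : L × L) (l : L) :
    (toPairQ G y z e ⟨toP l, toP_mem_spanQ l⟩ : Obj → L × L) = Pi.single p (l • e) :=
  Tiling.single_smul_single (mem_hom l) e

theorem toPairQ_ne_zero {e : L × L} (he : e ≠ 0) : toPairQ G y z e ≠ 0 := fun h ↦ he <| by
  rw [← one_smul L e, ← Pi.single_eq_zero_iff (M := fun _ ↦ L × L) (i := p),
    ← coe_toPairQ_toP (G := G) (y := y) (z := z), h]
  rfl

/-- The element of `pairP` with value `e` at `p`. -/
def pairPElt {e : L × L} (he : e ∈ pairLattice G y z) :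
    corner (scalarG G L false p) (pairP (G := G) y z) :=
  ⟨⟨Pi.single p e, single_mem_lattice_iff.2 he⟩, Subtype.ext <|
    (Tiling.single_smul_single (smul_one_mem_homGroup 1 (by decide)) e).trans <|
      congrArg _ ((smul_one_smul L 1 e).trans (one_smul G e))⟩

variable {ι : Type} [Fintype ι]

theorem pairPElt_one_ne_zero : pairPElt (mem_pairLattice (G := G) (y := y) (z := z) 0) ≠ 0 :=
  fun h ↦ one_ne_zero (α := L) <| congrArg Prod.fst <|
    (Pi.single_eq_same (M := fun _ ↦ L × L) p (1, 0)).symm.trans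
      (congrFun (congrArg (fun m ↦ m.1.1) h) p)

theorem sum_scalarG_smul_basisElt (b : Basis ι G L) (w : ι → G) :
    ∑ j, scalarG G L true p (w j) • basisElt b j =
      ⟨toP (∑ j, w j • b j), toP_mem_spanQ (∑ j, w j • b j)⟩ := Subtype.ext <| by
  rw [AddSubmonoidClass.coe_finsetSum]
  refine Eq.trans ?_ (sum_toP _)
  exact Finset.sum_congr rfl fun j _ ↦ scalarG_mul_toP (w j) (b j)

theorem pairInclusion_pairPElt {e : L × L} (he : e ∈ pairLattice G y z) {m : pairQ (G := G) y z}
    (hm : m.1 = Pi.single p e) : pairInclusion G y z (pairPElt he) = .of _ _ m :=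
  congrArg (Restrict.of _ _) (Subtype.ext hm.symm)

theorem coe_toPairQ_sub (b : Basis ι G L) (w : ι → G) (i : ι) :
    (toPairQ G y z (1, 0) (∑ j, scalarG G L true p (w j) • basisElt b j) -
      toPairQ G y z (0, 1) (basisElt b i)).1 = Pi.single p (∑ j, w j • b j, -b i) := by
  rw [sum_scalarG_smul_basisElt]
  refine (congrArg₂ (· - ·) (coe_toPairQ_toP _ _) (coe_toPairQ_toP _ _)).trans ?_
  simp [← Pi.single_sub]

variable [DecidableEq ι] {φ : L →+* Matrix ι ι G}

theorem exists_extension_φ'_pair_eq {b : Basis ι G L} {i₀ i₁ : ι} (h₀ : b i₀ = 1)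
    (hb : ∀ j l, b j * l = ∑ k, φ l j k • b k) (hι : 2 ≤ Fintype.card ι) {w : ι → G}
    (hy : ∀ g : G, b i₁ ≠ g • 1) (hz : ∀ c d : G, ∑ j, w j • b j ≠ b i₁ * (c • 1) + d • 1) :
    ∃ E : Extension φ, ∃ x, (∀ j ≠ i₀, E.φ' x i₀ j = 0) ∧ ∀ j ≠ i₀, E.φ' x i₁ j = E.ιG (w j) := by
  have := Module.Finite.of_basis b
  obtain ⟨V, _, _, i, hi⟩ := (rank G L).exists_isEnvelope isStable_spanP
  obtain ⟨W, _, _, i', hi'⟩ := (rank' G L).exists_isEnvelope isStable_spanQ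
  let P := presentation hb hι
  refine ⟨P.extension hi hi', P.exists_extension_φ'_pair_eq hi hi' (isStable_pairQ hy hz)
    (isStable_pairP hy hz) (pairInclusion G _ _) (u := toPairQ G _ _ (1, 0))
    (v := toPairQ G _ _ (0, 1)) (toPairQ_ne_zero (by simp)) (m₀ := pairPElt (mem_pairLattice 0))
    (m₁ := pairPElt (mem_pairLattice 1)) (m₂ := pairPElt (mem_pairLattice 2))
    pairPElt_one_ne_zero ?_ ?_ ?_⟩
  · refine pairInclusion_pairPElt _ ((coe_toPairQ_toP (1, 0) (b i₀)).trans ?_)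
    rw [h₀, one_smul]
    rfl
  · refine pairInclusion_pairPElt _ ((coe_toPairQ_toP (0, 1) (b i₀)).trans ?_)
    rw [h₀, one_smul]
    rfl
  · exact pairInclusion_pairPElt _ (coe_toPairQ_sub b w i₁)

end Pair

section Rows

variable {ι : Type} [Fintype ι] [DecidableEq ι] {F G : Type u} [DivisionRing F] [DivisionRing G]
  {φ : F →+* Matrix ι ι G} {r s : ι}

theorem exists_basis_of_row_bijective (hφ : Function.Bijective fun x ↦ φ x r) :
    ∃ (_ : Module G F) (_ : IsScalarTower G F F) (b : Basis ι G F), b r = 1 ∧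
      (∀ x, b.equivFun x = φ x r) ∧ ∀ j x, b j * x = ∑ k, φ x j k • b k := by
  let row : F ≃+ (ι → G) :=
    .ofBijective (AddMonoidHom.mk' (fun x ↦ φ x r) fun x y ↦ congrFun (map_add φ x y) r) hφ
  have row_mul (x y : F) : row (x * y) = Matrix.vecMul (row x) (φ y) := congrFun (map_mul φ x y) r
  let := row.module G
  let b : Basis ι G F := .ofEquivFun (row.linearEquiv G)
  have row_b (j : ι) : row (b j) = Pi.single j 1 := by
    rw [Basis.coe_ofEquivFun]
    exact row.apply_symm_apply _
  have row_smul (g : G) (x : F) : row (g • x) = g • row x := row.apply_symm_apply _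
  refine ⟨_, ⟨fun g x y ↦ row.injective ?_⟩, b, row.injective ?_, fun _ ↦ rfl,
    fun j x ↦ row.injective ?_⟩
  · rw [smul_eq_mul, row_mul, row_smul, Matrix.smul_vecMul, ← row_mul, row_smul, smul_eq_mul]
  · refine (row_b r).trans (Eq.trans ?_ (congrFun (map_one φ) r).symm)
    exact funext fun j ↦ by
      simp only [Pi.single_apply, Matrix.one_apply, eq_comm]
  · rw [row_mul, row_b, Matrix.single_one_vecMul, map_sum]
    simp only [row_smul, row_b]
    exact pi_eq_sum_univ' _

theorem exists_extension_φ'_rows_eq (hrs : s ≠ r) (hφ : Function.Bijective fun x ↦ φ x r)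
    (v w : ι → G) : ∃ E : Extension φ, ∃ x, ∀ j ≠ r,
      E.φ' x r j = E.ιG (v j) ∧ E.φ' x s j = E.ιG (w j) := by
  obtain ⟨_, _, b, hbr, hrow, hb⟩ := exists_basis_of_row_bijective hφ
  let y := b.equivFun.symm v
  have hy : φ y r = v := by rw [← hrow, b.equivFun.apply_symm_apply]
  have hbs (g : G) : b s ≠ g • 1 := fun h ↦ by
    have := congrArg (b.repr · s) h
    simp [← hbr, hrs] at this
  by_cases! hz : ∀ c d : G, ∑ j, (w - φ y s) j • b j ≠ b s * (c • 1) + d • 1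
  · obtain ⟨E, x, hr, hs⟩ := exists_extension_φ'_pair_eq hbr hb
      (Fintype.one_lt_card_iff.2 ⟨s, r, hrs⟩) hbs hz
    refine ⟨E, E.ιF y + x, fun j hj ↦ ⟨?_, ?_⟩⟩
    · rw [map_add, Matrix.add_apply, hr j hj, add_zero, E.compat, Matrix.map_apply, hy]
    · rw [map_add, Matrix.add_apply, hs j hj, E.compat, Matrix.map_apply, ← map_add, Pi.sub_apply,
        add_sub_cancel]
  · obtain ⟨c, d, hcd⟩ := hz
    have hr (c : G) : φ (c • 1) r = Pi.single r c := by
      rw [← hrow, ← hbr, map_smul]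
      ext j
      simp [Finsupp.single_apply, Pi.single_apply, eq_comm]
    have hs : w - φ y s = φ (c • 1) s + Pi.single r d := b.equivFun.symm.injective <| by
      rw [b.equivFun_symm_apply, hcd, hb, ← b.equivFun_symm_apply, map_add, ← hr, ← hrow,
        LinearEquiv.symm_apply_apply]
    refine ⟨.refl φ, (y + c • 1 : F), fun j hj ↦ ⟨?_, ?_⟩⟩
    · change φ (y + c • 1) r j = v j
      rw [map_add, Matrix.add_apply, hr, hy, Pi.single_eq_of_ne hj, add_zero]
    · change φ (y + c • 1) s j = w j
      have hsj := congrFun hs j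
      rw [Pi.add_apply, Pi.single_eq_of_ne hj, add_zero, Pi.sub_apply] at hsj
      rw [map_add, Matrix.add_apply, ← hsj, add_sub_cancel]

end Rows

end PairTiling

section Duality

variable {n : ℕ} {F G : Type u} [DivisionRing F] [DivisionRing G]

/-- The embedding of the opposite ring given by reflecting matrices in the antidiagonal, which
exchanges upper right `a × b` blocks and upper right `b × a` blocks. -/
def antitranspose (φ : F →+* Matrix (Fin n) (Fin n) G) : Fᵐᵒᵖ →+* Matrix (Fin n) (Fin n) Gᵐᵒᵖ :=
  (Matrix.reindexRingEquiv _ Fin.revPerm).toRingHom.comp <|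
    RingEquiv.mopMatrix.symm.toRingHom.comp φ.op

theorem antitranspose_apply (φ : F →+* Matrix (Fin n) (Fin n) G) (x : Fᵐᵒᵖ) (i j : Fin n) :
    antitranspose φ x i j = .op (φ x.unop j.rev i.rev) := rfl

variable {φ : F →+* Matrix (Fin n) (Fin n) G}

/-- The extension of `φ` obtained from an extension of the antitranspose of `φ` by passing to
opposite rings. -/
def Extension.dual (E : Extension (antitranspose φ)) : Extension φ where
  F' := E.F'ᵐᵒᵖ
  G' := E.G'ᵐᵒᵖ
  ιF := E.ιF.op.comp (RingEquiv.opOp F).toRingHom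
  ιG := E.ιG.op.comp (RingEquiv.opOp G).toRingHom
  φ' := antitranspose E.φ'
  compat a := Matrix.ext fun i j ↦ by
    change MulOpposite.op (E.φ' (E.ιF (.op a)) j.rev i.rev) = .op (E.ιG (.op (φ a i j)))
    rw [E.compat, Matrix.map_apply, antitranspose_apply, Fin.rev_rev, Fin.rev_rev]
    rfl

end Duality

section BlockExtension

variable {n : ℕ} {F G : Type u} [DivisionRing F] [DivisionRing G]

/-- Conjecture A for `φ` and the number `a` of rows: every upper right `a × (n + 1 - a)` block
occurs in an element of some extension of `φ`. Rows and columns are numbered from `0`, and the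
entries of `A` outside the block are irrelevant. -/
def HasBlockExtensions (φ : F →+* Matrix (Fin n) (Fin n) G) (a : ℕ) : Prop :=
  ∀ A : Matrix (Fin n) (Fin n) G, ∃ E : Extension φ, ∃ x, ∀ i j : Fin n,
    (i : ℕ) < a → a ≤ (j : ℕ) + 1 → E.φ' x i j = E.ιG (A i j)

variable {φ : F →+* Matrix (Fin n) (Fin n) G}

theorem HasBlockExtensions.of_antitranspose {a b : ℕ} (hab : a + b = n + 1)
    (h : HasBlockExtensions (antitranspose φ) b) : HasBlockExtensions φ a := by
  intro A
  obtain ⟨E, x, hx⟩ := h (.of fun i j ↦ .op (A j.rev i.rev))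
  refine ⟨E.dual, .op x, fun i j hi hj ↦ ?_⟩
  change MulOpposite.op (E.φ' x j.rev i.rev) = .op (E.ιG (.op (A i j)))
  rw [hx _ _ (by rw [Fin.val_rev]; lia) (by rw [Fin.val_rev]; lia), Matrix.of_apply, Fin.rev_rev,
    Fin.rev_rev]

variable (φ)

theorem hasBlockExtensions_one (hn : 0 < n) : HasBlockExtensions φ 1 := by
  intro A
  obtain ⟨E, hE⟩ := RowTiling.exists_extension_φ'_row_eq φ ⟨0, hn⟩
  obtain ⟨x, hx⟩ := hE (A ⟨0, hn⟩)
  refine ⟨E, x, fun i j hi _ ↦ ?_⟩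
  obtain rfl : i = ⟨0, hn⟩ := Fin.ext (Nat.lt_one_iff.1 hi)
  exact hx j

theorem hasBlockExtensions_two (hn : 1 < n) : HasBlockExtensions φ 2 := by
  intro A
  let r : Fin n := ⟨0, by lia⟩
  let s : Fin n := ⟨1, hn⟩
  let E := RowTiling.limitExtension φ r
  obtain ⟨E', x, hx⟩ := PairTiling.exists_extension_φ'_rows_eq (s := s) (by simp [r, s])
    (RowTiling.φ'_limitExtension_row_bijective φ r) (fun j ↦ E.ιG (A r j)) fun j ↦ E.ιG (A s j)
  refine ⟨E.trans E', x, fun i j hi hj ↦ ?_⟩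
  have hjr : j ≠ r := Fin.ne_of_val_ne (by lia)
  obtain rfl | rfl : i = r ∨ i = s := by simp only [Fin.ext_iff, r, s]; lia
  exacts [(hx j hjr).1, (hx j hjr).2]

end BlockExtension

/-- Conjecture A holds for `a ∈ {1, 2, n-1, n}`. -/
theorem stmt5 (n : ℕ) (hn : 1 < n) (F G : Type) [DivisionRing F] [DivisionRing G]
    (φ : F →+* Matrix (Fin n) (Fin n) G) (hφ : Function.Injective φ)
    (a b : ℕ) (ha : 1 ≤ a) (hb : 1 ≤ b) (hab : a + b = n + 1)
    (hcase : a = 1 ∨ a = 2 ∨ a = n - 1 ∨ a = n)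
    (A : Matrix (Fin n) (Fin n) G) :
    Nonempty (ConjAWitness n F G φ a A) := by
  have hblock : HasBlockExtensions φ a := by
    obtain rfl | rfl | rfl | rfl := hcase
    · exact hasBlockExtensions_one φ (by lia)
    · exact hasBlockExtensions_two φ hn
    · exact .of_antitranspose (b := 2) (by lia) (hasBlockExtensions_two _ hn)
    · exact .of_antitranspose (b := 1) rfl (hasBlockExtensions_one _ (by lia))
  obtain ⟨E, hE⟩ := hblock A
  have : Nonempty (Fin n) := ⟨⟨0, by lia⟩⟩
  exact ⟨{
    F' := E.F'
    G' := E.G'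
    ιF := E.ιF
    ιG := E.ιG
    injF := E.ιF.injective
    injG := E.ιG.injective
    φ' := E.φ'
    injφ' := E.φ'.injective
    compat := E.compat
    exists_block := hE }⟩
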